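/- arXiv:2203.14648 — 2 statements merged into one kernel-verified Lean document; each statement's English description precedes it below -/
import Mathlib

section
/- Let d ≥ 2 be an integer, γ > 1 a real number, and c = γ − d − 1. Suppose the reals p, r, ν, κ satisfy: p > 1, r > 1, 1/r = 2/p + (2ν+κ)/d − 1, κ < d/r, ((d−1)/2)(1 − 2/p) < ν < d(p−1)/p, 2r ≥ p, max{ν,κ} > 0, ν + κ ≥ (d−1)(1/r − 1/p), and max{0, d + p(c+ν)} < d(r−p)/r + p(ν+κ+1) < γ p (r−1)/r. Then for every β ∈ (0,1) the class RL^p_{u_ν} is invariant under R_β: if ϑ ∈ RL^p_{u_ν}, then the integrals defining R_β[ϑ](η) converge absolutely for a.e. η and R_β[ϑ] ∈ RL^p_{u_ν}. -/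
open MeasureTheory Set RealInnerProductSpace
open scoped ENNReal NNReal

noncomputable section

/-- `ℝ^d` with the Euclidean norm. -/
abbrev Ed (d : ℕ) := EuclideanSpace ℝ (Fin d)

/-- `ℂ^d` with the Euclidean norm. -/
abbrev EdC (d : ℕ) := EuclideanSpace ℂ (Fin d)

/-- A function on `ℝ^d` is radial if its value depends only on the norm of the argument. -/
def IsRadial {d : ℕ} {α : Type*} (f : Ed d → α) : Prop :=
  ∀ x y : Ed d, ‖x‖ = ‖y‖ → f x = f y

/-- The pairing `⟨η, v⟩` of a real vector with a complex vector, extended ℂ-bilinearly. -/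
def pairC {d : ℕ} (η : Ed d) (v : EdC d) : ℂ := ∑ i, (η i : ℂ) * v i

/-- The Leray projection `P_η v = v − (⟨v,η⟩/|η|²) η`, extended ℂ-bilinearly. -/
def lerayC {d : ℕ} (η : Ed d) (v : EdC d) : EdC d :=
  (WithLp.equiv 2 (Fin d → ℂ)).symm
    (fun i => v i - (pairC η v / ((‖η‖ ^ 2 : ℝ) : ℂ)) * (η i : ℂ))

/-- The integrand of the nonlinear part of the renormalization operator (complex fields). -/
def renormKernelC (d : ℕ) (γ : ℝ) (ϑ : Ed d → EdC d) (η : Ed d) (t : ℝ) (x : Ed d) : EdC d :=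
  (t ^ (-(γ - d - 1)) * Real.exp (‖η‖ ^ γ * (1 - t ^ γ))) •
    (pairC η (ϑ (t • η - x)) • lerayC η (ϑ x))

/-- Absolute convergence of the integrals defining `R_β[ϑ](η)` (complex fields). -/
def RenormDefinedC (d : ℕ) (γ β : ℝ) (ϑ : Ed d → EdC d) (η : Ed d) : Prop :=
  IntegrableOn (fun q : ℝ × Ed d => renormKernelC d γ ϑ η q.1 q.2)
    (Set.Ioc (1 : ℝ) β⁻¹ ×ˢ Set.univ)

/-- The renormalization operator `R_β` on complex vector fields. -/
def renormC (d : ℕ) (γ β : ℝ) (ϑ : Ed d → EdC d) (η : Ed d) : EdC d :=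
  (β ^ (γ - d - 1) * Real.exp (‖η‖ ^ γ * (1 - β ^ (-γ)))) • ϑ (β⁻¹ • η)
    + (Complex.I * (γ : ℂ)) •
        ∫ t in Set.Ioc (1 : ℝ) β⁻¹, ∫ x : Ed d, renormKernelC d γ ϑ η t x

/-- The Leray projection `P_η v = v − (⟨v,η⟩/|η|²) η` for real vector fields. -/
def lerayR {d : ℕ} (η v : Ed d) : Ed d := v - (⟪v, η⟫ / ‖η‖ ^ 2) • η

/-- The integrand of the nonlinear part of the renormalization operator (real fields). -/
def renormKernelR (d : ℕ) (γ : ℝ) (ψ : Ed d → Ed d) (η : Ed d) (t : ℝ) (x : Ed d) : Ed d :=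
  (t ^ (-(γ - d - 1)) * Real.exp (‖η‖ ^ γ * (1 - t ^ γ))) •
    (⟪η, ψ (t • η - x)⟫ • lerayR η (ψ x))

/-- Absolute convergence of the integrals defining `R_β[ψ](η)` (real fields). -/
def RenormDefinedR (d : ℕ) (γ β : ℝ) (ψ : Ed d → Ed d) (η : Ed d) : Prop :=
  IntegrableOn (fun q : ℝ × Ed d => renormKernelR d γ ψ η q.1 q.2)
    (Set.Ioc (1 : ℝ) β⁻¹ ×ˢ Set.univ)

/-- The renormalization operator `R_β` on real vector fields. -/
def renormR (d : ℕ) (γ β : ℝ) (ψ : Ed d → Ed d) (η : Ed d) : Ed d :=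
  (β ^ (γ - d - 1) * Real.exp (‖η‖ ^ γ * (1 - β ^ (-γ)))) • ψ (β⁻¹ • η)
    - γ • ∫ t in Set.Ioc (1 : ℝ) β⁻¹, ∫ x : Ed d, renormKernelR d γ ψ η t x

/-- First coordinate (`x_{d-1}`) of the projection onto the azimuthal plane. -/
def azim1 {d : ℕ} (x : Ed d) : ℝ := if h : d - 2 < d then x ⟨d - 2, h⟩ else 0

/-- Second coordinate (`x_d`) of the projection onto the azimuthal plane. -/
def azim2 {d : ℕ} (x : Ed d) : ℝ := if h : d - 1 < d then x ⟨d - 1, h⟩ else 0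

/-- The norm `|x_a|` of the azimuthal projection. -/
def normA {d : ℕ} (x : Ed d) : ℝ := Real.sqrt (azim1 x ^ 2 + azim2 x ^ 2)

/-- `cos∠_η(x) = ⟨x_a, η_a⟩ / (|x_a| |η_a|)`. -/
def cosAng {d : ℕ} (η x : Ed d) : ℝ :=
  (azim1 x * azim1 η + azim2 x * azim2 η) / (normA x * normA η)

/-- `sin∠_η(x) = (η_{d−1} x_d − η_d x_{d−1}) / (|x_a| |η_a|)`. -/
def sinAng {d : ℕ} (η x : Ed d) : ℝ :=
  (azim1 η * azim2 x - azim2 η * azim1 x) / (normA x * normA η)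

/-- The integrand of the nonlinear part of the azimuthal renormalization operator. -/
def aKernel (d : ℕ) (γ : ℝ) (ψ : Ed d → ℝ) (η : Ed d) (t : ℝ) (x : Ed d) : ℝ :=
  t ^ (-(γ - d - 1)) * Real.exp (‖η‖ ^ γ * (1 - t ^ γ)) *
    (ψ x * ψ (t • η - x) * cosAng η x * sinAng η (t • η - x))

/-- Absolute convergence of the integrals defining the azimuthal `R_β[ψ](η)`. -/
def ARenormDefined (d : ℕ) (γ β : ℝ) (ψ : Ed d → ℝ) (η : Ed d) : Prop :=
  IntegrableOn (fun q : ℝ × Ed d => aKernel d γ ψ η q.1 q.2)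
    (Set.Ioc (1 : ℝ) β⁻¹ ×ˢ Set.univ)

/-- The azimuthal renormalization operator `R_β` on scalar functions. -/
def arenorm (d : ℕ) (γ β : ℝ) (ψ : Ed d → ℝ) (η : Ed d) : ℝ :=
  β ^ (γ - d - 1) * Real.exp (‖η‖ ^ γ * (1 - β ^ (-γ))) * ψ (β⁻¹ • η)
    + γ * normA η * ∫ t in Set.Ioc (1 : ℝ) β⁻¹, ∫ x : Ed d, aKernel d γ ψ η t x

/-- Weighted `L^p` norm `(∫ |f|^p w^p)^{1/p}` of a scalar function, valued in `ℝ≥0∞`. -/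
def wLpNorm {d : ℕ} (w : Ed d → ℝ) (p : ℝ) (f : Ed d → ℝ) : ℝ≥0∞ :=
  (∫⁻ x : Ed d, ENNReal.ofReal (|f x| ^ p * w x ^ p)) ^ (1 / p)

/-- Weighted `L^p` norm of a `ℂ^d`-valued function, valued in `ℝ≥0∞`. -/
def wLpNormC {d : ℕ} (w : Ed d → ℝ) (p : ℝ) (f : Ed d → EdC d) : ℝ≥0∞ :=
  (∫⁻ x : Ed d, ENNReal.ofReal (‖f x‖ ^ p * w x ^ p)) ^ (1 / p)

/-- The weight `u_ν(x) = e^{|x|} |x|^ν`. -/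
def uWeight (ν : ℝ) {d : ℕ} (x : Ed d) : ℝ := Real.exp ‖x‖ * ‖x‖ ^ ν

/-- The weight `v_ν(x) = e^{(b/2)|x|} |x|^ν`. -/
def vWeight (b ν : ℝ) {d : ℕ} (x : Ed d) : ℝ := Real.exp (b / 2 * ‖x‖) * ‖x‖ ^ ν

/-- Membership in `RL^p_{u_ν}`: fields dominated a.e. by a radial function in `L^p_{u_ν}`. -/
def MemRL (d : ℕ) (p ν : ℝ) (ϑ : Ed d → EdC d) : Prop :=
  AEStronglyMeasurable ϑ volume ∧ ∃ g : Ed d → ℝ, Measurable g ∧ IsRadial g ∧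
    wLpNorm (uWeight ν) p g < ⊤ ∧ ∀ᵐ x : Ed d, ‖ϑ x‖ ≤ g x

/-- Membership in `RL^p_{u_ν}` with a radial bound of norm at most `A`. -/
def MemRLBall (d : ℕ) (p ν A : ℝ) (ϑ : Ed d → EdC d) : Prop :=
  AEStronglyMeasurable ϑ volume ∧ ∃ g : Ed d → ℝ, Measurable g ∧ IsRadial g ∧
    wLpNorm (uWeight ν) p g ≤ ENNReal.ofReal A ∧ ∀ᵐ x : Ed d, ‖ϑ x‖ ≤ g x

/-- Membership in the set `M` of functions bounded by `k |η|^σ e^{−b|η|}`. -/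
def memM {d : ℕ} (k b σ : ℝ) (ψ : Ed d → ℝ) : Prop :=
  Measurable ψ ∧
    ∀ᵐ η : Ed d, η ≠ 0 → |ψ η| < k * ‖η‖ ^ σ * Real.exp (-b * ‖η‖)

/-- Inclusion of a real vector into `ℂ^d`. -/
def toC {d : ℕ} (v : Ed d) : EdC d :=
  (WithLp.equiv 2 (Fin d → ℂ)).symm (fun i => (v i : ℂ))

/-- The azimuthal unit vector field `e_{d−1}(y) = (0,…,0,−y_d,y_{d−1})/|y_a|`. -/
def azVec (d : ℕ) (y : Ed d) : Ed d :=
  (WithLp.equiv 2 (Fin d → ℝ)).symm (fun i =>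
    if (i : ℕ) = d - 2 then -azim2 y / normA y
    else if (i : ℕ) = d - 1 then azim1 y / normA y
    else 0)

/-- The Leray self-similar ansatz
`v_*(y,t) = i (T−t)^{(d+1−γ)/γ} ψ(y (T−t)^{1/γ}) e_{d−1}(y)`. -/
def vfun (d : ℕ) (γ : ℝ) (ψ : Ed d → ℝ) (T : ℝ) (y : Ed d) (t : ℝ) : EdC d :=
  (Complex.I *
      ((((T - t) ^ (((d : ℝ) + 1 - γ) / γ) * ψ (((T - t) ^ (1 / γ)) • y)) : ℝ) : ℂ)) •
    toC (azVec d y)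

end

/-!
Let `|ϑ(x)| ≤ f(|x|)` in dimension `n + 1`. The self-convolution of a radial function is, up to a
constant, an integral over the triangles with side lengths `τ, σ` over the side `s`, whose density
is a power of the height given by Heron's formula. The pairing and the projection cost at most the
factor `2 |η|`, so after the substitution `s = t |η|` the quadratic part of the renormalization
operator at `|η| = ρ` is at most a constant times the average of `e^{ρ^γ - s^γ}` times the radial
self-convolution of `f`, taken over `s ∈ (ρ, ρ / β]`. The weight `e^ρ ρ^a`, `a = ν + n / p`, is
increasing, hence passes inside the average.

In the weighted variable `F(τ) = e^τ τ^a f(τ)` let `σ ≤ τ` be the two sides. For `σ ≤ 1` the kernel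
is dominated by a convolution with an integrable function, and Young's inequality applies. For
`1 < σ` the weight damps the kernel exponentially in the excess `τ + σ - s`. Then the Schur test
(`p ≥ 2`) shows that the convolution has at most power growth in `s`, and Hölder's inequality with
four factors (`p < 2`) that it is at most `Q(s)^λ` times a power, with `Q` integrable. The average
against `e^{ρ^γ - s^γ}`, whose mass is of order `ρ^{1 - γ}`, gains the decay
`(1 + ρ)^{(1 - γ)(1 - λ)}`, and the lower bound on `γ` says that this restores membership in `L^p`.
-/


/-! ### Radial convolutions -/

theorem lintegral_fun_norm_addHaar {E : Type*} [NormedAddCommGroup E] [NormedSpace ℝ E]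
    [FiniteDimensional ℝ E] [Nontrivial E] [MeasurableSpace E] [BorelSpace E] (μ : Measure E)
    [μ.IsAddHaarMeasure] {f : ℝ → ℝ≥0∞} (hf : Measurable f) :
    ∫⁻ x, f ‖x‖ ∂μ = μ.toSphere univ *
      ∫⁻ r in Ioi (0 : ℝ), ENNReal.ofReal (r ^ (Module.finrank ℝ E - 1)) * f r := by
  calc ∫⁻ x, f ‖x‖ ∂μ
      = ∫⁻ x : ({0}ᶜ : Set E), f ‖(x : E)‖ ∂(μ.comap (↑)) := by
        rw [lintegral_subtype_comap (measurableSet_singleton _).compl (fun x : E => f ‖x‖),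
          restrict_compl_singleton]
    _ = ∫⁻ q : Metric.sphere (0 : E) 1 × Ioi (0 : ℝ), f q.2
          ∂(μ.toSphere.prod (.volumeIoiPow (Module.finrank ℝ E - 1))) := by
        rw [← μ.measurePreserving_homeomorphUnitSphereProd.lintegral_comp_emb
          (Homeomorph.measurableEmbedding _)]
        simp
    _ = μ.toSphere univ * ∫⁻ r : Ioi (0 : ℝ), f r ∂(.volumeIoiPow (Module.finrank ℝ E - 1)) := by
        rw [lintegral_prod _ (by fun_prop)]
        simp only [lintegral_const, mul_comm]
    _ = μ.toSphere univ *
          ∫⁻ r in Ioi (0 : ℝ), ENNReal.ofReal (r ^ (Module.finrank ℝ E - 1)) * f r := by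
        rw [Measure.volumeIoiPow,
          lintegral_withDensity_eq_lintegral_mul _ (by fun_prop) (by fun_prop),
          ← lintegral_subtype_comap measurableSet_Ioi]
        rfl

theorem exists_linearIsometryEquiv_apply_eq {E : Type*} [NormedAddCommGroup E]
    [InnerProductSpace ℝ E] {v w : E} (h : ‖v‖ = ‖w‖) :
    ∃ R : E ≃ₗᵢ[ℝ] E, R v = w :=
  ⟨Submodule.reflection (Submodule.span ℝ {v - w})ᗮ, Submodule.reflection_sub h⟩

theorem measurePreserving_euclideanSpace_head_tail (n : ℕ) :
    MeasurePreserving (fun x : Ed (n + 1) =>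
      ((x 0, WithLp.toLp 2 (fun i : Fin n => x i.succ)) : ℝ × Ed n)) :=
  ((MeasurePreserving.id volume).prod (PiLp.volume_preserving_toLp (Fin n))).comp
    ((volume_preserving_piFinSuccAbove (fun _ : Fin (n + 1) => ℝ) 0).comp
      (PiLp.volume_preserving_ofLp (Fin (n + 1))))

theorem lintegral_fun_norm_mul_fun_norm_sub {n : ℕ} {f g : ℝ → ℝ≥0∞} (hf : Measurable f)
    (hg : Measurable g) (y : Ed (n + 1)) :
    ∫⁻ x : Ed (n + 1), f ‖x‖ * g ‖y - x‖ =
      ∫⁻ a : ℝ, ∫⁻ z : Ed n, f √(a ^ 2 + ‖z‖ ^ 2) * g √((‖y‖ - a) ^ 2 + ‖z‖ ^ 2) := by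
  generalize hs : ‖y‖ = s
  have hs0 : 0 ≤ s := hs ▸ norm_nonneg y
  obtain ⟨R, hR⟩ : ∃ R : Ed (n + 1) ≃ₗᵢ[ℝ] Ed (n + 1), R y = EuclideanSpace.single 0 s :=
    exists_linearIsometryEquiv_apply_eq (by simp [hs, abs_of_nonneg hs0])
  calc ∫⁻ x : Ed (n + 1), f ‖x‖ * g ‖y - x‖
      = ∫⁻ x : Ed (n + 1), f ‖x‖ * g ‖EuclideanSpace.single 0 s - x‖ := by
        conv_rhs =>
          rw [← R.measurePreserving.lintegral_comp_emb R.toHomeomorph.measurableEmbedding]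
        simp_rw [← hR, ← map_sub, R.norm_map]
    _ = ∫⁻ q : ℝ × Ed n, f √(q.1 ^ 2 + ‖q.2‖ ^ 2) * g √((s - q.1) ^ 2 + ‖q.2‖ ^ 2) := by
        rw [← (measurePreserving_euclideanSpace_head_tail n).lintegral_comp (by fun_prop)]
        simp only [EuclideanSpace.norm_eq, Fin.sum_univ_succ]
        simp_rw [Real.sq_sqrt (Finset.sum_nonneg fun _ _ => sq_nonneg _)]
        simp
    _ = _ := by rw [Measure.volume_eq_prod, lintegral_prod _ (by fun_prop)]

theorem lintegral_comp_sqrt_sq_add_sq_le (a : ℝ) (h : ℝ → ℝ≥0∞) (m : ℕ) :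
    ∫⁻ b in Ioi (0 : ℝ), ENNReal.ofReal (b ^ m) * h √(a ^ 2 + b ^ 2) ≤
      ∫⁻ τ in Ioi |a|, ENNReal.ofReal (τ * (τ ^ 2 - a ^ 2) ^ (((m : ℝ) - 1) / 2)) * h τ := by
  have hpos : ∀ τ ∈ Ioi |a|, 0 < τ ^ 2 - a ^ 2 ∧ 0 < τ := fun τ (hτ : |a| < τ) =>
    ⟨sub_pos.2 (sq_lt_sq' (abs_lt.1 hτ).1 (abs_lt.1 hτ).2), (abs_nonneg a).trans_lt hτ⟩
  have hsurj : Ioi (0 : ℝ) ⊆ (fun τ : ℝ => √(τ ^ 2 - a ^ 2)) '' Ioi |a| := by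
    intro b (hb : 0 < b)
    refine ⟨√(a ^ 2 + b ^ 2), ?_, ?_⟩
    · rw [mem_Ioi, ← Real.sqrt_sq_eq_abs]
      exact Real.sqrt_lt_sqrt (sq_nonneg _) (by nlinarith)
    · simp [Real.sq_sqrt (show 0 ≤ a ^ 2 + b ^ 2 by positivity), hb.le]
  have hderiv : ∀ τ ∈ Ioi |a|, HasDerivWithinAt (fun τ : ℝ => √(τ ^ 2 - a ^ 2))
      (τ / √(τ ^ 2 - a ^ 2)) (Ioi |a|) τ := by
    intro τ hτ
    have := (((hasDerivAt_id τ).pow 2).sub_const (a ^ 2)).sqrt (hpos τ hτ).1.ne'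
    refine (this.congr_deriv ?_).hasDerivWithinAt
    simp only [id, Pi.pow_apply]
    field_simp
    simp
  have hinj : InjOn (fun τ : ℝ => √(τ ^ 2 - a ^ 2)) (Ioi |a|) := by
    intro τ hτ τ' hτ' heq
    have := (Real.sqrt_inj (hpos τ hτ).1.le (hpos τ' hτ').1.le).1 heq
    exact (sq_eq_sq₀ (hpos τ hτ).2.le (hpos τ' hτ').2.le).1 (by linarith)
  refine (lintegral_mono_set hsurj).trans ?_
  rw [lintegral_image_eq_lintegral_abs_deriv_mul measurableSet_Ioi hderiv hinj]
  refine setLIntegral_mono' measurableSet_Ioi fun τ hτ => le_of_eq ?_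
  obtain ⟨hsub, hτ₀⟩ := hpos τ hτ
  rw [Real.sq_sqrt hsub.le, add_sub_cancel, Real.sqrt_sq hτ₀.le, ← mul_assoc,
    ← ENNReal.ofReal_mul (abs_nonneg _), abs_of_nonneg (by positivity), Real.sqrt_eq_rpow,
    ← Real.rpow_mul_natCast hsub.le, div_mul_eq_mul_div, mul_div_assoc, ← Real.rpow_sub hsub]
  congr 4
  ring

theorem lintegral_comp_sqrt_sq_add_norm_sq_le {n : ℕ} (hn : 1 ≤ n) (a : ℝ) {h : ℝ → ℝ≥0∞}
    (hh : Measurable h) :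
    ∫⁻ z : Ed n, h √(a ^ 2 + ‖z‖ ^ 2) ≤ (volume : Measure (Ed n)).toSphere univ *
      ∫⁻ τ in Ioi |a|, ENNReal.ofReal (τ * (τ ^ 2 - a ^ 2) ^ (((n : ℝ) - 2) / 2)) * h τ := by
  have : Nonempty (Fin n) := ⟨⟨0, hn⟩⟩
  rw [lintegral_fun_norm_addHaar (f := fun r => h √(a ^ 2 + r ^ 2)) volume (by fun_prop),
    finrank_euclideanSpace_fin]
  have hexp : ((n : ℝ) - 2) / 2 = (((n - 1 : ℕ) : ℝ) - 1) / 2 := by push_cast [hn]; ring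
  rw [hexp]
  exact mul_le_mul_right (lintegral_comp_sqrt_sq_add_sq_le a h (n - 1)) _

/-- The squared height over the side `s` of the triangle with side lengths `s, τ, σ`
(Heron's formula). -/
noncomputable def heightSq (s τ σ : ℝ) : ℝ :=
  (s + τ + σ) * (τ + σ - s) * (s + σ - τ) * (s + τ - σ) / (4 * s ^ 2)

theorem heightSq_comm (s τ σ : ℝ) : heightSq s τ σ = heightSq s σ τ := by
  unfold heightSq; ring

@[fun_prop]
theorem measurable_heightSq {α : Type*} [MeasurableSpace α] {s τ σ : α → ℝ} (hs : Measurable s)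
    (hτ : Measurable τ) (hσ : Measurable σ) :
    Measurable fun x => heightSq (s x) (τ x) (σ x) := by
  unfold heightSq; fun_prop

/-- The radial convolution kernel: writing `x, y - x` for two sides of lengths `τ, σ` of a triangle
over the side `y` of length `s`, it is the Jacobian of `x ↦ (τ, σ)` up to a constant. In dimension
`d` the exponent is `q = (d - 3) / 2`. -/
noncomputable def triangleKernel (q s τ σ : ℝ) : ℝ≥0∞ :=
  if |τ - σ| < s ∧ s < τ + σ then ENNReal.ofReal (heightSq s τ σ ^ q * τ * σ / s) else 0

theorem triangleKernel_comm (q s τ σ : ℝ) : triangleKernel q s τ σ = triangleKernel q s σ τ := by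
  simp only [triangleKernel, abs_sub_comm τ, add_comm τ, heightSq_comm s τ, mul_right_comm _ τ]

@[fun_prop]
theorem measurable_triangleKernel {α : Type*} [MeasurableSpace α] (q : ℝ) {s τ σ : α → ℝ}
    (hs : Measurable s) (hτ : Measurable τ) (hσ : Measurable σ) :
    Measurable fun x => triangleKernel q (s x) (τ x) (σ x) :=
  Measurable.ite ((measurableSet_lt (by fun_prop) hs).inter (measurableSet_lt hs (by fun_prop)))
    (by fun_prop) measurable_const

theorem Ioo_neg_subset_image_Ioo_abs_sub_add {s : ℝ} (hs : 0 < s) (τ : ℝ) :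
    Ioo (-τ) τ ⊆
      (fun σ : ℝ => (τ ^ 2 + s ^ 2 - σ ^ 2) / (2 * s)) '' Ioo |τ - s| (τ + s) := by
  rintro a ⟨ha₀, ha₁⟩
  have hpos : 0 < τ ^ 2 + s ^ 2 - 2 * s * a := by nlinarith [sq_nonneg (τ - s)]
  refine ⟨√(τ ^ 2 + s ^ 2 - 2 * s * a), ⟨?_, ?_⟩, ?_⟩
  · rw [← Real.sqrt_sq_eq_abs]
    exact Real.sqrt_lt_sqrt (sq_nonneg _) (by nlinarith)
  · rw [Real.sqrt_lt' (by linarith)]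
    nlinarith
  · beta_reduce
    rw [Real.sq_sqrt hpos.le]
    field_simp
    ring

theorem lintegral_Ioo_comp_sqrt_le {s : ℝ} (hs : 0 < s) (τ q : ℝ) (h : ℝ → ℝ≥0∞) :
    ∫⁻ a in Ioo (-τ) τ, ENNReal.ofReal (τ * (τ ^ 2 - a ^ 2) ^ q) *
        h √((s - a) ^ 2 + (τ ^ 2 - a ^ 2)) ≤
      ∫⁻ σ, triangleKernel q s τ σ * h σ := by
  have hpos : ∀ σ ∈ Ioo |τ - s| (τ + s), 0 < σ := fun σ hσ => (abs_nonneg _).trans_lt hσ.1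
  have hderiv : ∀ σ ∈ Ioo |τ - s| (τ + s), HasDerivWithinAt
      (fun σ : ℝ => (τ ^ 2 + s ^ 2 - σ ^ 2) / (2 * s)) (-σ / s) (Ioo |τ - s| (τ + s)) σ := by
    intro σ _
    have := (((hasDerivAt_id σ).pow 2).const_sub (τ ^ 2 + s ^ 2)).div_const (2 * s)
    refine (this.congr_deriv ?_).hasDerivWithinAt
    simp only [id]
    field_simp
    simp
  have hinj : InjOn (fun σ : ℝ => (τ ^ 2 + s ^ 2 - σ ^ 2) / (2 * s)) (Ioo |τ - s| (τ + s)) := by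
    intro σ hσ σ' hσ' heq
    have := (div_left_inj' (by positivity)).1 heq
    exact (sq_eq_sq₀ (hpos σ hσ).le (hpos σ' hσ').le).1 (by linarith)
  refine (lintegral_mono_set (Ioo_neg_subset_image_Ioo_abs_sub_add hs τ)).trans ?_
  rw [lintegral_image_eq_lintegral_abs_deriv_mul measurableSet_Ioo hderiv hinj,
    ← lintegral_indicator measurableSet_Ioo]
  refine lintegral_mono fun σ => indicator_apply_le' (fun hσ => le_of_eq ?_) fun _ => zero_le
  have hσ0 := hpos σ hσ
  have hside : τ ^ 2 - ((τ ^ 2 + s ^ 2 - σ ^ 2) / (2 * s)) ^ 2 = heightSq s τ σ := by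
    unfold heightSq; field_simp; ring
  have hσsq : (s - (τ ^ 2 + s ^ 2 - σ ^ 2) / (2 * s)) ^ 2 + heightSq s τ σ = σ ^ 2 := by
    unfold heightSq; field_simp; ring
  have htri : |τ - σ| < s ∧ s < τ + σ := by
    have := abs_lt.1 hσ.1
    exact ⟨abs_lt.2 ⟨by linarith [hσ.2], by linarith⟩, by linarith⟩
  rw [hside, hσsq, Real.sqrt_sq hσ0.le, ← mul_assoc, ← ENNReal.ofReal_mul (abs_nonneg _),
    triangleKernel, if_pos htri, neg_div, abs_neg, abs_of_nonneg (by positivity)]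
  congr 2
  ring

theorem lintegral_lintegral_Ioi_abs_swap {G : ℝ → ℝ → ℝ≥0∞} (hG : Measurable (Function.uncurry G)) :
    ∫⁻ a, ∫⁻ τ in Ioi |a|, G a τ = ∫⁻ τ, ∫⁻ a in Ioo (-τ) τ, G a τ := by
  have hmem : ∀ a τ : ℝ, τ ∈ Ioi |a| ↔ a ∈ Ioo (-τ) τ := fun a τ => abs_lt (a := a) (b := τ)
  have hS : MeasurableSet {x : ℝ × ℝ | x.2 ∈ Ioi |x.1|} :=
    measurableSet_lt (by fun_prop) measurable_snd
  simp_rw [← lintegral_indicator measurableSet_Ioi, ← lintegral_indicator measurableSet_Ioo]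
  rw [lintegral_lintegral_swap (f := fun a τ => (Ioi |a|).indicator (G a) τ)
    (hG.indicator hS).aemeasurable]
  simp only [indicator_apply, hmem]

theorem exists_lintegral_fun_norm_mul_fun_norm_sub_le {n : ℕ} (hn : 1 ≤ n) :
    ∃ C : ℝ≥0∞, C ≠ ⊤ ∧ ∀ f g : ℝ → ℝ≥0∞, Measurable f → Measurable g →
      ∀ y : Ed (n + 1), y ≠ 0 → ∫⁻ x : Ed (n + 1), f ‖x‖ * g ‖y - x‖ ≤
        C * ∫⁻ τ, ∫⁻ σ, f τ * g σ * triangleKernel (((n : ℝ) - 2) / 2) ‖y‖ τ σ := by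
  have : Nonempty (Fin n) := ⟨⟨0, hn⟩⟩
  refine ⟨(volume : Measure (Ed n)).toSphere univ, measure_ne_top _ _, fun f g hf hg y hy => ?_⟩
  set C := (volume : Measure (Ed n)).toSphere univ
  set s := ‖y‖
  set q : ℝ := ((n : ℝ) - 2) / 2
  have hslice : ∀ a : ℝ, ∫⁻ z : Ed n, f √(a ^ 2 + ‖z‖ ^ 2) * g √((s - a) ^ 2 + ‖z‖ ^ 2) ≤
      C * ∫⁻ τ in Ioi |a|, ENNReal.ofReal (τ * (τ ^ 2 - a ^ 2) ^ q) *
        (f τ * g √((s - a) ^ 2 + (τ ^ 2 - a ^ 2))) := fun a => by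
    refine le_trans (le_of_eq ?_) (lintegral_comp_sqrt_sq_add_norm_sq_le hn a (h := fun τ =>
      f τ * g √((s - a) ^ 2 + (τ ^ 2 - a ^ 2))) (by fun_prop))
    refine lintegral_congr fun z => ?_
    rw [Real.sq_sqrt (by positivity), add_sub_cancel_left]
  calc ∫⁻ x : Ed (n + 1), f ‖x‖ * g ‖y - x‖
      = ∫⁻ a : ℝ, ∫⁻ z : Ed n, f √(a ^ 2 + ‖z‖ ^ 2) * g √((s - a) ^ 2 + ‖z‖ ^ 2) :=
        lintegral_fun_norm_mul_fun_norm_sub hf hg y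
    _ ≤ ∫⁻ a : ℝ, C * ∫⁻ τ in Ioi |a|, ENNReal.ofReal (τ * (τ ^ 2 - a ^ 2) ^ q) *
        (f τ * g √((s - a) ^ 2 + (τ ^ 2 - a ^ 2))) := lintegral_mono hslice
    _ = C * ∫⁻ τ, ∫⁻ a in Ioo (-τ) τ, ENNReal.ofReal (τ * (τ ^ 2 - a ^ 2) ^ q) *
        (f τ * g √((s - a) ^ 2 + (τ ^ 2 - a ^ 2))) := by
      rw [lintegral_const_mul' _ _ (measure_ne_top _ _),
        lintegral_lintegral_Ioi_abs_swap (by unfold Function.uncurry; fun_prop)]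
    _ ≤ C * ∫⁻ τ, ∫⁻ σ, triangleKernel q s τ σ * (f τ * g σ) := by
      refine mul_le_mul_right (lintegral_mono fun τ => ?_) C
      exact lintegral_Ioo_comp_sqrt_le (norm_pos_iff.2 hy) τ q fun σ => f τ * g σ
    _ = C * ∫⁻ τ, ∫⁻ σ, f τ * g σ * triangleKernel q s τ σ := by simp_rw [mul_comm]

theorem lintegral_lintegral_le_two_mul_of_symm {K : ℝ → ℝ → ℝ≥0∞}
    (hK : Measurable (Function.uncurry K)) (hsymm : ∀ τ σ, K τ σ = K σ τ) :
    ∫⁻ τ, ∫⁻ σ, K τ σ ≤ 2 * ∫⁻ τ, ∫⁻ σ in Iic τ, K τ σ := by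
  have hU : Measurable fun x : ℝ × ℝ => (Iic x.1).indicator (K x.1) x.2 :=
    hK.indicator (measurableSet_le measurable_snd measurable_fst)
  have hL : Measurable fun x : ℝ × ℝ => (Iic x.2).indicator (K x.2) x.1 := hU.comp measurable_swap
  simp_rw [← lintegral_indicator measurableSet_Iic]
  calc ∫⁻ τ, ∫⁻ σ, K τ σ
      ≤ ∫⁻ τ, ∫⁻ σ, ((Iic τ).indicator (K τ) σ + (Iic σ).indicator (K σ) τ) := by
        gcongr with τ σ
        rcases le_total σ τ with h | h
        · simp [h]
        · simp [h, hsymm τ σ]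
    _ = (∫⁻ τ, ∫⁻ σ, (Iic τ).indicator (K τ) σ) + ∫⁻ τ, ∫⁻ σ, (Iic σ).indicator (K σ) τ := by
        rw [← lintegral_add_left hU.lintegral_prod_right]
        exact lintegral_congr fun τ => lintegral_add_left (hU.comp measurable_prodMk_left) _
    _ = 2 * ∫⁻ τ, ∫⁻ σ, (Iic τ).indicator (K τ) σ := by
        rw [two_mul, lintegral_lintegral_swap (f := fun τ σ => (Iic σ).indicator (K σ) τ)
          hL.aemeasurable]

/-- The radial self-convolution: up to a constant, the convolution of `x ↦ f |x|` with itself on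
`ℝ^d`, `q = (d - 3) / 2`, as a function of the norm. By symmetry only `σ ≤ τ` is integrated over. -/
noncomputable def radialConv (q : ℝ) (f : ℝ → ℝ≥0∞) (s : ℝ) : ℝ≥0∞ :=
  ∫⁻ τ, ∫⁻ σ in Iic τ, f τ * f σ * triangleKernel q s τ σ

theorem measurable_radialConv (q : ℝ) {f : ℝ → ℝ≥0∞} (hf : Measurable f) :
    Measurable (radialConv q f) := by
  let G (s τ σ : ℝ) : ℝ≥0∞ := (Iic τ).indicator (fun σ => f τ * f σ * triangleKernel q s τ σ) σ
  have hG : Measurable fun x : (ℝ × ℝ) × ℝ => G x.1.1 x.1.2 x.2 :=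
    Measurable.indicator (f := fun x : (ℝ × ℝ) × ℝ => f x.1.2 * f x.2 *
      triangleKernel q x.1.1 x.1.2 x.2) (s := {x | x.2 ≤ x.1.2})
      (by fun_prop) (measurableSet_le (by fun_prop) (by fun_prop))
  have hrw : radialConv q f = fun s => ∫⁻ τ, ∫⁻ σ, G s τ σ := by
    funext s
    exact lintegral_congr fun τ => (lintegral_indicator measurableSet_Iic _).symm
  rw [hrw]
  exact hG.lintegral_prod_right'.lintegral_prod_right'

theorem exists_lintegral_fun_norm_mul_self_le_radialConv {n : ℕ} (hn : 1 ≤ n) :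
    ∃ C : ℝ≥0∞, C ≠ ⊤ ∧ ∀ f : ℝ → ℝ≥0∞, Measurable f → ∀ y : Ed (n + 1), y ≠ 0 →
      ∫⁻ x : Ed (n + 1), f ‖x‖ * f ‖y - x‖ ≤ C * radialConv (((n : ℝ) - 2) / 2) f ‖y‖ := by
  obtain ⟨C, hC, hconv⟩ := exists_lintegral_fun_norm_mul_fun_norm_sub_le hn
  refine ⟨C * 2, ENNReal.mul_ne_top hC (by simp), fun f hf y hy => ?_⟩
  rw [mul_assoc]
  refine (hconv f f hf hf y hy).trans (mul_le_mul_right ?_ C)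
  refine lintegral_lintegral_le_two_mul_of_symm (by unfold Function.uncurry; fun_prop)
    fun τ σ => ?_
  rw [mul_comm (f τ), triangleKernel_comm]

/-! ### Bounds for the triangle kernel -/

theorem rpow_le_rpow_abs_mul_rpow {A B K : ℝ} (q : ℝ) (hB : 0 < B) (hK : 0 < K) (h₁ : B / K ≤ A)
    (h₂ : A ≤ K * B) : A ^ q ≤ K ^ |q| * B ^ q := by
  have hA : 0 < A := (div_pos hB hK).trans_le h₁
  rcases le_total 0 q with hq | hq
  · rw [abs_of_nonneg hq, ← Real.mul_rpow hK.le hB.le]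
    exact Real.rpow_le_rpow hA.le h₂ hq
  · rw [abs_of_nonpos hq, Real.rpow_neg hK.le, ← Real.inv_rpow hK.le,
      ← Real.mul_rpow (by positivity) hB.le, ← div_eq_inv_mul]
    exact Real.rpow_le_rpow_of_nonpos (by positivity) h₁ hq

theorem mul_rpow_le_mul_min_rpow {u v σ : ℝ} (q : ℝ) (hu : 0 < u) (hv : 0 < v)
    (h : u + v = 2 * σ) : (u * v) ^ q ≤ 4 ^ |q| * σ ^ q * min u v ^ q := by
  rw [← min_mul_max, mul_comm, Real.mul_rpow (by positivity) (by positivity)]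
  refine mul_le_mul_of_nonneg_right (rpow_le_rpow_abs_mul_rpow q (by linarith) (by norm_num) ?_ ?_)
    (by positivity)
  · linarith [le_max_left u v, le_max_right u v]
  · exact max_le (by linarith) (by linarith)

theorem exists_one_add_rpow_mul_exp_neg_le (e : ℝ) {c : ℝ} (hc : 0 < c) :
    ∃ C : ℝ, 0 < C ∧ ∀ x : ℝ, 0 ≤ x → (1 + x) ^ e * Real.exp (-(c * x)) ≤ C := by
  set k := |e| + 1
  have hk : 0 < k := by positivity
  set m := c / k with hm
  have hm₀ : 0 < m := by positivity
  refine ⟨(1 + 1 / m) ^ k, by positivity, fun x hx => ?_⟩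
  have hexp : 1 + x ≤ (1 + 1 / m) * Real.exp (m * x) := calc
    1 + x ≤ 1 + x + (m * x + 1 / m) := le_add_of_nonneg_right (by positivity)
    _ = (1 + 1 / m) * (m * x + 1) := by field_simp; ring
    _ ≤ (1 + 1 / m) * Real.exp (m * x) := by gcongr; exact Real.add_one_le_exp _
  calc (1 + x) ^ e * Real.exp (-(c * x)) ≤ (1 + x) ^ k * Real.exp (-(c * x)) := by
        gcongr
        · linarith
        · linarith [le_abs_self e]
    _ ≤ ((1 + 1 / m) * Real.exp (m * x)) ^ k * Real.exp (-(c * x)) := by gcongr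
    _ = (1 + 1 / m) ^ k := by
        rw [Real.mul_rpow (by positivity) (by positivity), ← Real.exp_mul, mul_assoc,
          ← Real.exp_add, show m * x * k + -(c * x) = 0 by rw [hm]; field_simp; ring,
          Real.exp_zero, mul_one]

theorem heightSq_rpow_le {s τ σ : ℝ} (q : ℝ) (hσ : 0 < σ) (hστ : σ ≤ τ) (hu : 0 < τ + σ - s)
    (hv : 0 < s + σ - τ) :
    heightSq s τ σ ^ q ≤ 4 ^ |q| * (τ / s) ^ q * ((τ + σ - s) * (s + σ - τ)) ^ q := by
  have hs : 0 < s := by linarith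
  have hτ : 0 < τ := by linarith
  have hsplit : heightSq s τ σ = (s + τ + σ) * (s + τ - σ) / (4 * s ^ 2) *
      ((τ + σ - s) * (s + σ - τ)) := by
    rw [heightSq]
    ring
  have hlow : s * τ ≤ (s + τ + σ) * (s + τ - σ) := by nlinarith
  have hupp : (s + τ + σ) * (s + τ - σ) ≤ 4 * τ * (2 * s) :=
    mul_le_mul (by linarith) (by linarith) (by linarith) (by linarith)
  rw [hsplit, Real.mul_rpow (div_nonneg (by nlinarith) (by positivity)) (by positivity)]
  refine mul_le_mul_of_nonneg_right
    (rpow_le_rpow_abs_mul_rpow q (by positivity) (by norm_num) ?_ ?_) (by positivity)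
  · rw [div_div, div_le_div_iff₀ (by positivity) (by positivity)]
    nlinarith
  · rw [← mul_div_assoc, div_le_div_iff₀ (by positivity) (by positivity)]
    nlinarith

/-- The weight `e^τ τ^a` which turns the weighted `L^p` norm of a radial function into the
unweighted `L^p(0, ∞)` norm of its profile. -/
noncomputable def radialWeight (a τ : ℝ) : ℝ≥0∞ :=
  ENNReal.ofReal (Real.exp τ * τ ^ a)

@[fun_prop]
theorem measurable_radialWeight (a : ℝ) : Measurable (radialWeight a) := by
  unfold radialWeight
  fun_prop

theorem radialWeight_mul_triangleKernel_le {q δ s τ σ : ℝ} (hδ : 0 ≤ δ) (hσ : 0 < σ)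
    (hστ : σ ≤ τ) (hu : 0 < τ + σ - s) (hv : 0 < s + σ - τ) :
    radialWeight (δ + q + 1) s * triangleKernel q s τ σ ≤
      ENNReal.ofReal (4 ^ |q| * 2 ^ δ) *
        (radialWeight (δ + q + 1) τ * radialWeight (δ + q + 1) σ * ENNReal.ofReal
          (σ ^ (-q - δ) * ((τ + σ - s) * (s + σ - τ)) ^ q * Real.exp (-(τ + σ - s)))) := by
  have hs : 0 < s := by linarith
  have hτ : 0 < τ := by linarith
  set U := ((τ + σ - s) * (s + σ - τ)) ^ q
  have : 0 ≤ U := by positivity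
  have hsτ : s ^ δ ≤ 2 ^ δ * τ ^ δ := by
    rw [← Real.mul_rpow (by norm_num) hτ.le]
    exact Real.rpow_le_rpow hs.le (by linarith) hδ
  have hexp : Real.exp s = Real.exp τ * Real.exp σ * Real.exp (-(τ + σ - s)) := by
    rw [← Real.exp_add, ← Real.exp_add]
    ring_nf
  have hσ_rpow : σ = σ ^ (δ + q + 1) * σ ^ (-q - δ) := by
    rw [← Real.rpow_add hσ, show δ + q + 1 + (-q - δ) = 1 by ring, Real.rpow_one]
  rw [triangleKernel, if_pos ⟨abs_lt.2 ⟨by linarith, by linarith⟩, by linarith⟩]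
  simp only [radialWeight]
  rw [← ENNReal.ofReal_mul (by positivity), ← ENNReal.ofReal_mul (by positivity),
    ← ENNReal.ofReal_mul (by positivity), ← ENNReal.ofReal_mul (by positivity)]
  apply ENNReal.ofReal_le_ofReal
  calc Real.exp s * s ^ (δ + q + 1) * (heightSq s τ σ ^ q * τ * σ / s)
      ≤ Real.exp s * s ^ (δ + q + 1) * (4 ^ |q| * (τ / s) ^ q * U * τ * σ / s) := by
        gcongr
        exact heightSq_rpow_le q hσ hστ hu hv
    _ = Real.exp s * s ^ δ * (4 ^ |q| * τ ^ q * U * τ * σ) := by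
        rw [Real.rpow_add_one hs.ne', Real.rpow_add hs, Real.div_rpow hτ.le hs.le]
        have : s ^ q ≠ 0 := by positivity
        field_simp
    _ ≤ Real.exp s * (2 ^ δ * τ ^ δ) * (4 ^ |q| * τ ^ q * U * τ * σ) := by gcongr
    _ = 4 ^ |q| * 2 ^ δ * (Real.exp τ * τ ^ (δ + q + 1) * (Real.exp σ * σ ^ (δ + q + 1)) *
        (σ ^ (-q - δ) * U * Real.exp (-(τ + σ - s)))) := by
        rw [Real.rpow_add_one hτ.ne', Real.rpow_add hτ, hexp]
        linear_combination Real.exp τ * Real.exp σ * Real.exp (-(τ + σ - s)) * 2 ^ δ * τ ^ δ *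
          4 ^ |q| * τ ^ q * U * τ * hσ_rpow

theorem rpow_mul_rpow_mul_exp_neg_le_add {u v σ : ℝ} (q δ : ℝ) (hu : 0 < u) (hv : 0 < v)
    (h : u + v = 2 * σ) :
    σ ^ (-q - δ) * (u * v) ^ q * Real.exp (-u) ≤ 4 ^ |q| * (σ ^ (-δ) * (u ^ q + v ^ q)) := by
  have hσ : 0 < σ := by linarith
  have hmin : min u v ^ q ≤ u ^ q + v ^ q := by
    have := Real.rpow_pos_of_pos hu q
    have := Real.rpow_pos_of_pos hv q
    rcases min_choice u v with h | h <;> rw [h] <;> linarith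
  calc σ ^ (-q - δ) * (u * v) ^ q * Real.exp (-u)
      ≤ σ ^ (-q - δ) * (4 ^ |q| * σ ^ q * (u ^ q + v ^ q)) * 1 := by
        gcongr
        · exact (mul_rpow_le_mul_min_rpow q hu hv h).trans (by gcongr)
        · simpa using hu.le
    _ = 4 ^ |q| * (σ ^ (-q - δ) * σ ^ q * (u ^ q + v ^ q)) := by ring
    _ = 4 ^ |q| * (σ ^ (-δ) * (u ^ q + v ^ q)) := by
        rw [← Real.rpow_add hσ, show -q - δ + q = -δ by ring]

theorem exists_rpow_mul_exp_neg_le (q : ℝ) : ∃ C : ℝ, 0 < C ∧ ∀ m : ℝ, 0 < m →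
    m ^ q * Real.exp (-(5 / 8 * m)) ≤ C * m ^ (-max (-q) 0) := by
  obtain ⟨C, hC, hexp⟩ := exists_one_add_rpow_mul_exp_neg_le |q| (c := 5 / 8) (by norm_num)
  refine ⟨C, hC, fun m hm => ?_⟩
  have hbound : m ^ q ≤ (1 + m) ^ |q| * m ^ (-max (-q) 0) := by
    rcases le_total 0 q with hq | hq
    · rw [max_eq_right (by linarith), abs_of_nonneg hq, neg_zero, Real.rpow_zero, mul_one]
      exact Real.rpow_le_rpow hm.le (by linarith) hq
    · rw [max_eq_left (by linarith), neg_neg]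
      exact le_mul_of_one_le_left (by positivity)
        (Real.one_le_rpow (by linarith) (abs_nonneg q))
  calc m ^ q * Real.exp (-(5 / 8 * m))
      ≤ (1 + m) ^ |q| * m ^ (-max (-q) 0) * Real.exp (-(5 / 8 * m)) := by gcongr
    _ = (1 + m) ^ |q| * Real.exp (-(5 / 8 * m)) * m ^ (-max (-q) 0) := by ring
    _ ≤ C * m ^ (-max (-q) 0) := by gcongr; exact hexp m hm.le

theorem exists_rpow_mul_rpow_mul_exp_neg_le_mul_exp (q δ : ℝ) : ∃ C : ℝ, 0 < C ∧
    ∀ u v σ : ℝ, 0 < u → 0 < v → u + v = 2 * σ →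
      σ ^ (-q - δ) * (u * v) ^ q * Real.exp (-u) ≤ C * (σ ^ (-δ) * Real.exp (-u / 4) *
        (Real.exp (-u / 8) * u ^ (-max (-q) 0) + Real.exp (-v / 8) * v ^ (-max (-q) 0))) := by
  obtain ⟨C, hC, hexp⟩ := exists_rpow_mul_exp_neg_le q
  refine ⟨4 ^ |q| * C, by positivity, fun u v σ hu hv h => ?_⟩
  have hσ : 0 < σ := by linarith
  set χ := max (-q) 0
  set m := min u v with hm
  have hm₀ : 0 < m := lt_min hu hv
  have hexp_u : Real.exp (-u) ≤
      Real.exp (-u / 4) * Real.exp (-m / 8) * Real.exp (-(5 / 8 * m)) := by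
    rw [← Real.exp_add, ← Real.exp_add]
    refine Real.exp_le_exp.2 ?_
    linarith [min_le_left u v]
  have hsum : Real.exp (-m / 8) * m ^ (-χ) ≤
      Real.exp (-u / 8) * u ^ (-χ) + Real.exp (-v / 8) * v ^ (-χ) := by
    have : 0 < Real.exp (-u / 8) * u ^ (-χ) := by positivity
    have : 0 < Real.exp (-v / 8) * v ^ (-χ) := by positivity
    rcases min_choice u v with h | h <;> rw [hm, h] <;> linarith
  calc σ ^ (-q - δ) * (u * v) ^ q * Real.exp (-u)
      ≤ σ ^ (-q - δ) * (4 ^ |q| * σ ^ q * m ^ q) *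
          (Real.exp (-u / 4) * Real.exp (-m / 8) * Real.exp (-(5 / 8 * m))) := by
        gcongr
        exact mul_rpow_le_mul_min_rpow q hu hv h
    _ = 4 ^ |q| * (σ ^ (-q - δ) * σ ^ q) * Real.exp (-u / 4) * Real.exp (-m / 8) *
          (m ^ q * Real.exp (-(5 / 8 * m))) := by ring
    _ ≤ 4 ^ |q| * (σ ^ (-q - δ) * σ ^ q) * Real.exp (-u / 4) * Real.exp (-m / 8) *
          (C * m ^ (-χ)) := mul_le_mul_of_nonneg_left (hexp m hm₀) (by positivity)
    _ = 4 ^ |q| * C * (σ ^ (-δ) * Real.exp (-u / 4) * (Real.exp (-m / 8) * m ^ (-χ))) := by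
        rw [← Real.rpow_add hσ, show -q - δ + q = -δ by ring]
        ring
    _ ≤ _ := by gcongr

/-- `x ↦ x ^ q` on `(0, 2σ]`, extended by zero: the factor of `lowKernel` which is singular at a
degenerate triangle when `q < 0`. -/
noncomputable def truncatedRpow (q σ : ℝ) : ℝ → ℝ≥0∞ :=
  (Ioc 0 (2 * σ)).indicator fun x => ENNReal.ofReal (x ^ q)

@[fun_prop]
theorem measurable_truncatedRpow {α : Type*} [MeasurableSpace α] (q : ℝ) {f g : α → ℝ}
    (hf : Measurable f) (hg : Measurable g) : Measurable fun x => truncatedRpow q (f x) (g x) := by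
  simp only [truncatedRpow, indicator_apply]
  exact Measurable.ite ((measurableSet_lt measurable_const hg).inter
    (measurableSet_le hg (by fun_prop))) (by fun_prop) measurable_const

/-- `x ↦ e^{-x / 8} x^{-χ}` on `(0, ∞)`, extended by zero: the same singularity for `highKernel`,
made integrable on `(0, ∞)` by part of the exponential damping. -/
noncomputable def dampedRpow (χ : ℝ) : ℝ → ℝ≥0∞ :=
  (Ioi 0).indicator fun x => ENNReal.ofReal (Real.exp (-x / 8) * x ^ (-χ))

@[fun_prop]
theorem measurable_dampedRpow (χ : ℝ) : Measurable (dampedRpow χ) :=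
  Measurable.indicator (by fun_prop) measurableSet_Ioi

/-- The majorant, for `σ ≤ 1`, of the radial convolution kernel in the weighted variables.
It depends on `s` and `τ` only through `x = τ - s`. -/
noncomputable def lowKernel (q δ x σ : ℝ) : ℝ≥0∞ :=
  (Ioc 0 1).indicator (fun σ => ENNReal.ofReal (σ ^ (-δ))) σ *
    (truncatedRpow q σ (σ + x) + truncatedRpow q σ (σ - x))

@[fun_prop]
theorem measurable_lowKernel {α : Type*} [MeasurableSpace α] (q δ : ℝ) {f g : α → ℝ}
    (hf : Measurable f) (hg : Measurable g) : Measurable fun x => lowKernel q δ (f x) (g x) := by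
  have hind : Measurable ((Ioc (0 : ℝ) 1).indicator fun σ => ENNReal.ofReal (σ ^ (-δ))) :=
    Measurable.indicator (by fun_prop) measurableSet_Ioc
  unfold lowKernel
  fun_prop

/-- The singular factor of `highKernel`, with a possible singularity on either side of the
triangle condition. -/
noncomputable def dampedPairKernel (χ s τ σ : ℝ) : ℝ≥0∞ :=
  dampedRpow χ (τ + σ - s) + dampedRpow χ (s + σ - τ)

@[fun_prop]
theorem measurable_dampedPairKernel {α : Type*} [MeasurableSpace α] (χ : ℝ) {f g h : α → ℝ}
    (hf : Measurable f) (hg : Measurable g) (hh : Measurable h) :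
    Measurable fun x => dampedPairKernel χ (f x) (g x) (h x) := by
  unfold dampedPairKernel
  fun_prop

/-- The majorant, for `1 < σ ≤ τ`, of the radial convolution kernel in the weighted variables. -/
noncomputable def highKernel (δ χ s τ σ : ℝ) : ℝ≥0∞ :=
  if 1 < σ ∧ σ ≤ τ ∧ 0 < τ + σ - s then
    ENNReal.ofReal (σ ^ (-δ) * Real.exp (-(τ + σ - s) / 4)) * dampedPairKernel χ s τ σ else 0

theorem triangleKernel_of_nonpos {σ : ℝ} (q s τ : ℝ) (hσ : σ ≤ 0) : triangleKernel q s τ σ = 0 :=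
  if_neg fun h => by linarith [(abs_lt.1 h.1).2, h.2]

theorem exists_radialWeight_mul_triangleKernel_le {q δ : ℝ} (hδ : 0 ≤ δ) :
    ∃ C : ℝ≥0∞, C ≠ ⊤ ∧ ∀ s τ σ : ℝ, 0 < σ → σ ≤ τ →
      radialWeight (δ + q + 1) s * triangleKernel q s τ σ ≤
        C * (radialWeight (δ + q + 1) τ * radialWeight (δ + q + 1) σ *
          (lowKernel q δ (τ - s) σ + highKernel δ (max (-q) 0) s τ σ)) := by
  obtain ⟨C, hC, hhigh⟩ := exists_rpow_mul_rpow_mul_exp_neg_le_mul_exp q δ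
  refine ⟨ENNReal.ofReal (4 ^ |q| * 2 ^ δ) * ENNReal.ofReal (4 ^ |q| + C), by finiteness,
    fun s τ σ hσ hστ => ?_⟩
  by_cases ht : |τ - σ| < s ∧ s < τ + σ
  swap
  · simp [triangleKernel, ht]
  have hu : 0 < τ + σ - s := by linarith
  have hv : 0 < s + σ - τ := by linarith [(abs_lt.1 ht.1).2]
  refine (radialWeight_mul_triangleKernel_le hδ hσ hστ hu hv).trans ?_
  rw [mul_assoc (ENNReal.ofReal _), mul_left_comm (ENNReal.ofReal (4 ^ |q| + C))]
  refine mul_le_mul_right (mul_le_mul_right ?_ _) _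
  rcases le_or_gt σ 1 with hσ₁ | hσ₁
  · refine le_trans ?_ (mul_le_mul_right le_self_add _)
    rw [lowKernel, truncatedRpow, indicator_of_mem (by exact ⟨hσ, hσ₁⟩),
      indicator_of_mem (by constructor <;> linarith),
      indicator_of_mem (by constructor <;> linarith),
      ← ENNReal.ofReal_add (Real.rpow_nonneg (by linarith) _) (Real.rpow_nonneg (by linarith) _),
      ← ENNReal.ofReal_mul (by positivity), ← ENNReal.ofReal_mul (by positivity),
      show σ + (τ - s) = τ + σ - s by ring, show σ - (τ - s) = s + σ - τ by ring]
    refine ENNReal.ofReal_le_ofReal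
      ((rpow_mul_rpow_mul_exp_neg_le_add q δ hu hv (by ring)).trans ?_)
    gcongr
    linarith
  · refine le_trans ?_ (mul_le_mul_right le_add_self _)
    rw [highKernel, if_pos ⟨hσ₁, hστ, hu⟩, dampedPairKernel, dampedRpow,
      indicator_of_mem (mem_Ioi.2 hu),
      indicator_of_mem (mem_Ioi.2 hv), ← ENNReal.ofReal_add (by positivity) (by positivity),
      ← ENNReal.ofReal_mul (by positivity), ← ENNReal.ofReal_mul (by positivity)]
    refine ENNReal.ofReal_le_ofReal ((hhigh _ _ σ hu hv (by ring)).trans ?_)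
    gcongr
    linarith [show (0 : ℝ) < 4 ^ |q| by positivity]

/-! ### Inequalities of Hölder type -/

section HolderInequalities

variable {α : Type*} [MeasurableSpace α] {μ : Measure α}

theorem lintegral_rpow_mul_rpow_lt_top {f g : α → ℝ≥0∞} {θ : ℝ} (hf : Measurable f)
    (hg : Measurable g) (hθ₀ : 0 ≤ θ) (hθ₁ : θ ≤ 1) (hfi : ∫⁻ x, f x ∂μ < ⊤)
    (hgi : ∫⁻ x, g x ∂μ < ⊤) : ∫⁻ x, f x ^ θ * g x ^ (1 - θ) ∂μ < ⊤ :=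
  (ENNReal.lintegral_mul_norm_pow_le (by fun_prop) (by fun_prop) hθ₀ (by linarith)
    (by ring)).trans_lt (ENNReal.mul_lt_top (ENNReal.rpow_lt_top_of_nonneg hθ₀ hfi.ne)
      (ENNReal.rpow_lt_top_of_nonneg (by linarith) hgi.ne))

theorem lintegral_mul_lt_top_of_holderConjugate {f g : α → ℝ≥0∞} {p p' : ℝ}
    (hpp' : p.HolderConjugate p') (hf : Measurable f) (hg : Measurable g)
    (hfp : ∫⁻ x, f x ^ p ∂μ < ⊤) (hgp : ∫⁻ x, g x ^ p' ∂μ < ⊤) : ∫⁻ x, f x * g x ∂μ < ⊤ :=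
  (ENNReal.lintegral_mul_le_Lp_mul_Lq μ hpp' hf.aemeasurable hg.aemeasurable).trans_lt
    (ENNReal.mul_lt_top
      (ENNReal.rpow_lt_top_of_nonneg (one_div_nonneg.2 hpp'.nonneg) hfp.ne)
      (ENNReal.rpow_lt_top_of_nonneg (one_div_nonneg.2 hpp'.symm.nonneg) hgp.ne))

theorem lintegral_add_rpow_lt_top {f g : α → ℝ≥0∞} {p : ℝ} (hf : Measurable f) (hp : 1 ≤ p)
    (hfp : ∫⁻ x, f x ^ p ∂μ < ⊤) (hgp : ∫⁻ x, g x ^ p ∂μ < ⊤) :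
    ∫⁻ x, (f x + g x) ^ p ∂μ < ⊤ := by
  have hconst : (2 : ℝ≥0∞) ^ (p - 1) < ⊤ := ENNReal.rpow_lt_top_of_nonneg (by linarith) (by simp)
  calc ∫⁻ x, (f x + g x) ^ p ∂μ ≤ ∫⁻ x, 2 ^ (p - 1) * (f x ^ p + g x ^ p) ∂μ :=
        lintegral_mono fun x => ENNReal.rpow_add_le_mul_rpow_add_rpow (f x) (g x) hp
    _ = 2 ^ (p - 1) * (∫⁻ x, f x ^ p ∂μ + ∫⁻ x, g x ^ p ∂μ) := by
        rw [lintegral_const_mul' _ _ hconst.ne, lintegral_add_left (by fun_prop)]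
    _ < ⊤ := ENNReal.mul_lt_top hconst (ENNReal.add_lt_top.2 ⟨hfp, hgp⟩)

theorem lintegral_rpow_lintegral_mul_sub_le {G : Type*} [AddCommGroup G] [MeasurableSpace G]
    [MeasurableAdd₂ G] [MeasurableNeg G] {μ : Measure G} [SFinite μ] [μ.IsAddLeftInvariant]
    [μ.IsNegInvariant] {p : ℝ} (hp : 1 ≤ p) {F l : G → ℝ≥0∞} (hF : Measurable F)
    (hl : Measurable l) :
    ∫⁻ s, (∫⁻ τ, F τ * l (τ - s) ∂μ) ^ p ∂μ ≤ (∫⁻ x, l x ∂μ) ^ p * ∫⁻ τ, F τ ^ p ∂μ := by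
  have hp₀ : 0 < p := by linarith
  have hp_inv : 0 ≤ 1 - 1 / p := by
    rw [sub_nonneg, div_le_one hp₀]
    exact hp
  have hpointwise (s : G) : (∫⁻ τ, F τ * l (τ - s) ∂μ) ^ p ≤
      (∫⁻ τ, F τ ^ p * l (τ - s) ∂μ) * (∫⁻ x, l x ∂μ) ^ (p - 1) := by
    have hfactor (τ : G) :
        F τ * l (τ - s) = (F τ ^ p * l (τ - s)) ^ (1 / p) * l (τ - s) ^ (1 - 1 / p) := by
      rw [ENNReal.mul_rpow_of_nonneg _ _ (by positivity), ← ENNReal.rpow_mul,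
        mul_one_div_cancel hp₀.ne', ENNReal.rpow_one, mul_assoc,
        ← ENNReal.rpow_add_of_nonneg _ _ (by positivity) hp_inv, add_sub_cancel, ENNReal.rpow_one]
    have hHolder : ∫⁻ τ, F τ * l (τ - s) ∂μ ≤
        (∫⁻ τ, F τ ^ p * l (τ - s) ∂μ) ^ (1 / p) * (∫⁻ x, l x ∂μ) ^ (1 - 1 / p) := by
      rw [lintegral_congr hfactor, ← lintegral_sub_right_eq_self l s]
      exact ENNReal.lintegral_mul_norm_pow_le (p := 1 / p) (q := 1 - 1 / p) (by fun_prop)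
        (by fun_prop) (by positivity) hp_inv (by ring)
    refine (ENNReal.rpow_le_rpow hHolder hp₀.le).trans_eq ?_
    rw [ENNReal.mul_rpow_of_nonneg _ _ hp₀.le, ← ENNReal.rpow_mul, ← ENNReal.rpow_mul,
      one_div_mul_cancel hp₀.ne', ENNReal.rpow_one, sub_mul, one_div_mul_cancel hp₀.ne', one_mul]
  calc ∫⁻ s, (∫⁻ τ, F τ * l (τ - s) ∂μ) ^ p ∂μ
      ≤ (∫⁻ s, ∫⁻ τ, F τ ^ p * l (τ - s) ∂μ ∂μ) * (∫⁻ x, l x ∂μ) ^ (p - 1) := by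
        rw [← lintegral_mul_const _
          (Measurable.lintegral_prod_right (f := fun s τ : G => F τ ^ p * l (τ - s)) (by fun_prop))]
        exact lintegral_mono hpointwise
    _ = (∫⁻ τ, F τ ^ p ∂μ) * (∫⁻ x, l x ∂μ) * (∫⁻ x, l x ∂μ) ^ (p - 1) := by
        have hinner (τ : G) : ∫⁻ s, F τ ^ p * l (τ - s) ∂μ = F τ ^ p * ∫⁻ x, l x ∂μ := by
          rw [lintegral_const_mul _ (by fun_prop), lintegral_sub_left_eq_self l]
        rw [lintegral_lintegral_swap (f := fun s τ => F τ ^ p * l (τ - s)) (by fun_prop),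
          lintegral_congr hinner, lintegral_mul_const _ (by fun_prop)]
    _ = (∫⁻ x, l x ∂μ) ^ p * ∫⁻ τ, F τ ^ p ∂μ := by
        rw [mul_assoc, mul_comm]
        nth_rewrite 1 [← ENNReal.rpow_one (∫⁻ x, l x ∂μ)]
        rw [← ENNReal.rpow_add_of_nonneg _ _ zero_le_one (by linarith), add_sub_cancel]

variable {β : Type*} [MeasurableSpace β] {ν : Measure β} {K : α → β → ℝ≥0∞} {M : ℝ≥0∞}

theorem lintegral_prod_fst_mul_le [SFinite ν] (hK : Measurable (Function.uncurry K))
    (hKM : ∀ x, ∫⁻ y, K x y ∂ν ≤ M) {f : α → ℝ≥0∞} (hf : Measurable f) :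
    ∫⁻ z, f z.1 * K z.1 z.2 ∂(μ.prod ν) ≤ M * ∫⁻ x, f x ∂μ := by
  have hfK : Measurable fun z : α × β => f z.1 * K z.1 z.2 := (hf.comp measurable_fst).mul hK
  rw [lintegral_prod _ hfK.aemeasurable, ← lintegral_const_mul _ hf]
  refine lintegral_mono fun x => ?_
  dsimp only
  rw [lintegral_const_mul _ hK.of_uncurry_left, mul_comm]
  exact mul_le_mul_left (hKM x) _

theorem lintegral_prod_snd_mul_le [SFinite μ] [SFinite ν] (hK : Measurable (Function.uncurry K))
    (hKM : ∀ y, ∫⁻ x, K x y ∂μ ≤ M) {g : β → ℝ≥0∞} (hg : Measurable g) :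
    ∫⁻ z, g z.2 * K z.1 z.2 ∂(μ.prod ν) ≤ M * ∫⁻ y, g y ∂ν := by
  rw [← lintegral_prod_swap]
  exact lintegral_prod_fst_mul_le (K := fun y x => K x y) (hK.comp measurable_swap) hKM hg

theorem lintegral_prod_mul_mul_le_of_marginals [SFinite μ] [SFinite ν] {p p' : ℝ}
    (hpp' : p.HolderConjugate p') (hK : Measurable (Function.uncurry K))
    (hK₁ : ∀ x, ∫⁻ y, K x y ∂ν ≤ M) (hK₂ : ∀ y, ∫⁻ x, K x y ∂μ ≤ M) {f : α → ℝ≥0∞}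
    {g : β → ℝ≥0∞} (hf : Measurable f) (hg : Measurable g) :
    ∫⁻ z, f z.1 * g z.2 * K z.1 z.2 ∂(μ.prod ν) ≤
      (M * ∫⁻ x, f x ^ p ∂μ) ^ (1 / p) * (M * ∫⁻ y, g y ^ p' ∂ν) ^ (1 / p') := by
  have hK' : Measurable fun z : α × β => K z.1 z.2 := hK
  have hp := hpp'.pos
  have hp' := hpp'.symm.pos
  have hfactor (x y k : ℝ≥0∞) : x * y * k = x * k ^ (1 / p) * (y * k ^ (1 / p')) := by
    rw [mul_mul_mul_comm, ← ENNReal.rpow_add_of_nonneg _ _ (by positivity) (by positivity),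
      one_div, one_div, hpp'.inv_add_inv_eq_one, ENNReal.rpow_one]
  have hpow {r : ℝ} (hr : 0 < r) (x k : ℝ≥0∞) : (x * k ^ (1 / r)) ^ r = x ^ r * k := by
    rw [ENNReal.mul_rpow_of_nonneg _ _ hr.le, ← ENNReal.rpow_mul, one_div_mul_cancel hr.ne',
      ENNReal.rpow_one]
  refine (lintegral_congr fun z : α × β => hfactor (f z.1) (g z.2) (K z.1 z.2)).trans_le ?_
  refine (ENNReal.lintegral_mul_le_Lp_mul_Lq _ hpp' (by fun_prop) (by fun_prop)).trans ?_
  simp only [hpow hp, hpow hp']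
  gcongr
  · exact lintegral_prod_fst_mul_le hK hK₁ (by fun_prop)
  · exact lintegral_prod_snd_mul_le hK hK₂ (by fun_prop)

theorem mul_mul_eq_rpow_mul_rpow_mul_rpow_mul_rpow {p b θ ω κ : ℝ} (hp : 0 < p) (hb : 0 < b)
    (hθ : 0 ≤ θ) (hω : 0 ≤ ω) (hκ : 0 ≤ κ) (hp_sum : κ + θ + ω = 1 / p)
    (hb_sum : κ + θ + θ = 1 / b) (x y k : ℝ≥0∞) :
    x * y * k = (x ^ p * y ^ p * k ^ b) ^ κ * (x ^ p * k ^ b) ^ θ * (y ^ p * k ^ b) ^ θ *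
      (x ^ p * y ^ p) ^ ω := by
  have hx (x : ℝ≥0∞) : x = (x ^ p) ^ κ * (x ^ p) ^ θ * (x ^ p) ^ ω := by
    rw [← ENNReal.rpow_add_of_nonneg _ _ hκ hθ, ← ENNReal.rpow_add_of_nonneg _ _ (by positivity) hω,
      hp_sum, ← ENNReal.rpow_mul, mul_one_div_cancel hp.ne', ENNReal.rpow_one]
  have hk : k = (k ^ b) ^ κ * (k ^ b) ^ θ * (k ^ b) ^ θ := by
    rw [← ENNReal.rpow_add_of_nonneg _ _ hκ hθ, ← ENNReal.rpow_add_of_nonneg _ _ (by positivity) hθ,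
      hb_sum, ← ENNReal.rpow_mul, mul_one_div_cancel hb.ne', ENNReal.rpow_one]
  simp only [ENNReal.mul_rpow_of_nonneg _ _ hκ, ENNReal.mul_rpow_of_nonneg _ _ hθ,
    ENNReal.mul_rpow_of_nonneg _ _ hω]
  conv_lhs => rw [hx x, hx y, hk]
  ring

/-- The four-factor Hölder inequality behind Young's inequality, applied only in the variables
`(x, y)`: if `K` depends on a further variable, the first factor is still to be integrated. -/
theorem lintegral_prod_mul_mul_le_of_rpow_marginals [SFinite μ] [SFinite ν] {p b : ℝ}
    (hp : 1 ≤ p) (hb : 1 ≤ b) (hpb : 2 * (1 - 1 / p) ≤ 1 / b)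
    (hK : Measurable (Function.uncurry K)) (hK₁ : ∀ x, ∫⁻ y, K x y ^ b ∂ν ≤ M)
    (hK₂ : ∀ y, ∫⁻ x, K x y ^ b ∂μ ≤ M) {f : α → ℝ≥0∞} {g : β → ℝ≥0∞} (hf : Measurable f)
    (hg : Measurable g) :
    ∫⁻ z, f z.1 * g z.2 * K z.1 z.2 ∂(μ.prod ν) ≤
      (∫⁻ z, f z.1 ^ p * g z.2 ^ p * K z.1 z.2 ^ b ∂(μ.prod ν)) ^ (1 / b - 2 * (1 - 1 / p)) *
        (M * ∫⁻ x, f x ^ p ∂μ) ^ (1 - 1 / p) * (M * ∫⁻ y, g y ^ p ∂ν) ^ (1 - 1 / p) *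
        ((∫⁻ x, f x ^ p ∂μ) * ∫⁻ y, g y ^ p ∂ν) ^ (1 - 1 / b) := by
  have hK' : Measurable fun z : α × β => K z.1 z.2 := hK
  have hp₀ : 0 < p := by linarith
  have hb₀ : 0 < b := by linarith
  have hθ : 0 ≤ 1 - 1 / p := sub_nonneg.2 ((div_le_one hp₀).2 hp)
  have hω : 0 ≤ 1 - 1 / b := sub_nonneg.2 ((div_le_one hb₀).2 hb)
  have hκ : 0 ≤ 1 / b - 2 * (1 - 1 / p) := sub_nonneg.2 hpb
  refine (lintegral_congr fun z : α × β => mul_mul_eq_rpow_mul_rpow_mul_rpow_mul_rpow hp₀ hb₀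
    hθ hω hκ (by ring) (by ring) (f z.1) (g z.2) (K z.1 z.2)).trans_le ?_
  have hHolder := ENNReal.lintegral_prod_norm_pow_le (μ := μ.prod ν) (Finset.univ : Finset (Fin 4))
    (f := ![fun z => f z.1 ^ p * g z.2 ^ p * K z.1 z.2 ^ b, fun z => f z.1 ^ p * K z.1 z.2 ^ b,
      fun z => g z.2 ^ p * K z.1 z.2 ^ b, fun z => f z.1 ^ p * g z.2 ^ p])
    (p := ![1 / b - 2 * (1 - 1 / p), 1 - 1 / p, 1 - 1 / p, 1 - 1 / b])
    (by simp only [Finset.mem_univ, forall_const, Fin.forall_fin_succ, Fin.isValue]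
        refine ⟨?_, ?_, ?_, ?_, by simp⟩ <;>
          simp only [Fin.isValue, Matrix.cons_val, Fin.succ_zero_eq_one, Fin.succ_one_eq_two,
            Fin.reduceSucc] <;> fun_prop)
    (by simp only [Fin.sum_univ_four, Matrix.cons_val]; ring)
    (fun i _ => by fin_cases i; exacts [hκ, hθ, hθ, hω])
  simp only [Fin.prod_univ_four, Matrix.cons_val] at hHolder
  refine hHolder.trans ?_
  rw [lintegral_prod_mul (hf.pow_const p).aemeasurable (hg.pow_const p).aemeasurable]
  gcongr
  · exact lintegral_prod_fst_mul_le (K := fun x y => K x y ^ b) (hK.pow_const b) hK₁ (by fun_prop)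
  · exact lintegral_prod_snd_mul_le (K := fun x y => K x y ^ b) (hK.pow_const b) hK₂ (by fun_prop)

end HolderInequalities

theorem lintegral_truncatedRpow {q σ : ℝ} (hq : -1 < q) (hσ : 0 ≤ σ) :
    ∫⁻ x, truncatedRpow q σ x = ENNReal.ofReal ((2 * σ) ^ (q + 1) / (q + 1)) := by
  have hinteg : IntegrableOn (fun x : ℝ => x ^ q) (Ioc 0 (2 * σ)) :=
    (intervalIntegrable_iff_integrableOn_Ioc_of_le (by positivity)).1
      (intervalIntegral.intervalIntegrable_rpow' hq)
  have hnonneg : ∀ᵐ x ∂volume.restrict (Ioc 0 (2 * σ)), 0 ≤ x ^ q :=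
    (ae_restrict_mem measurableSet_Ioc).mono fun x hx => Real.rpow_nonneg hx.1.le q
  unfold truncatedRpow
  rw [lintegral_indicator measurableSet_Ioc, ← ofReal_integral_eq_lintegral_ofReal hinteg hnonneg,
    ← intervalIntegral.integral_of_le (by positivity), integral_rpow (Or.inl hq),
    Real.zero_rpow (by linarith), sub_zero]

theorem lintegral_dampedRpow_rpow_lt_top {χ b : ℝ} (hb : 0 < b) (hχb : χ * b < 1) :
    ∫⁻ x, dampedRpow χ x ^ b < ⊤ := by
  have hpow (x : ℝ) : dampedRpow χ x ^ b = (Ioi (0 : ℝ)).indicator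
      (fun x => ENNReal.ofReal (x ^ (-(χ * b)) * Real.exp (-(b / 8) * x ^ (1 : ℝ)))) x := by
    unfold dampedRpow
    by_cases hx : x ∈ Ioi (0 : ℝ)
    · have hx₀ : 0 < x := hx
      rw [indicator_of_mem hx, indicator_of_mem hx, ENNReal.ofReal_rpow_of_pos (by positivity),
        Real.mul_rpow (by positivity) (by positivity), ← Real.exp_mul, ← Real.rpow_mul hx₀.le,
        mul_comm, Real.rpow_one]
      ring_nf
    · rw [indicator_of_notMem hx, indicator_of_notMem hx, ENNReal.zero_rpow_of_pos hb]
  rw [lintegral_congr hpow, lintegral_indicator measurableSet_Ioi]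
  exact (integrableOn_rpow_mul_exp_neg_mul_rpow (by linarith) one_pos
    (by positivity)).lintegral_lt_top

theorem exists_lintegral_dampedPairKernel_rpow_le {χ b : ℝ} (hb : 1 ≤ b) (hχb : χ * b < 1) :
    ∃ M : ℝ≥0∞, M ≠ ⊤ ∧ (∀ τ σ, ∫⁻ s, dampedPairKernel χ s τ σ ^ b ≤ M) ∧
      (∀ s σ, ∫⁻ τ, dampedPairKernel χ s τ σ ^ b ≤ M) ∧
      ∀ s τ, ∫⁻ σ, dampedPairKernel χ s τ σ ^ b ≤ M := by
  let D (x : ℝ) : ℝ≥0∞ := dampedRpow χ x ^ b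
  have hD : ∫⁻ x, D x ≠ ⊤ := (lintegral_dampedRpow_rpow_lt_top (by linarith) hχb).ne
  have hpair {f g : ℝ → ℝ} (hf : Measurable f) (hfD : ∫⁻ x, D (f x) = ∫⁻ x, D x)
      (hgD : ∫⁻ x, D (g x) = ∫⁻ x, D x) :
      ∫⁻ x, (dampedRpow χ (f x) + dampedRpow χ (g x)) ^ b ≤ 2 ^ (b - 1) * (2 * ∫⁻ x, D x) := by
    refine (lintegral_mono fun x => ENNReal.rpow_add_le_mul_rpow_add_rpow _ _ hb).trans_eq ?_
    rw [lintegral_const_mul' _ _ (by finiteness), lintegral_add_left (by fun_prop), hfD, hgD,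
      two_mul]
  refine ⟨2 ^ (b - 1) * (2 * ∫⁻ x, D x), by finiteness, fun τ σ => hpair (by fun_prop) ?_ ?_,
    fun s σ => hpair (by fun_prop) ?_ ?_, fun s τ => hpair (by fun_prop) ?_ ?_⟩
  · exact lintegral_sub_left_eq_self D (τ + σ)
  · simpa only [add_sub_assoc] using lintegral_add_right_eq_self D (σ - τ)
  · simpa only [add_sub_assoc] using lintegral_add_right_eq_self D (σ - s)
  · exact lintegral_sub_left_eq_self D (s + σ)
  · simpa only [add_sub_right_comm] using lintegral_add_left_eq_self D (τ - s)
  · simpa only [add_sub_right_comm] using lintegral_add_left_eq_self D (s - τ)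

/-! ### The averaging operator -/

/-- The averaging operator `X ↦ ∫_ρ^{ρ/β} e^{ρ^γ - s^γ} X(s) ds`, which is the `t`-integral of the
renormalization operator after the substitution `s = tρ`. -/
noncomputable def expAverage (β γ : ℝ) (X : ℝ → ℝ≥0∞) (ρ : ℝ) : ℝ≥0∞ :=
  ∫⁻ s in Ioc ρ (ρ / β), ENNReal.ofReal (Real.exp (ρ ^ γ - s ^ γ)) * X s

section ExpAverage

variable {β γ : ℝ}

theorem measurable_expAverage {X : ℝ → ℝ≥0∞} (hX : Measurable X) :
    Measurable (expAverage β γ X) := by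
  let A : Set (ℝ × ℝ) := {x | x.1 < x.2 ∧ x.2 ≤ x.1 / β}
  have hA : MeasurableSet A := (measurableSet_lt measurable_fst measurable_snd).inter
    (measurableSet_le measurable_snd (measurable_fst.div_const β))
  have hrw : expAverage β γ X = fun ρ => ∫⁻ s,
      A.indicator (fun x => ENNReal.ofReal (Real.exp (x.1 ^ γ - x.2 ^ γ)) * X x.2) (ρ, s) := by
    funext ρ
    rw [expAverage, ← lintegral_indicator measurableSet_Ioc]
    simp only [A, indicator, mem_Ioc, mem_ofPred_eq]
  rw [hrw]
  exact (Measurable.indicator (by fun_prop) hA).lintegral_prod_right'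

theorem exp_rpow_sub_rpow_le_one {ρ s : ℝ} (hγ : 0 ≤ γ) (hρ : 0 ≤ ρ) (hs : ρ ≤ s) :
    Real.exp (ρ ^ γ - s ^ γ) ≤ 1 :=
  Real.exp_le_one_iff.2 (sub_nonpos.2 (Real.rpow_le_rpow hρ hs hγ))

theorem rpow_sub_one_mul_sub_le {ρ s : ℝ} (hγ : 1 ≤ γ) (hρ : 0 < ρ) (hs : ρ ≤ s) :
    ρ ^ (γ - 1) * (s - ρ) ≤ s ^ γ - ρ ^ γ := by
  have hs₀ : 0 < s := hρ.trans_le hs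
  have hmono : ρ ^ (γ - 1) ≤ s ^ (γ - 1) := Real.rpow_le_rpow hρ.le hs (by linarith)
  have hsplit {x : ℝ} (hx : 0 < x) : x ^ γ = x ^ (γ - 1) * x := by
    rw [← Real.rpow_add_one hx.ne', sub_add_cancel]
  rw [hsplit hs₀, hsplit hρ]
  nlinarith

theorem exp_rpow_sub_rpow_le {ρ s : ℝ} (hγ : 1 ≤ γ) (hρ : 0 < ρ) (hs : ρ ≤ s) :
    Real.exp (ρ ^ γ - s ^ γ) ≤ Real.exp (1 - (s - ρ)) := by
  refine Real.exp_le_exp.2 ?_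
  rcases le_total 1 ρ with hρ₁ | hρ₁
  · have hone : 1 ≤ ρ ^ (γ - 1) := Real.one_le_rpow hρ₁ (by linarith)
    nlinarith [rpow_sub_one_mul_sub_le hγ hρ hs]
  · have hρ_pow : ρ ^ γ ≤ 1 := Real.rpow_le_one hρ.le hρ₁ (by linarith)
    rcases le_total s 1 with hs₁ | hs₁
    · linarith [Real.rpow_le_rpow hρ.le hs (by linarith : 0 ≤ γ)]
    · linarith [Real.self_le_rpow_of_one_le hs₁ hγ]

/-- Convolution with `e^{1 - x}` dominates the average. -/
theorem lintegral_expAverage_rpow_lt_top (hγ : 1 ≤ γ) {p : ℝ} (hp : 1 ≤ p) {X : ℝ → ℝ≥0∞}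
    (hX : Measurable X) (hXp : ∫⁻ s, X s ^ p < ⊤) :
    ∫⁻ ρ in Ioi 0, expAverage β γ X ρ ^ p < ⊤ := by
  let l : ℝ → ℝ≥0∞ := (Ioi 0).indicator fun x => ENNReal.ofReal (Real.exp (1 - x))
  have hl : Measurable l := Measurable.indicator (by fun_prop) measurableSet_Ioi
  have hl_int : ∫⁻ x, l x < ⊤ := by
    have hinteg : IntegrableOn (fun x => Real.exp (1 - x)) (Ioi 0) := by
      simp only [IntegrableOn, sub_eq_add_neg, Real.exp_add]
      exact (integrableOn_exp_neg_Ioi 0).const_mul (Real.exp 1)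
    simpa only [l, lintegral_indicator measurableSet_Ioi] using hinteg.lintegral_lt_top
  have hle (ρ : ℝ) (hρ : ρ ∈ Ioi 0) : expAverage β γ X ρ ≤ ∫⁻ s, X s * l (s - ρ) := by
    refine (setLIntegral_mono' measurableSet_Ioc fun s hs => ?_).trans
      (setLIntegral_le_lintegral (Ioc ρ (ρ / β)) _)
    have hpos : s - ρ ∈ Ioi 0 := mem_Ioi.2 (sub_pos.2 hs.1)
    simp only [l, indicator_of_mem hpos]
    rw [mul_comm]
    exact mul_le_mul_right (ENNReal.ofReal_le_ofReal (exp_rpow_sub_rpow_le hγ hρ hs.1.le)) _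
  calc ∫⁻ ρ in Ioi 0, expAverage β γ X ρ ^ p
      ≤ ∫⁻ ρ in Ioi 0, (∫⁻ s, X s * l (s - ρ)) ^ p :=
        setLIntegral_mono' measurableSet_Ioi fun ρ hρ => by gcongr; exact hle ρ hρ
    _ ≤ ∫⁻ ρ, (∫⁻ s, X s * l (s - ρ)) ^ p := setLIntegral_le_lintegral _ _
    _ ≤ (∫⁻ x, l x) ^ p * ∫⁻ s, X s ^ p := lintegral_rpow_lintegral_mul_sub_le hp hX hl
    _ < ⊤ := by finiteness

theorem setLIntegral_exp_rpow_sub_rpow_le_rpow (hγ : 1 ≤ γ) {ρ : ℝ} (hρ : 0 < ρ) :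
    ∫⁻ s in Ioi ρ, ENNReal.ofReal (Real.exp (ρ ^ γ - s ^ γ)) ≤ ENNReal.ofReal (ρ ^ (1 - γ)) := by
  have hpos : 0 < ρ ^ (γ - 1) := by positivity
  have hinteg : IntegrableOn
      (fun s => Real.exp (ρ ^ (γ - 1) * ρ) * Real.exp (-(ρ ^ (γ - 1)) * s)) (Ioi ρ) :=
    (integrableOn_exp_mul_Ioi (by linarith) ρ).const_mul _
  calc ∫⁻ s in Ioi ρ, ENNReal.ofReal (Real.exp (ρ ^ γ - s ^ γ))
      ≤ ∫⁻ s in Ioi ρ,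
          ENNReal.ofReal (Real.exp (ρ ^ (γ - 1) * ρ) * Real.exp (-(ρ ^ (γ - 1)) * s)) := by
        refine setLIntegral_mono' measurableSet_Ioi fun s hs => ENNReal.ofReal_le_ofReal ?_
        rw [← Real.exp_add]
        refine Real.exp_le_exp.2 ?_
        linarith [rpow_sub_one_mul_sub_le hγ hρ (mem_Ioi.1 hs).le]
    _ = ENNReal.ofReal (ρ ^ (1 - γ)) := by
        rw [← ofReal_integral_eq_lintegral_ofReal hinteg (.of_forall fun s => by positivity),
          integral_const_mul, integral_exp_mul_Ioi (by linarith), neg_div_neg_eq, ← mul_div_assoc,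
          ← Real.exp_add, show 1 - γ = -(γ - 1) by ring, Real.rpow_neg hρ.le]
        simp

theorem setLIntegral_exp_rpow_sub_rpow_le_sub (hγ : 0 ≤ γ) {ρ : ℝ} (hρ : 0 ≤ ρ) (b : ℝ) :
    ∫⁻ s in Ioc ρ b, ENNReal.ofReal (Real.exp (ρ ^ γ - s ^ γ)) ≤ ENNReal.ofReal (b - ρ) := by
  rw [← Real.volume_Ioc, ← setLIntegral_one]
  exact setLIntegral_mono' measurableSet_Ioc fun s hs =>
    ENNReal.ofReal_le_one.2 (exp_rpow_sub_rpow_le_one hγ hρ hs.1.le)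

theorem exists_setLIntegral_exp_rpow_sub_rpow_le (hβ : 0 < β) (hγ : 1 ≤ γ) :
    ∃ C : ℝ, 0 < C ∧ ∀ ρ : ℝ, 0 < ρ →
      ∫⁻ s in Ioc ρ (ρ / β), ENNReal.ofReal (Real.exp (ρ ^ γ - s ^ γ)) ≤
        ENNReal.ofReal (C * (1 + ρ) ^ (1 - γ)) := by
  refine ⟨2 ^ (γ - 1) * (1 + 1 / β), by positivity, fun ρ hρ => ?_⟩
  have hcompare {x : ℝ} (_ : 0 < x) (h : 1 + ρ ≤ 2 * x) :
      x ^ (1 - γ) ≤ 2 ^ (γ - 1) * (1 + ρ) ^ (1 - γ) := by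
    rw [show (2 : ℝ) ^ (γ - 1) = (1 / 2) ^ (1 - γ) by
        rw [one_div, Real.inv_rpow (by norm_num), ← Real.rpow_neg (by norm_num), neg_sub],
      ← Real.mul_rpow (by norm_num) (by positivity)]
    exact Real.rpow_le_rpow_of_nonpos (by positivity) (by linarith) (by linarith)
  have hpos : 0 < (2 : ℝ) ^ (γ - 1) * (1 + ρ) ^ (1 - γ) := by positivity
  have hβ_inv : 0 < 1 / β := by positivity
  rcases le_total 1 ρ with hρ₁ | hρ₁
  · refine (lintegral_mono_set Ioc_subset_Ioi_self).trans
      ((setLIntegral_exp_rpow_sub_rpow_le_rpow hγ hρ).trans (ENNReal.ofReal_le_ofReal ?_))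
    nlinarith [hcompare hρ (by linarith)]
  · refine (setLIntegral_exp_rpow_sub_rpow_le_sub (by linarith) hρ.le _).trans
      (ENNReal.ofReal_le_ofReal ?_)
    have hone := hcompare one_pos (by linarith)
    rw [Real.one_rpow] at hone
    have : ρ / β ≤ 1 / β := by gcongr
    nlinarith

theorem exp_mul_le_of_le_rpow_mul_rpow (hβ : β ∈ Ioo 0 1) (hγ : 1 ≤ γ) {e lam : ℝ} (he : 0 ≤ e)
    (hlam₀ : 0 ≤ lam) {ρ s : ℝ} (hρ : 0 < ρ) (hs : s ∈ Ioc ρ (ρ / β)) {C Q X : ℝ≥0∞}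
    (hX : X ≤ C * ENNReal.ofReal ((1 + s) ^ e) * Q ^ lam) :
    ENNReal.ofReal (Real.exp (ρ ^ γ - s ^ γ)) * X ≤
      C * ENNReal.ofReal ((1 / β * (1 + ρ)) ^ e) *
        (ENNReal.ofReal (Real.exp (ρ ^ γ - s ^ γ)) ^ (1 - lam) * Q ^ lam) := by
  set E := ENNReal.ofReal (Real.exp (ρ ^ γ - s ^ γ))
  have hs₀ : 0 < s := hρ.trans hs.1
  have hE_one : E ≤ 1 := ENNReal.ofReal_le_one.2
    (exp_rpow_sub_rpow_le_one (by linarith) hρ.le hs.1.le)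
  have hE : E ≤ E ^ (1 - lam) := by
    simpa only [ENNReal.rpow_one] using
      ENNReal.rpow_le_rpow_of_exponent_ge hE_one (by linarith : 1 - lam ≤ 1)
  have hs_le : 1 + s ≤ 1 / β * (1 + ρ) := by
    have : 1 ≤ 1 / β := (one_le_div hβ.1).2 hβ.2.le
    linarith [hs.2, show ρ / β = 1 / β * ρ by ring]
  calc E * X ≤ E ^ (1 - lam) * (C * ENNReal.ofReal ((1 + s) ^ e) * Q ^ lam) :=
        mul_le_mul' hE hX
    _ ≤ E ^ (1 - lam) * (C * ENNReal.ofReal ((1 / β * (1 + ρ)) ^ e) * Q ^ lam) := by gcongr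
    _ = _ := by ring

theorem exists_expAverage_le_rpow (hβ : β ∈ Ioo 0 1) (hγ : 1 ≤ γ) {e lam : ℝ} (he : 0 ≤ e)
    (hlam₀ : 0 ≤ lam) (hlam₁ : lam ≤ 1) {Q X : ℝ → ℝ≥0∞} (hQ : Measurable Q)
    (hQ_int : ∫⁻ s, Q s < ⊤) {C : ℝ≥0∞} (hC : C ≠ ⊤)
    (hX : ∀ s, 0 < s → X s ≤ C * ENNReal.ofReal ((1 + s) ^ e) * Q s ^ lam) :
    ∃ D : ℝ≥0∞, D ≠ ⊤ ∧ ∀ ρ : ℝ, 0 < ρ →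
      expAverage β γ X ρ ≤ D * ENNReal.ofReal ((1 + ρ) ^ (e - (γ - 1) * (1 - lam))) := by
  have hβ₀ := hβ.1
  obtain ⟨A, hA, hweight⟩ := exists_setLIntegral_exp_rpow_sub_rpow_le hβ₀ hγ
  refine ⟨C * ENNReal.ofReal ((1 / β) ^ e * A ^ (1 - lam)) * (∫⁻ s, Q s) ^ lam,
    ENNReal.mul_ne_top (by finiteness) (ENNReal.rpow_lt_top_of_nonneg hlam₀ hQ_int.ne).ne,
    fun ρ hρ => ?_⟩
  let E (s : ℝ) : ℝ≥0∞ := ENNReal.ofReal (Real.exp (ρ ^ γ - s ^ γ))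
  have hHolder : ∫⁻ s in Ioc ρ (ρ / β), E s ^ (1 - lam) * Q s ^ lam ≤
      ENNReal.ofReal (A * (1 + ρ) ^ (1 - γ)) ^ (1 - lam) * (∫⁻ s, Q s) ^ lam := by
    refine (ENNReal.lintegral_mul_norm_pow_le (by fun_prop) (by fun_prop)
      (sub_nonneg.2 hlam₁) hlam₀ (by ring)).trans ?_
    exact mul_le_mul' (ENNReal.rpow_le_rpow (hweight ρ hρ) (sub_nonneg.2 hlam₁))
      (ENNReal.rpow_le_rpow (setLIntegral_le_lintegral _ _) hlam₀)
  calc expAverage β γ X ρ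
      ≤ C * ENNReal.ofReal ((1 / β * (1 + ρ)) ^ e) *
          ∫⁻ s in Ioc ρ (ρ / β), E s ^ (1 - lam) * Q s ^ lam := by
        rw [← lintegral_const_mul' _ _ (by finiteness)]
        exact setLIntegral_mono' measurableSet_Ioc fun s hs =>
          exp_mul_le_of_le_rpow_mul_rpow hβ hγ he hlam₀ hρ hs (hX s (hρ.trans hs.1))
    _ ≤ C * ENNReal.ofReal ((1 / β * (1 + ρ)) ^ e) *
          (ENNReal.ofReal (A * (1 + ρ) ^ (1 - γ)) ^ (1 - lam) * (∫⁻ s, Q s) ^ lam) := by gcongr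
    _ = _ := by
        rw [ENNReal.ofReal_rpow_of_pos (by positivity),
          Real.mul_rpow (by positivity) (by positivity), Real.mul_rpow hA.le (by positivity),
          ← Real.rpow_mul (by positivity),
          show e - (γ - 1) * (1 - lam) = e + (1 - γ) * (1 - lam) by ring,
          Real.rpow_add (by positivity)]
        simp only [ENNReal.ofReal_mul' (Real.rpow_nonneg (add_nonneg zero_le_one hρ.le) _),
          ENNReal.ofReal_mul' (Real.rpow_nonneg hA.le _)]
        ring

theorem lintegral_expAverage_rpow_lt_top_of_le_rpow (hβ : β ∈ Ioo 0 1) (hγ : 1 ≤ γ) {p e lam : ℝ}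
    (hp : 0 < p) (he : 0 ≤ e) (hlam₀ : 0 ≤ lam) (hlam₁ : lam ≤ 1)
    (hdecay : 1 / p < (γ - 1) * (1 - lam) - e) {Q X : ℝ → ℝ≥0∞} (hQ : Measurable Q)
    (hQ_int : ∫⁻ s, Q s < ⊤) {C : ℝ≥0∞} (hC : C ≠ ⊤)
    (hX : ∀ s, 0 < s → X s ≤ C * ENNReal.ofReal ((1 + s) ^ e) * Q s ^ lam) :
    ∫⁻ ρ in Ioi 0, expAverage β γ X ρ ^ p < ⊤ := by
  obtain ⟨D, hD, hle⟩ := exists_expAverage_le_rpow hβ hγ he hlam₀ hlam₁ hQ hQ_int hC hX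
  set m := e - (γ - 1) * (1 - lam)
  have hinteg : Integrable fun ρ : ℝ => (1 + ‖ρ‖) ^ (-(-m * p)) :=
    integrable_one_add_norm (by
      rw [Module.finrank_self, Nat.cast_one, ← div_lt_iff₀ hp]
      linarith)
  have hpow (ρ : ℝ) (hρ : ρ ∈ Ioi 0) :
      expAverage β γ X ρ ^ p ≤ D ^ p * ENNReal.ofReal ((1 + ‖ρ‖) ^ (-(-m * p))) := by
    have hρ₀ : 0 < ρ := hρ
    refine (ENNReal.rpow_le_rpow (hle ρ hρ) hp.le).trans_eq ?_
    rw [ENNReal.mul_rpow_of_nonneg _ _ hp.le, ENNReal.ofReal_rpow_of_pos (by positivity),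
      ← Real.rpow_mul (by positivity), Real.norm_of_nonneg hρ₀.le, neg_mul, neg_neg]
  calc ∫⁻ ρ in Ioi 0, expAverage β γ X ρ ^ p
      ≤ ∫⁻ ρ in Ioi 0, D ^ p * ENNReal.ofReal ((1 + ‖ρ‖) ^ (-(-m * p))) :=
        setLIntegral_mono' measurableSet_Ioi hpow
    _ ≤ D ^ p * ∫⁻ ρ : ℝ, ENNReal.ofReal ((1 + ‖ρ‖) ^ (-(-m * p))) := by
        rw [lintegral_const_mul' _ _ (by finiteness)]
        gcongr
        exact Measure.restrict_le_self
    _ < ⊤ := ENNReal.mul_lt_top (by finiteness) hinteg.lintegral_lt_top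

end ExpAverage

/-! ### Averages of weighted radial convolutions -/

/-- The part `σ ≤ 1` of the weighted radial convolution of `F`. -/
noncomputable def lowConv (q δ : ℝ) (F : ℝ → ℝ≥0∞) (s : ℝ) : ℝ≥0∞ :=
  ∫⁻ τ, ∫⁻ σ, F τ * F σ * lowKernel q δ (τ - s) σ

/-- The part `1 < σ` of the weighted radial convolution of `F`. -/
noncomputable def highConv (δ χ : ℝ) (F : ℝ → ℝ≥0∞) (s : ℝ) : ℝ≥0∞ :=
  ∫⁻ τ, ∫⁻ σ, F τ * F σ * highKernel δ χ s τ σ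

/-- The profile `f` multiplied by `radialWeight a` on `(0, ∞)`, and zero elsewhere. -/
noncomputable def weightedProfile (a : ℝ) (f : ℝ → ℝ≥0∞) : ℝ → ℝ≥0∞ :=
  (Ioi 0).indicator fun τ => radialWeight a τ * f τ

theorem measurable_weightedProfile (a : ℝ) {f : ℝ → ℝ≥0∞} (hf : Measurable f) :
    Measurable (weightedProfile a f) :=
  Measurable.indicator (by fun_prop) measurableSet_Ioi

theorem lintegral_weightedProfile_rpow (a : ℝ) (f : ℝ → ℝ≥0∞) {p : ℝ} (hp : 0 < p) :
    ∫⁻ τ, weightedProfile a f τ ^ p = ∫⁻ τ in Ioi 0, (radialWeight a τ * f τ) ^ p := by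
  rw [← lintegral_indicator measurableSet_Ioi]
  refine lintegral_congr fun τ => ?_
  by_cases hτ : τ ∈ Ioi 0
  · rw [weightedProfile, indicator_of_mem hτ, indicator_of_mem hτ]
  · rw [weightedProfile, indicator_of_notMem hτ, indicator_of_notMem hτ,
      ENNReal.zero_rpow_of_pos hp]

theorem exists_radialWeight_mul_radialConv_le {q δ : ℝ} (hδ : 0 ≤ δ) :
    ∃ C : ℝ≥0∞, C ≠ ⊤ ∧ ∀ f : ℝ → ℝ≥0∞, Measurable f → ∀ s : ℝ,
      radialWeight (δ + q + 1) s * radialConv q f s ≤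
        C * (lowConv q δ (weightedProfile (δ + q + 1) f) s +
          highConv δ (max (-q) 0) (weightedProfile (δ + q + 1) f) s) := by
  obtain ⟨C, hC, hkernel⟩ := exists_radialWeight_mul_triangleKernel_le (q := q) hδ
  refine ⟨C, hC, fun f hf s => ?_⟩
  set w := radialWeight (δ + q + 1)
  set F := weightedProfile (δ + q + 1) f
  have hF : Measurable F := measurable_weightedProfile _ hf
  have hw : w s ≠ ⊤ := ENNReal.ofReal_ne_top
  have hpointwise (τ σ : ℝ) (hστ : σ ≤ τ) : w s * (f τ * f σ * triangleKernel q s τ σ) ≤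
      C * (F τ * F σ * (lowKernel q δ (τ - s) σ + highKernel δ (max (-q) 0) s τ σ)) := by
    rcases le_or_gt σ 0 with hσ | hσ
    · simp [triangleKernel_of_nonpos q s τ hσ]
    · have hFσ : F σ = w σ * f σ := indicator_of_mem (mem_Ioi.2 hσ) _
      have hFτ : F τ = w τ * f τ := indicator_of_mem (mem_Ioi.2 (hσ.trans_le hστ)) _
      rw [hFσ, hFτ]
      calc w s * (f τ * f σ * triangleKernel q s τ σ)
          = f τ * f σ * (w s * triangleKernel q s τ σ) := by ring
        _ ≤ f τ * f σ * (C * (w τ * w σ *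
              (lowKernel q δ (τ - s) σ + highKernel δ (max (-q) 0) s τ σ))) := by
            exact mul_le_mul_right (hkernel s τ σ hσ hστ) _
        _ = _ := by ring
  have hlow (τ : ℝ) : Measurable fun σ => F τ * F σ * lowKernel q δ (τ - s) σ := by fun_prop
  have hlow_int : Measurable fun τ => ∫⁻ σ, F τ * F σ * lowKernel q δ (τ - s) σ :=
    Measurable.lintegral_prod_right (f := fun τ σ => F τ * F σ * lowKernel q δ (τ - s) σ)
      (by unfold Function.uncurry; fun_prop)
  rw [radialConv, lowConv, highConv, ← lintegral_add_left hlow_int, ← lintegral_const_mul' _ _ hw,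
    ← lintegral_const_mul' _ _ hC]
  refine lintegral_mono fun τ => ?_
  rw [← lintegral_const_mul' _ _ hw, ← lintegral_add_left (hlow τ), ← lintegral_const_mul' _ _ hC]
  refine (setLIntegral_mono' measurableSet_Iic fun σ hσ => ?_).trans (setLIntegral_le_lintegral _ _)
  exact (hpointwise τ σ hσ).trans_eq (by ring)

section LowConv

variable {p q δ : ℝ} {F : ℝ → ℝ≥0∞}

theorem lowConv_eq_lintegral_mul_sub (q δ : ℝ) (hF : Measurable F) (s : ℝ) :
    lowConv q δ F s = ∫⁻ τ, F τ * ∫⁻ σ, F σ * lowKernel q δ (τ - s) σ := by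
  refine lintegral_congr fun τ => ?_
  rw [← lintegral_const_mul _ (by fun_prop)]
  simp only [mul_assoc]

theorem measurable_lintegral_mul_lowKernel (q δ : ℝ) (hF : Measurable F) :
    Measurable fun x => ∫⁻ σ, F σ * lowKernel q δ x σ :=
  Measurable.lintegral_prod_right (f := fun x σ => F σ * lowKernel q δ x σ)
    (by unfold Function.uncurry; fun_prop)

theorem measurable_lowConv (q δ : ℝ) (hF : Measurable F) : Measurable (lowConv q δ F) := by
  have := measurable_lintegral_mul_lowKernel q δ hF
  rw [funext (lowConv_eq_lintegral_mul_sub q δ hF)]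
  exact Measurable.lintegral_prod_right
    (f := fun s τ => F τ * ∫⁻ σ, F σ * lowKernel q δ (τ - s) σ)
    (by unfold Function.uncurry; fun_prop)

theorem lintegral_lowKernel (hq : -1 < q) (δ σ : ℝ) :
    ∫⁻ x, lowKernel q δ x σ = 2 * ENNReal.ofReal (2 ^ (q + 1) / (q + 1)) *
      (Ioc 0 1).indicator (fun σ => ENNReal.ofReal (σ ^ (q + 1 - δ))) σ := by
  unfold lowKernel
  by_cases hσ : σ ∈ Ioc (0 : ℝ) 1
  swap
  · simp [indicator_of_notMem hσ]
  have hσ₀ : 0 < σ := hσ.1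
  have hC : 0 ≤ (2 : ℝ) ^ (q + 1) / (q + 1) := div_nonneg (by positivity) (by linarith)
  rw [lintegral_const_mul _ (by fun_prop), lintegral_add_left (by fun_prop),
    lintegral_add_left_eq_self (truncatedRpow q σ), lintegral_sub_left_eq_self (truncatedRpow q σ),
    lintegral_truncatedRpow hq hσ₀.le, indicator_of_mem hσ, indicator_of_mem hσ,
    Real.mul_rpow zero_le_two hσ₀.le, mul_div_right_comm, ENNReal.ofReal_mul hC,
    show q + 1 - δ = -δ + (q + 1) by ring, Real.rpow_add hσ₀ (-δ),
    ENNReal.ofReal_mul (by positivity)]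
  ring

theorem lintegral_lintegral_mul_lowKernel_lt_top (hp : 1 < p) (hq : -1 < q)
    (hqδ : -(1 - 1 / p) < q + 1 - δ) (hF : Measurable F) (hFp : ∫⁻ τ, F τ ^ p < ⊤) :
    ∫⁻ x, ∫⁻ σ, F σ * lowKernel q δ x σ < ⊤ := by
  have hpp' := Real.HolderConjugate.conjExponent hp
  have hp' : 0 < p.conjExponent := hpp'.symm.pos
  have hp'_inv : p.conjExponent * (1 - 1 / p) = 1 := by
    rw [one_div, hpp'.one_sub_inv, mul_inv_cancel₀ hp'.ne']
  let W : ℝ → ℝ≥0∞ := (Ioc 0 1).indicator fun σ => ENNReal.ofReal (σ ^ (q + 1 - δ))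
  have hW : Measurable W := Measurable.indicator (by fun_prop) measurableSet_Ioc
  have hpow (σ : ℝ) : W σ ^ p.conjExponent = (Ioc (0 : ℝ) 1).indicator
      (fun σ => ENNReal.ofReal (σ ^ ((q + 1 - δ) * p.conjExponent))) σ := by
    by_cases hσ : σ ∈ Ioc (0 : ℝ) 1
    · have hσ₀ : 0 < σ := hσ.1
      simp only [W, indicator_of_mem hσ]
      rw [ENNReal.ofReal_rpow_of_pos (by positivity), ← Real.rpow_mul hσ₀.le]
    · simp only [W, indicator_of_notMem hσ, ENNReal.zero_rpow_of_pos hp']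
  have hWp : ∫⁻ σ, W σ ^ p.conjExponent < ⊤ := by
    rw [lintegral_congr hpow, lintegral_indicator measurableSet_Ioc]
    exact ((intervalIntegrable_iff_integrableOn_Ioc_of_le zero_le_one).1
      (intervalIntegral.intervalIntegrable_rpow' (by nlinarith))).lintegral_lt_top
  rw [lintegral_lintegral_swap (f := fun x σ => F σ * lowKernel q δ x σ)
    (by unfold Function.uncurry; fun_prop)]
  have hinner (σ : ℝ) : ∫⁻ x, F σ * lowKernel q δ x σ =
      2 * ENNReal.ofReal (2 ^ (q + 1) / (q + 1)) * (F σ * W σ) := by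
    rw [lintegral_const_mul _ (by fun_prop), lintegral_lowKernel hq, mul_left_comm]
  rw [lintegral_congr hinner, lintegral_const_mul _ (by fun_prop)]
  exact ENNReal.mul_lt_top (by finiteness)
    (lintegral_mul_lt_top_of_holderConjugate hpp' hF hW hFp hWp)

theorem lintegral_lowConv_rpow_lt_top (hp : 1 < p) (hq : -1 < q)
    (hqδ : -(1 - 1 / p) < q + 1 - δ) (hF : Measurable F) (hFp : ∫⁻ τ, F τ ^ p < ⊤) :
    ∫⁻ s, lowConv q δ F s ^ p < ⊤ := by
  simp only [lowConv_eq_lintegral_mul_sub q δ hF]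
  refine (lintegral_rpow_lintegral_mul_sub_le hp.le hF
    (measurable_lintegral_mul_lowKernel q δ hF)).trans_lt ?_
  have hfin := lintegral_lintegral_mul_lowKernel_lt_top hp hq hqδ hF hFp
  exact ENNReal.mul_lt_top (ENNReal.rpow_lt_top_of_nonneg (by linarith) hfin.ne) hFp

end LowConv

section HighConv

variable {p δ δ₁ χ : ℝ} {F : ℝ → ℝ≥0∞}

theorem highKernel_le_dampedPairKernel (hδ : 0 ≤ δ) (χ s τ σ : ℝ) :
    highKernel δ χ s τ σ ≤ dampedPairKernel χ s τ σ := by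
  unfold highKernel
  split_ifs with h
  · refine mul_le_of_le_one_left' (ENNReal.ofReal_le_one.2 (mul_le_one₀ ?_ (by positivity) ?_))
    · exact Real.rpow_le_one_of_one_le_of_nonpos h.1.le (by linarith)
    · exact Real.exp_le_one_iff.2 (by linarith [h.2.2])
  · exact zero_le

/-- `x ↦ x ^ (-δ)` on `(1, ∞)`, extended by zero: the decay of `highKernel` in the smaller side. -/
noncomputable def tailRpow (δ : ℝ) : ℝ → ℝ≥0∞ :=
  (Ioi 1).indicator fun x => ENNReal.ofReal (x ^ (-δ))

@[fun_prop]
theorem measurable_tailRpow (δ : ℝ) : Measurable (tailRpow δ) :=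
  Measurable.indicator (by fun_prop) measurableSet_Ioi

theorem lintegral_tailRpow_lt_top (hδ : 1 < δ) : ∫⁻ x, tailRpow δ x < ⊤ := by
  unfold tailRpow
  rw [lintegral_indicator measurableSet_Ioi]
  exact (integrableOn_Ioi_rpow_of_lt (by linarith) one_pos).lintegral_lt_top

theorem tailRpow_rpow_le_rpow {r t : ℝ} (hr : 0 < r) (h : δ * t ≤ δ₁ * r) (x : ℝ) :
    tailRpow δ₁ x ^ r ≤ tailRpow δ x ^ t := by
  unfold tailRpow
  by_cases hx : x ∈ Ioi 1
  · have hx₁ : 1 < x := hx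
    rw [indicator_of_mem hx, indicator_of_mem hx, ENNReal.ofReal_rpow_of_pos (by positivity),
      ENNReal.ofReal_rpow_of_pos (by positivity), ← Real.rpow_mul (by positivity),
      ← Real.rpow_mul (by positivity)]
    exact ENNReal.ofReal_le_ofReal (Real.rpow_le_rpow_of_exponent_le hx₁.le (by linarith))
  · rw [indicator_of_notMem hx, ENNReal.zero_rpow_of_pos hr]
    exact zero_le

theorem lintegral_mul_tailRpow_rpow_lt_top {p' : ℝ} (hpp' : p.HolderConjugate p') (hp : 2 ≤ p)
    (hδ : 3 / 2 * (1 - 2 / p) ≤ δ) (hF : Measurable F) (hFp : ∫⁻ τ, F τ ^ p < ⊤) :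
    ∫⁻ σ, (F σ * tailRpow δ σ) ^ p' < ⊤ := by
  have hp₀ := hpp'.pos
  have hp' := hpp'.symm.pos
  have hle : p' ≤ p := by
    have := hpp'.mul_eq_add
    nlinarith [hpp'.symm.lt]
  have hratio : 1 - p' / p = p' * (1 - 2 / p) := by
    have := hpp'.mul_eq_add
    field_simp
    linarith
  have hθ : p' / p ≤ 1 := (div_le_one hp₀).2 hle
  have hbound (σ : ℝ) :
      (F σ * tailRpow δ σ) ^ p' ≤ (F σ ^ p) ^ (p' / p) * tailRpow (3 / 2) σ ^ (1 - p' / p) := by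
    rw [ENNReal.mul_rpow_of_nonneg _ _ hp'.le, ← ENNReal.rpow_mul, mul_div_cancel₀ _ hp₀.ne']
    gcongr
    exact tailRpow_rpow_le_rpow hp' (by rw [hratio]; nlinarith) σ
  exact (lintegral_mono hbound).trans_lt
    (lintegral_rpow_mul_rpow_lt_top (by fun_prop) (by fun_prop) (by positivity) hθ hFp
      (lintegral_tailRpow_lt_top (by norm_num)))

theorem exists_highKernel_le_tailRpow_mul (hδ : δ ≤ δ₁) (χ : ℝ) :
    ∃ A : ℝ≥0∞, A ≠ ⊤ ∧ ∀ s τ σ : ℝ, 0 < s → highKernel δ χ s τ σ ≤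
      A * ENNReal.ofReal ((1 + s) ^ (δ₁ - δ)) * (tailRpow δ₁ σ * dampedPairKernel χ s τ σ) := by
  obtain ⟨A, hA, hexp⟩ := exists_one_add_rpow_mul_exp_neg_le (δ₁ - δ) (c := 1 / 4) (by norm_num)
  refine ⟨ENNReal.ofReal A, ENNReal.ofReal_ne_top, fun s τ σ hs => ?_⟩
  unfold highKernel
  split_ifs with h
  swap
  · exact zero_le
  obtain ⟨hσ, hστ, hu⟩ := h
  have hσ₀ : 0 < σ := by linarith
  rw [tailRpow, indicator_of_mem (mem_Ioi.2 hσ), ← mul_assoc, ← ENNReal.ofReal_mul hA.le,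
    ← ENNReal.ofReal_mul (by positivity)]
  refine mul_le_mul_left (ENNReal.ofReal_le_ofReal ?_) _
  set u := τ + σ - s
  have hσ_pow : σ ^ (δ₁ - δ) ≤ (1 + s) ^ (δ₁ - δ) * (1 + u) ^ (δ₁ - δ) := by
    rw [← Real.mul_rpow (by positivity) (by positivity)]
    exact Real.rpow_le_rpow hσ₀.le (by nlinarith) (by linarith)
  calc σ ^ (-δ) * Real.exp (-u / 4)
      = σ ^ (δ₁ - δ) * Real.exp (-u / 4) * σ ^ (-δ₁) := by
        rw [show -δ = δ₁ - δ + -δ₁ by ring, Real.rpow_add hσ₀]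
        ring
    _ ≤ (1 + s) ^ (δ₁ - δ) * (1 + u) ^ (δ₁ - δ) * Real.exp (-u / 4) * σ ^ (-δ₁) := by gcongr
    _ = (1 + s) ^ (δ₁ - δ) * ((1 + u) ^ (δ₁ - δ) * Real.exp (-(1 / 4 * u))) * σ ^ (-δ₁) := by
        ring_nf
    _ ≤ (1 + s) ^ (δ₁ - δ) * A * σ ^ (-δ₁) := by
        gcongr
        exact hexp u hu.le
    _ = A * (1 + s) ^ (δ₁ - δ) * σ ^ (-δ₁) := by ring

theorem exists_highConv_le_one_add_rpow (hp : 2 ≤ p) (hχ : χ < 1) (hδ : δ ≤ δ₁)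
    (hδ₁ : 3 / 2 * (1 - 2 / p) ≤ δ₁) (hF : Measurable F) (hFp : ∫⁻ τ, F τ ^ p < ⊤) :
    ∃ C : ℝ≥0∞, C ≠ ⊤ ∧ ∀ s : ℝ, 0 < s →
      highConv δ χ F s ≤ C * ENNReal.ofReal ((1 + s) ^ (δ₁ - δ)) := by
  have hpp' := Real.HolderConjugate.conjExponent (by linarith : 1 < p)
  have hp' := hpp'.symm.pos
  obtain ⟨M, hM, -, hM_fst, hM_snd⟩ :=
    exists_lintegral_dampedPairKernel_rpow_le (χ := χ) le_rfl (by linarith)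
  obtain ⟨A, hA, hkernel⟩ := exists_highKernel_le_tailRpow_mul hδ χ
  let G (σ : ℝ) : ℝ≥0∞ := F σ * tailRpow δ₁ σ
  have hG : Measurable G := by fun_prop
  have hGp : ∫⁻ σ, G σ ^ p.conjExponent < ⊤ :=
    lintegral_mul_tailRpow_rpow_lt_top hpp' hp hδ₁ hF hFp
  let B : ℝ≥0∞ := (M * ∫⁻ τ, F τ ^ p) ^ (1 / p) *
    (M * ∫⁻ σ, G σ ^ p.conjExponent) ^ (1 / p.conjExponent)
  have hB : B ≠ ⊤ := by finiteness
  refine ⟨A * B, by finiteness, fun s hs => ?_⟩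
  have hc : A * ENNReal.ofReal ((1 + s) ^ (δ₁ - δ)) ≠ ⊤ := by finiteness
  calc highConv δ χ F s
      ≤ ∫⁻ τ, ∫⁻ σ, A * ENNReal.ofReal ((1 + s) ^ (δ₁ - δ)) *
          (F τ * G σ * dampedPairKernel χ s τ σ) := by
        refine lintegral_mono fun τ => lintegral_mono fun σ => ?_
        exact (mul_le_mul_right (hkernel s τ σ hs) _).trans_eq (by ring)
    _ = A * ENNReal.ofReal ((1 + s) ^ (δ₁ - δ)) *
          ∫⁻ z : ℝ × ℝ, F z.1 * G z.2 * dampedPairKernel χ s z.1 z.2 := by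
        rw [Measure.volume_eq_prod, lintegral_prod _ (by fun_prop), ← lintegral_const_mul' _ _ hc]
        exact lintegral_congr fun τ => lintegral_const_mul' _ _ hc
    _ ≤ A * ENNReal.ofReal ((1 + s) ^ (δ₁ - δ)) * B :=
        mul_le_mul_right (lintegral_prod_mul_mul_le_of_marginals hpp'
          (by unfold Function.uncurry; fun_prop) (by simpa only [ENNReal.rpow_one] using hM_snd s)
          (by simpa only [ENNReal.rpow_one] using hM_fst s) hF hG) _
    _ = A * B * ENNReal.ofReal ((1 + s) ^ (δ₁ - δ)) := by ring

theorem exists_highConv_le_rpow {b : ℝ} (hp : 1 ≤ p) (hb : 1 ≤ b) (hpb : 2 * (1 - 1 / p) ≤ 1 / b)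
    (hχb : χ * b < 1) (hδ : 0 ≤ δ) (hF : Measurable F) (hFp : ∫⁻ τ, F τ ^ p < ⊤) :
    ∃ Q : ℝ → ℝ≥0∞, Measurable Q ∧ ∫⁻ s, Q s < ⊤ ∧ ∃ C : ℝ≥0∞, C ≠ ⊤ ∧
      ∀ s, highConv δ χ F s ≤ C * Q s ^ (1 / b - 2 * (1 - 1 / p)) := by
  have hθ : 0 ≤ 1 - 1 / p := sub_nonneg.2 ((div_le_one (by linarith)).2 hp)
  have hω : 0 ≤ 1 - 1 / b := sub_nonneg.2 ((div_le_one (by linarith)).2 hb)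
  obtain ⟨M, hM, hM_out, hM_fst, hM_snd⟩ := exists_lintegral_dampedPairKernel_rpow_le hb hχb
  set I := ∫⁻ τ, F τ ^ p with hI
  let Q (s : ℝ) : ℝ≥0∞ := ∫⁻ z : ℝ × ℝ, F z.1 ^ p * F z.2 ^ p * dampedPairKernel χ s z.1 z.2 ^ b
  have hQ_int : ∫⁻ s, Q s ≤ M * (I * I) := by
    rw [lintegral_lintegral_swap (f := fun s (z : ℝ × ℝ) =>
      F z.1 ^ p * F z.2 ^ p * dampedPairKernel χ s z.1 z.2 ^ b)
      (by unfold Function.uncurry; fun_prop)]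
    calc ∫⁻ z : ℝ × ℝ, ∫⁻ s, F z.1 ^ p * F z.2 ^ p * dampedPairKernel χ s z.1 z.2 ^ b
        ≤ ∫⁻ z : ℝ × ℝ, M * (F z.1 ^ p * F z.2 ^ p) := by
          refine lintegral_mono fun z => ?_
          rw [lintegral_const_mul _ (by fun_prop), mul_comm M]
          exact mul_le_mul_right (hM_out z.1 z.2) _
      _ = M * (I * I) := by
          rw [lintegral_const_mul _ (by fun_prop), Measure.volume_eq_prod,
            lintegral_prod_mul (f := fun τ => F τ ^ p) (g := fun σ => F σ ^ p) (by fun_prop)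
              (by fun_prop)]
  refine ⟨Q, Measurable.lintegral_prod_right (f := fun s (z : ℝ × ℝ) =>
    F z.1 ^ p * F z.2 ^ p * dampedPairKernel χ s z.1 z.2 ^ b)
    (by unfold Function.uncurry; fun_prop), hQ_int.trans_lt (by finiteness),
    (M * I) ^ (1 - 1 / p) * (M * I) ^ (1 - 1 / p) * (I * I) ^ (1 - 1 / b),
    by finiteness, fun s => ?_⟩
  calc highConv δ χ F s
      ≤ ∫⁻ τ, ∫⁻ σ, F τ * F σ * dampedPairKernel χ s τ σ :=
        lintegral_mono fun τ => lintegral_mono fun σ =>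
          mul_le_mul_right (highKernel_le_dampedPairKernel hδ χ s τ σ) _
    _ = ∫⁻ z : ℝ × ℝ, F z.1 * F z.2 * dampedPairKernel χ s z.1 z.2 := by
        rw [Measure.volume_eq_prod, lintegral_prod _ (by fun_prop)]
    _ ≤ _ := lintegral_prod_mul_mul_le_of_rpow_marginals hp hb hpb
        (by unfold Function.uncurry; fun_prop) (hM_snd s) (hM_fst s) hF hF
    _ = _ := by
        simp only [Q, Measure.volume_eq_prod, hI]
        ring

theorem exists_holder_exponent {n : ℕ} (hn : 1 ≤ n) {R : ℝ} (hp : 1 < p) (hp₂ : p < 2)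
    (hδ : 0 < δ) (hR₀ : 0 ≤ R) (hR : δ - n / 2 - 1 + 2 / p ≤ R) :
    ∃ b : ℝ, 1 ≤ b ∧ 2 * (1 - 1 / p) ≤ 1 / b ∧ max (-(((n : ℝ) - 2) / 2)) 0 * b < 1 ∧
      1 / b - 2 * (1 - 1 / p) ≤ R := by
  suffices h : ∃ ω : ℝ, ω ≤ 1 ∧ 2 * (1 - 1 / p) ≤ ω ∧ max (-(((n : ℝ) - 2) / 2)) 0 < ω ∧
      ω - 2 * (1 - 1 / p) ≤ R by
    obtain ⟨ω, hω₁, hpω, hχω, hωR⟩ := h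
    have hω₀ : 0 < ω := (le_max_right _ _).trans_lt hχω
    refine ⟨1 / ω, (one_le_div hω₀).2 hω₁, ?_, ?_, ?_⟩
    · rwa [one_div_one_div]
    · rwa [mul_one_div, div_lt_one hω₀]
    · rwa [one_div_one_div]
  have hp_inv : 1 / p < 1 := (div_lt_one (by linarith)).2 hp
  have hp_half : 1 / 2 < 1 / p := one_div_lt_one_div_of_lt (by linarith) hp₂
  rw [← mul_one_div (2 : ℝ) p] at hR
  rcases hn.eq_or_lt with rfl | hn₂
  · norm_num only [Nat.cast_one] at hR ⊢
    have : 0 < min δ (1 / 2) := lt_min hδ (by norm_num)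
    refine ⟨max (2 * (1 - 1 / p)) (1 / 2 + min δ (1 / 2)), max_le (by linarith) ?_,
      le_max_left _ _, lt_max_of_lt_right (by norm_num; linarith), ?_⟩
    · linarith [min_le_right δ (1 / 2)]
    · rw [sub_le_iff_le_add]
      exact max_le (by linarith) (by linarith [min_le_left δ (1 / 2)])
  · have hn₂ : (2 : ℝ) ≤ n := by exact_mod_cast hn₂
    have hχ : max (-(((n : ℝ) - 2) / 2)) 0 = 0 := max_eq_right (by linarith)
    exact ⟨2 * (1 - 1 / p), by linarith, le_rfl, by linarith, by linarith⟩

variable {n : ℕ} {γ β R : ℝ}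

theorem lintegral_expAverage_highConv_rpow_lt_top (hn : 1 ≤ n) (hp : 1 < p) (hγ : 1 ≤ γ)
    (hβ : β ∈ Ioo 0 1) (hδ : 0 < δ) (hR₀ : 0 ≤ R)
    (hR : δ - n / 2 - 1 + 2 / p ≤ R) (hγR : 1 / p < (γ - 1) * (1 - R))
    (hγδ : n / 2 + 1 - 1 / p - δ < γ - 1) (hF : Measurable F) (hFp : ∫⁻ τ, F τ ^ p < ⊤) :
    ∫⁻ ρ in Ioi 0, expAverage β γ (highConv δ (max (-(((n : ℝ) - 2) / 2)) 0) F) ρ ^ p < ⊤ := by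
  have hn₁ : (1 : ℝ) ≤ n := by exact_mod_cast hn
  have hp_inv : 0 < 1 / p := by positivity
  have hR₁ : R < 1 := by nlinarith
  rcases le_or_gt 2 p with hp₂ | hp₂
  · set δ₁ := max δ (3 / 2 * (1 - 2 / p))
    have hδδ₁ : δ ≤ δ₁ := le_max_left _ _
    have hχ : max (-(((n : ℝ) - 2) / 2)) 0 < 1 := max_lt (by linarith) one_pos
    obtain ⟨C, hC, hbound⟩ :=
      exists_highConv_le_one_add_rpow hp₂ hχ hδδ₁ (le_max_right _ _) hF hFp
    refine lintegral_expAverage_rpow_lt_top_of_le_rpow hβ hγ (by linarith) (sub_nonneg.2 hδδ₁)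
      le_rfl zero_le_one ?_ (measurable_const (a := (0 : ℝ≥0∞))) (by simp) hC fun s hs => ?_
    · have hδ₁_lt : δ₁ < γ - 1 + δ - 1 / p :=
        max_lt (by nlinarith) (by rw [← mul_one_div (2 : ℝ) p]; linarith)
      linarith
    · simpa using hbound s hs
  · obtain ⟨b, hb, hpb, hχb, hbR⟩ := exists_holder_exponent hn hp hp₂ hδ hR₀ hR
    obtain ⟨Q, hQ, hQ_int, C, hC, hbound⟩ := exists_highConv_le_rpow hp.le hb hpb hχb hδ.le hF hFp
    refine lintegral_expAverage_rpow_lt_top_of_le_rpow hβ hγ (by linarith) le_rfl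
      (sub_nonneg.2 hpb) (by linarith) ?_ hQ hQ_int hC fun s _ => ?_
    · nlinarith
    · simpa using hbound s

end HighConv

theorem lintegral_expAverage_radialWeight_mul_radialConv_rpow_lt_top {n : ℕ} {p γ β δ R : ℝ}
    (hn : 1 ≤ n) (hp : 1 < p) (hγ : 1 ≤ γ) (hβ : β ∈ Ioo 0 1) (hδ : 0 < δ)
    (hδn : -(1 - 1 / p) < n / 2 - δ) (hR₀ : 0 ≤ R) (hR : δ - n / 2 - 1 + 2 / p ≤ R)
    (hγR : 1 / p < (γ - 1) * (1 - R)) (hγδ : n / 2 + 1 - 1 / p - δ < γ - 1)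
    {f : ℝ → ℝ≥0∞} (hf : Measurable f)
    (hfp : ∫⁻ τ in Ioi 0, (radialWeight (δ + n / 2) τ * f τ) ^ p < ⊤) :
    ∫⁻ ρ in Ioi 0, expAverage β γ
      (fun s => radialWeight (δ + n / 2) s * radialConv (((n : ℝ) - 2) / 2) f s) ρ ^ p < ⊤ := by
  set q := ((n : ℝ) - 2) / 2 with hq
  have hn₁ : (1 : ℝ) ≤ n := by exact_mod_cast hn
  have hp₀ : 0 < p := by linarith
  have hexponent : δ + n / 2 = δ + q + 1 := by ring
  rw [hexponent] at hfp ⊢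
  obtain ⟨C, hC, hsplit⟩ := exists_radialWeight_mul_radialConv_le (q := q) hδ.le
  rw [← lintegral_weightedProfile_rpow _ _ hp₀] at hfp
  have hF := measurable_weightedProfile (δ + q + 1) hf
  set F := weightedProfile (δ + q + 1) f
  have hlow := measurable_lowConv q δ hF
  have hbound (ρ : ℝ) :
      expAverage β γ (fun s => radialWeight (δ + q + 1) s * radialConv q f s) ρ ^ p ≤
        C ^ p * (expAverage β γ (lowConv q δ F) ρ +
          expAverage β γ (highConv δ (max (-q) 0) F) ρ) ^ p := by
    rw [← ENNReal.mul_rpow_of_nonneg _ _ hp₀.le]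
    refine ENNReal.rpow_le_rpow ?_ hp₀.le
    unfold expAverage
    rw [← lintegral_add_left (by fun_prop), ← lintegral_const_mul' _ _ hC]
    exact lintegral_mono fun s => (mul_le_mul_right (hsplit f hf s) _).trans_eq (by ring)
  refine (lintegral_mono hbound).trans_lt ?_
  have hlow_int : ∫⁻ ρ in Ioi 0, expAverage β γ (lowConv q δ F) ρ ^ p < ⊤ :=
    lintegral_expAverage_rpow_lt_top hγ hp.le hlow
      (lintegral_lowConv_rpow_lt_top hp (by linarith) (by linarith) hF hfp)
  have hhigh_int := lintegral_expAverage_highConv_rpow_lt_top hn hp hγ hβ hδ hR₀ hR hγR hγδ hF hfp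
  rw [lintegral_const_mul' _ _ (by finiteness)]
  exact ENNReal.mul_lt_top (by finiteness)
    (lintegral_add_rpow_lt_top (measurable_expAverage hlow) hp.le hlow_int hhigh_int)

/-! ### The kernel of the renormalization operator -/

section Leray

variable {d : ℕ}

theorem continuous_toC : Continuous (toC : Ed d → EdC d) := by
  unfold toC
  simp only [WithLp.equiv_symm_apply]
  fun_prop

theorem norm_toC (η : Ed d) : ‖toC η‖ = ‖η‖ := by
  simp [EuclideanSpace.norm_eq, toC]

theorem pairC_eq_inner (η : Ed d) (v : EdC d) : pairC η v = inner ℂ (toC η) v := by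
  simp [pairC, toC, PiLp.inner_apply, mul_comm]

theorem norm_pairC_le (η : Ed d) (v : EdC d) : ‖pairC η v‖ ≤ ‖η‖ * ‖v‖ := by
  rw [pairC_eq_inner, ← norm_toC]
  exact norm_inner_le_norm _ _

theorem lerayC_eq_sub_smul_toC (η : Ed d) (v : EdC d) :
    lerayC η v = v - (pairC η v / ((‖η‖ ^ 2 : ℝ) : ℂ)) • toC η := by
  ext i
  simp [lerayC, toC]

theorem norm_lerayC_le (η : Ed d) (v : EdC d) : ‖lerayC η v‖ ≤ 2 * ‖v‖ := by
  have hproj : ‖(pairC η v / ((‖η‖ ^ 2 : ℝ) : ℂ)) • toC η‖ ≤ ‖v‖ := by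
    rw [norm_smul, norm_toC, norm_div, Complex.norm_real, Real.norm_of_nonneg (by positivity),
      div_mul_eq_mul_div]
    refine div_le_of_le_mul₀ (by positivity) (by positivity) ?_
    calc ‖pairC η v‖ * ‖η‖ ≤ ‖η‖ * ‖v‖ * ‖η‖ := by gcongr; exact norm_pairC_le η v
      _ = ‖v‖ * ‖η‖ ^ 2 := by ring
  rw [lerayC_eq_sub_smul_toC]
  linarith [norm_sub_le v ((pairC η v / ((‖η‖ ^ 2 : ℝ) : ℂ)) • toC η)]

theorem continuous_pairC : Continuous fun z : Ed d × EdC d => pairC z.1 z.2 := by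
  unfold pairC
  fun_prop

theorem measurable_lerayC : Measurable fun z : Ed d × EdC d => lerayC z.1 z.2 := by
  simp only [lerayC_eq_sub_smul_toC]
  have hcoeff : Measurable fun z : Ed d × EdC d => pairC z.1 z.2 / ((‖z.1‖ ^ 2 : ℝ) : ℂ) :=
    continuous_pairC.measurable.div (by fun_prop)
  exact measurable_snd.sub (hcoeff.smul (continuous_toC.measurable.comp measurable_fst))

end Leray

theorem quasiMeasurePreserving_sub_snd {α G : Type*} [MeasurableSpace α] [MeasurableSpace G]
    [AddGroup G] [MeasurableAdd₂ G] [MeasurableNeg G] {μ : Measure α} {ν : Measure G}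
    [SFinite ν] [ν.IsAddLeftInvariant] [ν.IsNegInvariant] {g : α → G} (hg : Measurable g) :
    Measure.QuasiMeasurePreserving (fun z : α × G => g z.1 - z.2) (μ.prod ν) ν := by
  refine QuasiMeasurePreserving.prod_of_right (by fun_prop) (ae_of_all _ fun x => ?_)
  exact (Measure.measurePreserving_sub_left ν (g x)).quasiMeasurePreserving

section Renorm

variable {d : ℕ} {γ : ℝ} {ϑ : Ed d → EdC d}

theorem norm_renormKernelC_le {t : ℝ} (ht : 0 ≤ t) (η x : Ed d) :
    ‖renormKernelC d γ ϑ η t x‖ ≤ 2 * t ^ (-(γ - d - 1)) *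
      (‖η‖ * Real.exp (‖η‖ ^ γ - (t * ‖η‖) ^ γ)) * (‖ϑ x‖ * ‖ϑ (t • η - x)‖) := by
  have hexp : ‖η‖ ^ γ * (1 - t ^ γ) = ‖η‖ ^ γ - (t * ‖η‖) ^ γ := by
    rw [Real.mul_rpow ht (norm_nonneg η)]
    ring
  rw [renormKernelC, norm_smul, norm_smul, Real.norm_of_nonneg (by positivity), hexp]
  calc t ^ (-(γ - d - 1)) * Real.exp (‖η‖ ^ γ - (t * ‖η‖) ^ γ) *
        (‖pairC η (ϑ (t • η - x))‖ * ‖lerayC η (ϑ x)‖)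
      ≤ t ^ (-(γ - d - 1)) * Real.exp (‖η‖ ^ γ - (t * ‖η‖) ^ γ) *
        (‖η‖ * ‖ϑ (t • η - x)‖ * (2 * ‖ϑ x‖)) := by
        gcongr
        · exact norm_pairC_le _ _
        · exact norm_lerayC_le _ _
    _ = _ := by ring

theorem aestronglyMeasurable_renormKernelC {α : Type*} [MeasurableSpace α] {μ : Measure α}
    (hϑ : AEStronglyMeasurable ϑ) {e : α → Ed d} (he : Measurable e) {τ : α → ℝ}
    (hτ : Measurable τ) :
    AEStronglyMeasurable (fun z : α × Ed d => renormKernelC d γ ϑ (e z.1) (τ z.1) z.2)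
      (μ.prod volume) := by
  have hshift : AEMeasurable (fun z : α × Ed d => ϑ (τ z.1 • e z.1 - z.2)) (μ.prod volume) :=
    hϑ.aemeasurable.comp_quasiMeasurePreserving
      (quasiMeasurePreserving_sub_snd (g := fun a => τ a • e a) (by fun_prop))
  have hsnd : AEMeasurable (fun z : α × Ed d => ϑ z.2) (μ.prod volume) :=
    hϑ.aemeasurable.comp_quasiMeasurePreserving Measure.quasiMeasurePreserving_snd
  have he' : AEMeasurable (fun z : α × Ed d => e z.1) (μ.prod volume) := by fun_prop
  have hscalar : Measurable fun z : α × Ed d =>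
      τ z.1 ^ (-(γ - d - 1)) * Real.exp (‖e z.1‖ ^ γ * (1 - τ z.1 ^ γ)) := by fun_prop
  exact (hscalar.aemeasurable.smul
    ((continuous_pairC.measurable.comp_aemeasurable (he'.prodMk hshift)).smul
      (measurable_lerayC.comp_aemeasurable (he'.prodMk hsnd)))).aestronglyMeasurable

theorem aestronglyMeasurable_renormC {β : ℝ} (hβ : β ≠ 0) (hϑ : AEStronglyMeasurable ϑ) :
    AEStronglyMeasurable (renormC d γ β ϑ) := by
  have hdilate : AEStronglyMeasurable fun η => ϑ (β⁻¹ • η) :=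
    hϑ.comp_quasiMeasurePreserving (Measure.quasiMeasurePreserving_smul _ (inv_ne_zero hβ))
  have hscalar : Measurable fun η : Ed d =>
      β ^ (γ - d - 1) * Real.exp (‖η‖ ^ γ * (1 - β ^ (-γ))) := by fun_prop
  have hkernel := aestronglyMeasurable_renormKernelC (γ := γ)
    (μ := (volume : Measure (Ed d)).prod (volume.restrict (Ioc 1 β⁻¹))) hϑ
    measurable_fst measurable_snd
  exact (hscalar.aestronglyMeasurable.smul hdilate).add
    (hkernel.integral_prod_right'.integral_prod_right'.const_smul (Complex.I * (γ : ℂ)))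

end Renorm

/-! ### Radial profiles -/

theorem setLIntegral_preimage_mul_right {c : ℝ} (hc : 0 < c) (H : ℝ → ℝ≥0∞) (s : Set ℝ) :
    ENNReal.ofReal c * ∫⁻ t in (· * c) ⁻¹' s, H (t * c) = ∫⁻ u in s, H u := by
  have hemb : MeasurableEmbedding (· * c) := (Homeomorph.mulRight₀ c hc.ne').measurableEmbedding
  conv_rhs => rw [← Real.smul_map_volume_mul_right hc.ne', Measure.restrict_smul,
    hemb.restrict_map, lintegral_smul_measure, hemb.lintegral_map, abs_of_pos hc]
  rfl

section RadialWeight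

variable {a : ℝ}

theorem radialWeight_ne_zero {τ : ℝ} (hτ : 0 < τ) : radialWeight a τ ≠ 0 := by
  rw [radialWeight, Ne, ENNReal.ofReal_eq_zero, not_le]
  positivity

theorem radialWeight_le_radialWeight (ha : 0 ≤ a) {ρ s : ℝ} (hρ : 0 ≤ ρ) (hρs : ρ ≤ s) :
    radialWeight a ρ ≤ radialWeight a s := by
  unfold radialWeight
  gcongr

theorem radialWeight_mul_expAverage_le (ha : 0 ≤ a) (β γ : ℝ) {X : ℝ → ℝ≥0∞} {ρ : ℝ}
    (hρ : 0 ≤ ρ) :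
    radialWeight a ρ * expAverage β γ X ρ ≤ expAverage β γ (fun s => radialWeight a s * X s) ρ := by
  have hw : radialWeight a ρ ≠ ⊤ := ENNReal.ofReal_ne_top
  unfold expAverage
  rw [← lintegral_const_mul' _ _ hw]
  refine setLIntegral_mono' measurableSet_Ioc fun s hs => ?_
  rw [mul_left_comm]
  exact mul_le_mul_right (mul_le_mul_left (radialWeight_le_radialWeight ha hρ hs.1.le) _) _

theorem lintegral_radialWeight_mul_comp_mul_right_rpow_lt_top (ha : 0 ≤ a) {p c : ℝ} (hp : 0 ≤ p)
    (hc : 1 ≤ c) {f : ℝ → ℝ≥0∞}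
    (hfp : ∫⁻ τ in Ioi 0, (radialWeight a τ * f τ) ^ p < ⊤) :
    ∫⁻ ρ in Ioi 0, (radialWeight a ρ * f (ρ * c)) ^ p < ⊤ := by
  have hc₀ : 0 < c := one_pos.trans_le hc
  rw [← setLIntegral_preimage_mul_right hc₀, preimage_mul_const_Ioi₀ _ hc₀, zero_div] at hfp
  refine lt_of_le_of_lt (setLIntegral_mono' measurableSet_Ioi fun ρ hρ => ?_)
    (ENNReal.lt_top_of_mul_ne_top_right hfp.ne (by simpa using hc₀))
  have hρ₀ : 0 < ρ := hρ
  gcongr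
  exact radialWeight_le_radialWeight ha hρ₀.le (le_mul_of_one_le_right hρ₀.le hc)

end RadialWeight

section RadialClass

variable {n : ℕ} {p ν : ℝ}

theorem uWeight_nonneg {d : ℕ} (ν : ℝ) (x : Ed d) : 0 ≤ uWeight ν x := by
  unfold uWeight
  positivity

theorem wLpNorm_lt_top_iff {d : ℕ} {w : Ed d → ℝ} (hw : ∀ x, 0 ≤ w x) (hp : 0 < p)
    (g : Ed d → ℝ) :
    wLpNorm w p g < ⊤ ↔ ∫⁻ x, (ENNReal.ofReal (w x) * ENNReal.ofReal |g x|) ^ p < ⊤ := by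
  rw [wLpNorm, ENNReal.rpow_lt_top_iff_of_pos (by positivity)]
  have hpow (x : Ed d) : ENNReal.ofReal (|g x| ^ p * w x ^ p) =
      (ENNReal.ofReal (w x) * ENNReal.ofReal |g x|) ^ p := by
    rw [← Real.mul_rpow (abs_nonneg _) (hw x), ← ENNReal.ofReal_mul (hw x),
      ENNReal.ofReal_rpow_of_nonneg (mul_nonneg (hw x) (abs_nonneg _)) hp.le, mul_comm]
  rw [lintegral_congr hpow]

theorem lintegral_uWeight_mul_fun_norm_rpow_lt_top_iff (hp : 0 < p) {f : ℝ → ℝ≥0∞}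
    (hf : Measurable f) :
    ∫⁻ x : Ed (n + 1), (ENNReal.ofReal (uWeight ν x) * f ‖x‖) ^ p < ⊤ ↔
      ∫⁻ τ in Ioi 0, (radialWeight (ν + n / p) τ * f τ) ^ p < ⊤ := by
  have hweight (τ : ℝ) (hτ : τ ∈ Ioi 0) :
      ENNReal.ofReal (τ ^ n) * (ENNReal.ofReal (Real.exp τ * τ ^ ν) * f τ) ^ p =
        (radialWeight (ν + n / p) τ * f τ) ^ p := by
    have hτ₀ : 0 < τ := hτ
    have hpow : (τ ^ ((n : ℝ) / p)) ^ p = τ ^ n := by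
      rw [← Real.rpow_mul hτ₀.le, div_mul_cancel₀ _ hp.ne', Real.rpow_natCast]
    rw [ENNReal.mul_rpow_of_nonneg _ _ hp.le, ENNReal.mul_rpow_of_nonneg _ _ hp.le, ← mul_assoc,
      radialWeight, ENNReal.ofReal_rpow_of_pos (by positivity),
      ENNReal.ofReal_rpow_of_pos (by positivity), ← ENNReal.ofReal_mul (by positivity),
      Real.rpow_add hτ₀, ← mul_assoc,
      Real.mul_rpow (y := τ ^ (n / p)) (by positivity) (by positivity), hpow, mul_comm (τ ^ n)]
  unfold uWeight
  rw [lintegral_fun_norm_addHaar volume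
      (f := fun τ => (ENNReal.ofReal (Real.exp τ * τ ^ ν) * f τ) ^ p) (by fun_prop),
    finrank_euclideanSpace_fin, add_tsub_cancel_right,
    setLIntegral_congr_fun measurableSet_Ioi hweight]
  have hsphere : (volume : Measure (Ed (n + 1))).toSphere univ ≠ 0 := by
    rw [Measure.measure_univ_ne_zero, Ne, Measure.toSphere_eq_zero_iff_finrank]
    simp
  refine ⟨fun h => ENNReal.lt_top_of_mul_ne_top_right h.ne hsphere,
    fun h => ENNReal.mul_lt_top (measure_lt_top _ _) h⟩

theorem ae_fun_norm_lt_top (hp : 0 < p) {f : ℝ → ℝ≥0∞} (hf : Measurable f)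
    (hfp : ∫⁻ τ in Ioi 0, (radialWeight (ν + n / p) τ * f τ) ^ p < ⊤) :
    ∀ᵐ x : Ed (n + 1), f ‖x‖ < ⊤ := by
  rw [← lintegral_uWeight_mul_fun_norm_rpow_lt_top_iff hp hf] at hfp
  have hmeas : Measurable fun x : Ed (n + 1) => (ENNReal.ofReal (uWeight ν x) * f ‖x‖) ^ p := by
    unfold uWeight
    fun_prop
  filter_upwards [ae_lt_top hmeas hfp.ne, Measure.ae_ne volume 0] with x hx hx₀
  have hu : ENNReal.ofReal (uWeight ν x) ≠ 0 := radialWeight_ne_zero (norm_pos_iff.2 hx₀)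
  exact ENNReal.lt_top_of_mul_ne_top_right
    ((ENNReal.rpow_lt_top_iff_of_pos hp).1 hx).ne hu

theorem memRL_iff_exists_profile (hp : 0 < p) {ϑ : Ed (n + 1) → EdC (n + 1)} :
    MemRL (n + 1) p ν ϑ ↔ AEStronglyMeasurable ϑ ∧ ∃ f : ℝ → ℝ≥0∞, Measurable f ∧
      ∫⁻ τ in Ioi 0, (radialWeight (ν + n / p) τ * f τ) ^ p < ⊤ ∧ ∀ᵐ x, ‖ϑ x‖ₑ ≤ f ‖x‖ := by
  refine and_congr_right fun _ => ⟨?_, ?_⟩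
  · rintro ⟨g, hg, hg_radial, hgp, hϑg⟩
    let e : Ed (n + 1) := EuclideanSpace.single 0 1
    have hge (x : Ed (n + 1)) : g (‖x‖ • e) = g x :=
      hg_radial _ _ (by simp [e, norm_smul])
    have hf : Measurable fun τ : ℝ => ENNReal.ofReal |g (τ • e)| := by fun_prop
    refine ⟨_, hf, ?_, ?_⟩
    · rw [← lintegral_uWeight_mul_fun_norm_rpow_lt_top_iff hp hf]
      simpa only [hge] using (wLpNorm_lt_top_iff (uWeight_nonneg ν) hp g).1 hgp
    · filter_upwards [hϑg] with x hx
      rw [hge, ← ofReal_norm]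
      exact ENNReal.ofReal_le_ofReal (hx.trans (le_abs_self _))
  · rintro ⟨f, hf, hfp, hϑf⟩
    refine ⟨fun x => (f ‖x‖).toReal, by fun_prop, fun x y hxy => by simp only [hxy], ?_, ?_⟩
    · rw [wLpNorm_lt_top_iff (uWeight_nonneg ν) hp]
      refine lt_of_le_of_lt (lintegral_mono fun x => ?_)
        ((lintegral_uWeight_mul_fun_norm_rpow_lt_top_iff hp hf).2 hfp)
      rw [abs_of_nonneg ENNReal.toReal_nonneg]
      gcongr
      exact ENNReal.ofReal_toReal_le
    · filter_upwards [hϑf, ae_fun_norm_lt_top hp hf hfp] with x hx hx_fin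
      rw [← toReal_enorm]
      exact ENNReal.toReal_mono hx_fin.ne hx

end RadialClass

section RenormBound

variable {n : ℕ} {γ β : ℝ}

theorem lintegral_enorm_renormKernelC_le {f : ℝ → ℝ≥0∞} (hf : Measurable f)
    {ϑ : Ed (n + 1) → EdC (n + 1)} (hϑ : ∀ᵐ x, ‖ϑ x‖ₑ ≤ f ‖x‖) {t : ℝ} (ht : 0 ≤ t)
    (η : Ed (n + 1)) :
    ∫⁻ x, ‖renormKernelC (n + 1) γ ϑ η t x‖ₑ ≤
      ENNReal.ofReal (2 * t ^ (-(γ - (n + 1 : ℕ) - 1)) *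
        (‖η‖ * Real.exp (‖η‖ ^ γ - (t * ‖η‖) ^ γ))) * ∫⁻ x, f ‖x‖ * f ‖t • η - x‖ := by
  have hshift : ∀ᵐ x, ‖ϑ (t • η - x)‖ₑ ≤ f ‖t • η - x‖ :=
    (Measure.measurePreserving_sub_left volume (t • η)).quasiMeasurePreserving.ae hϑ
  rw [← lintegral_const_mul _ (by fun_prop)]
  refine lintegral_mono_ae ?_
  filter_upwards [hϑ, hshift] with x hx hx_shift
  rw [← ofReal_norm]
  refine (ENNReal.ofReal_le_ofReal (norm_renormKernelC_le ht η x)).trans ?_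
  rw [ENNReal.ofReal_mul (by positivity), ENNReal.ofReal_mul (norm_nonneg _), ofReal_norm,
    ofReal_norm]
  gcongr

theorem exists_lintegral_enorm_renormKernelC_le (hn : 1 ≤ n) (hβ : 0 < β) :
    ∃ C : ℝ≥0∞, C ≠ ⊤ ∧ ∀ f : ℝ → ℝ≥0∞, Measurable f → ∀ ϑ : Ed (n + 1) → EdC (n + 1),
      (∀ᵐ x, ‖ϑ x‖ₑ ≤ f ‖x‖) → ∀ η : Ed (n + 1), η ≠ 0 →
      ∫⁻ t in Ioc 1 β⁻¹, ∫⁻ x, ‖renormKernelC (n + 1) γ ϑ η t x‖ₑ ≤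
        C * expAverage β γ (radialConv (((n : ℝ) - 2) / 2) f) ‖η‖ := by
  obtain ⟨C, hC, hconv⟩ := exists_lintegral_fun_norm_mul_self_le_radialConv hn
  set c := γ - (n + 1 : ℕ) - 1
  set q := ((n : ℝ) - 2) / 2
  refine ⟨ENNReal.ofReal (2 * β⁻¹ ^ |c|) * C, by finiteness, fun f hf ϑ hϑ η hη => ?_⟩
  have hρ : 0 < ‖η‖ := norm_pos_iff.2 hη
  let H (s : ℝ) : ℝ≥0∞ := ENNReal.ofReal (Real.exp (‖η‖ ^ γ - s ^ γ)) * radialConv q f s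
  have hfixed (t : ℝ) (ht : t ∈ Ioc 1 β⁻¹) : ∫⁻ x, ‖renormKernelC (n + 1) γ ϑ η t x‖ₑ ≤
      ENNReal.ofReal (2 * β⁻¹ ^ |c|) * C * (ENNReal.ofReal ‖η‖ * H (t * ‖η‖)) := by
    have ht₀ : 0 < t := one_pos.trans ht.1
    have hpow : t ^ (-c) ≤ β⁻¹ ^ |c| :=
      (Real.rpow_le_rpow_of_exponent_le ht.1.le (neg_le_abs c)).trans
        (Real.rpow_le_rpow ht₀.le ht.2 (abs_nonneg c))
    have hnorm : ‖t • η‖ = t * ‖η‖ := by rw [norm_smul, Real.norm_of_nonneg ht₀.le]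
    have hconv_t := hconv f hf (t • η) (smul_ne_zero ht₀.ne' hη)
    rw [hnorm] at hconv_t
    refine (lintegral_enorm_renormKernelC_le hf hϑ ht₀.le η).trans ?_
    calc _ ≤ ENNReal.ofReal (2 * β⁻¹ ^ |c| * (‖η‖ * Real.exp (‖η‖ ^ γ - (t * ‖η‖) ^ γ))) *
          (C * radialConv q f (t * ‖η‖)) := by
          gcongr
      _ = _ := by
          rw [ENNReal.ofReal_mul (by positivity), ENNReal.ofReal_mul (norm_nonneg η)]
          ring
  have hpreimage : (· * ‖η‖) ⁻¹' Ioc ‖η‖ (‖η‖ / β) = Ioc 1 β⁻¹ := by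
    rw [preimage_mul_const_Ioc₀ _ _ hρ, div_self hρ.ne', div_right_comm, div_self hρ.ne', one_div]
  have hH : Measurable H := Measurable.mul (by fun_prop) (measurable_radialConv q hf)
  refine (setLIntegral_mono' measurableSet_Ioc hfixed).trans_eq ?_
  rw [lintegral_const_mul _ (by fun_prop), lintegral_const_mul _ (by fun_prop), ← hpreimage,
    setLIntegral_preimage_mul_right hρ]
  rfl

theorem renormDefinedC_of_lintegral_lt_top {d : ℕ} {ϑ : Ed d → EdC d}
    (hϑ : AEStronglyMeasurable ϑ) {η : Ed d}
    (hη : ∫⁻ t in Ioc 1 β⁻¹, ∫⁻ x, ‖renormKernelC d γ ϑ η t x‖ₑ < ⊤) :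
    RenormDefinedC d γ β ϑ η := by
  have hmeas := aestronglyMeasurable_renormKernelC (γ := γ) (μ := volume.restrict (Ioc 1 β⁻¹)) hϑ
    (measurable_const (a := η)) measurable_id
  rw [RenormDefinedC, IntegrableOn, Measure.volume_eq_prod, ← Measure.prod_restrict,
    Measure.restrict_univ]
  exact ⟨hmeas, (lintegral_prod _ hmeas.enorm).trans_lt hη⟩

theorem enorm_renormC_le (hβ : β ∈ Ioo 0 1) (hγ : 0 ≤ γ) {d : ℕ} (ϑ : Ed d → EdC d) (η : Ed d) :
    ‖renormC d γ β ϑ η‖ₑ ≤ ENNReal.ofReal (β ^ (γ - d - 1)) * ‖ϑ (β⁻¹ • η)‖ₑ +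
      ENNReal.ofReal γ * ∫⁻ t in Ioc 1 β⁻¹, ∫⁻ x, ‖renormKernelC d γ ϑ η t x‖ₑ := by
  have hβ₀ : 0 < β := hβ.1
  have hdamp : Real.exp (‖η‖ ^ γ * (1 - β ^ (-γ))) ≤ 1 := by
    have := Real.one_le_rpow_of_pos_of_le_one_of_nonpos hβ₀ hβ.2.le (neg_nonpos.2 hγ)
    exact Real.exp_le_one_iff.2 (mul_nonpos_of_nonneg_of_nonpos (by positivity) (by linarith))
  have hcoeff : ‖Complex.I * (γ : ℂ)‖ₑ = ENNReal.ofReal γ := by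
    rw [← ofReal_norm, norm_mul, Complex.norm_I, one_mul, Complex.norm_real,
      Real.norm_of_nonneg hγ]
  refine (enorm_add_le _ _).trans (add_le_add ?_ ?_)
  · rw [enorm_smul, ← ofReal_norm, Real.norm_of_nonneg (by positivity)]
    gcongr
    exact mul_le_of_le_one_right (by positivity) hdamp
  · rw [enorm_smul, hcoeff]
    gcongr
    exact (enorm_integral_le_lintegral_enorm _).trans
      (lintegral_mono fun t => enorm_integral_le_lintegral_enorm _)

end RenormBound

/-! ### Invariance -/

section Invariance

variable {n : ℕ} {p r ν κ γ β : ℝ}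

theorem lintegral_radialWeight_mul_expAverage_radialConv_rpow_lt_top (hn : 1 ≤ n) (hγ : 1 < γ)
    (hp : 1 < p) (hr : 0 < r)
    (hκ : 1 / r = 2 / p + (2 * ν + κ) / (n + 1 : ℕ) - 1)
    (hν₀ : ((n + 1 : ℕ) - 1) / 2 * (1 - 2 / p) < ν)
    (hν₁ : ν < (n + 1 : ℕ) * (p - 1) / p)
    (hνκ : ((n + 1 : ℕ) - 1) * (1 / r - 1 / p) ≤ ν + κ)
    (hγr : (n + 1 : ℕ) * (r - p) / r + p * (ν + κ + 1) < γ * p * (r - 1) / r)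
    (hβ : β ∈ Ioo 0 1) {f : ℝ → ℝ≥0∞} (hf : Measurable f)
    (hfp : ∫⁻ τ in Ioi 0, (radialWeight (ν + n / p) τ * f τ) ^ p < ⊤) :
    0 < ν + n / p ∧ ∫⁻ ρ in Ioi 0, (radialWeight (ν + n / p) ρ *
      expAverage β γ (radialConv (((n : ℝ) - 2) / 2) f) ρ) ^ p < ⊤ := by
  have hp₀ : 0 < p := by linarith
  have hR : 0 < 1 / r := by positivity
  push_cast at hκ hν₀ hν₁ hνκ hγr
  have hγr_div : (n + 1) * (1 / p - 1 / r) + (ν + κ + 1) < γ * (1 - 1 / r) := by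
    refine lt_of_mul_lt_mul_left ?_ hp₀.le
    calc p * ((n + 1) * (1 / p - 1 / r) + (ν + κ + 1))
        = (n + 1) * (r - p) / r + p * (ν + κ + 1) := by field_simp
      _ < γ * p * (r - 1) / r := hγr
      _ = p * (γ * (1 - 1 / r)) := by field_simp
  have hκ_eq : 2 * ν + κ = (n + 1) * (1 / r + 1 - 2 / p) := by
    rw [hκ]
    field_simp
    ring
  rw [mul_div_assoc, sub_div, div_self hp₀.ne'] at hν₁
  have hδ : ν + n / p = ν + n / p - n / 2 + n / 2 := by ring
  have hδ_pos : 0 < ν + n / p - n / 2 := by linear_combination hν₀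
  have ha : 0 < ν + n / p := by linarith [show (0 : ℝ) ≤ n / 2 by positivity]
  have hγR : 0 < γ * (1 / r) := by positivity
  refine ⟨ha, lt_of_le_of_lt (setLIntegral_mono' measurableSet_Ioi fun ρ hρ =>
    ENNReal.rpow_le_rpow (radialWeight_mul_expAverage_le ha.le β γ (mem_Ioi.1 hρ).le) hp₀.le) ?_⟩
  rw [hδ] at hfp ⊢
  refine lintegral_expAverage_radialWeight_mul_radialConv_rpow_lt_top hn hp hγ.le hβ (R := 1 / r)
    hδ_pos ?_ hR.le ?_ ?_ ?_ hf hfp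
  · linear_combination hν₁
  · linear_combination hνκ + hκ_eq
  · linear_combination hγr_div + hνκ
  · linear_combination hγr_div - hκ_eq + hγR

theorem ae_renormDefinedC (hn : 1 ≤ n) (hβ : 0 < β) (hp : 0 < p) {f : ℝ → ℝ≥0∞}
    (hf : Measurable f) {ϑ : Ed (n + 1) → EdC (n + 1)} (hϑ : AEStronglyMeasurable ϑ)
    (hϑf : ∀ᵐ x, ‖ϑ x‖ₑ ≤ f ‖x‖)
    (hnonlin : ∫⁻ ρ in Ioi 0, (radialWeight (ν + n / p) ρ *
      expAverage β γ (radialConv (((n : ℝ) - 2) / 2) f) ρ) ^ p < ⊤) :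
    ∀ᵐ η, RenormDefinedC (n + 1) γ β ϑ η := by
  obtain ⟨C, hC, hkernel⟩ := exists_lintegral_enorm_renormKernelC_le (γ := γ) hn hβ
  filter_upwards [ae_fun_norm_lt_top hp (measurable_expAverage (measurable_radialConv _ hf))
    hnonlin, Measure.ae_ne volume 0] with η hη hη₀
  exact renormDefinedC_of_lintegral_lt_top hϑ
    ((hkernel f hf ϑ hϑf η hη₀).trans_lt (ENNReal.mul_lt_top hC.lt_top hη))

theorem memRL_renormC (hn : 1 ≤ n) (hβ : β ∈ Ioo 0 1) (hγ : 0 ≤ γ) (hp : 1 ≤ p)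
    (ha : 0 ≤ ν + n / p) {f : ℝ → ℝ≥0∞} (hf : Measurable f)
    (hfp : ∫⁻ τ in Ioi 0, (radialWeight (ν + n / p) τ * f τ) ^ p < ⊤)
    {ϑ : Ed (n + 1) → EdC (n + 1)} (hϑ : AEStronglyMeasurable ϑ) (hϑf : ∀ᵐ x, ‖ϑ x‖ₑ ≤ f ‖x‖)
    (hnonlin : ∫⁻ ρ in Ioi 0, (radialWeight (ν + n / p) ρ *
      expAverage β γ (radialConv (((n : ℝ) - 2) / 2) f) ρ) ^ p < ⊤) :
    MemRL (n + 1) p ν (renormC (n + 1) γ β ϑ) := by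
  have hp₀ : 0 < p := by linarith
  have hβ_inv : 1 ≤ β⁻¹ := (one_le_inv₀ hβ.1).2 hβ.2.le
  obtain ⟨C, hC, hkernel⟩ := exists_lintegral_enorm_renormKernelC_le (γ := γ) hn hβ.1
  let w := radialWeight (ν + n / p)
  let Z := expAverage β γ (radialConv (((n : ℝ) - 2) / 2) f)
  have hZ : Measurable Z := measurable_expAverage (measurable_radialConv _ hf)
  let A := ENNReal.ofReal (β ^ (γ - (n + 1 : ℕ) - 1))
  let B := ENNReal.ofReal γ * C
  have : Measurable w := measurable_radialWeight _
  have hconst {D : ℝ≥0∞} (hD : D ≠ ⊤) {X : ℝ → ℝ≥0∞}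
      (hX : ∫⁻ ρ in Ioi 0, (w ρ * X ρ) ^ p < ⊤) :
      ∫⁻ ρ in Ioi 0, (w ρ * (D * X ρ)) ^ p < ⊤ := by
    simp_rw [mul_left_comm _ D, ENNReal.mul_rpow_of_nonneg D _ hp₀.le]
    rw [lintegral_const_mul' _ _ (by finiteness)]
    finiteness
  refine (memRL_iff_exists_profile hp₀).2 ⟨aestronglyMeasurable_renormC hβ.1.ne' hϑ,
    fun ρ => A * f (ρ * β⁻¹) + B * Z ρ, by fun_prop, ?_, ?_⟩
  · simp_rw [mul_add]
    exact lintegral_add_rpow_lt_top (by fun_prop) hp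
      (hconst (by finiteness) (lintegral_radialWeight_mul_comp_mul_right_rpow_lt_top ha hp₀.le
        hβ_inv hfp)) (hconst (by finiteness) hnonlin)
  · have hdilate : ∀ᵐ η : Ed (n + 1), ‖ϑ (β⁻¹ • η)‖ₑ ≤ f ‖β⁻¹ • η‖ :=
      (Measure.quasiMeasurePreserving_smul volume (inv_ne_zero hβ.1.ne')).ae hϑf
    filter_upwards [hdilate, Measure.ae_ne volume 0] with η hη hη₀
    rw [norm_smul, Real.norm_of_nonneg (by linarith), mul_comm β⁻¹] at hη
    refine (enorm_renormC_le hβ hγ ϑ η).trans ?_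
    rw [mul_assoc (ENNReal.ofReal γ)]
    gcongr
    exact hkernel f hf ϑ hϑf η hη₀

end Invariance

theorem renorm_invariance_of_RL_general
    (d : ℕ) (hd : 2 ≤ d) (γ : ℝ) (hγ : 1 < γ) (p r ν κ : ℝ)
    (hp : 1 < p) (hr : 0 < r)
    (hκ : 1 / r = 2 / p + (2 * ν + κ) / d - 1)
    (hν₀ : (d - 1) / 2 * (1 - 2 / p) < ν)
    (hν₁ : ν < d * (p - 1) / p)
    (hνκ : (d - 1) * (1 / r - 1 / p) ≤ ν + κ)
    (hγr : d * (r - p) / r + p * (ν + κ + 1) < γ * p * (r - 1) / r) :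
    ∀ β ∈ Set.Ioo (0 : ℝ) 1, ∀ ϑ : Ed d → EdC d, MemRL d p ν ϑ →
      (∀ᵐ η : Ed d, RenormDefinedC d γ β ϑ η) ∧ MemRL d p ν (renormC d γ β ϑ) := by
  intro β hβ ϑ hϑ
  obtain ⟨n, rfl⟩ : ∃ n, d = n + 1 := ⟨d - 1, by omega⟩
  have hn : 1 ≤ n := by omega
  have hp₀ : 0 < p := one_pos.trans hp
  obtain ⟨hϑ_meas, f, hf, hfp, hϑf⟩ := (memRL_iff_exists_profile hp₀).1 hϑ
  obtain ⟨ha, hnonlin⟩ := lintegral_radialWeight_mul_expAverage_radialConv_rpow_lt_top hn hγ hp hr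
    hκ hν₀ hν₁ hνκ hγr hβ hf hfp
  exact ⟨ae_renormDefinedC hn hβ.1 hp₀ hf hϑ_meas hϑf hnonlin,
    memRL_renormC hn hβ (by linarith) hp.le ha.le hf hfp hϑ_meas hϑf hnonlin⟩

/-- invariance of the space `RL^p_{u_ν}` under the renormalization
operator, under hypotheses (H1)–(H2). -/
theorem renorm_invariance_of_RL
    (d : ℕ) (hd : 2 ≤ d) (γ : ℝ) (hγ : 1 < γ) (p r ν κ : ℝ)
    (hp : 1 < p) (hr : 1 < r)
    (h1 : 1 / r = 2 / p + (2 * ν + κ) / d - 1)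
    (h2 : κ < d / r)
    (h3 : (d - 1) / 2 * (1 - 2 / p) < ν)
    (h4 : ν < d * (p - 1) / p)
    (h5 : p ≤ 2 * r)
    (h6 : 0 < max ν κ)
    (h7 : (d - 1) * (1 / r - 1 / p) ≤ ν + κ)
    (h8 : max 0 (d + p * ((γ - d - 1) + ν)) < d * (r - p) / r + p * (ν + κ + 1))
    (h9 : d * (r - p) / r + p * (ν + κ + 1) < γ * p * (r - 1) / r) :
    ∀ β ∈ Set.Ioo (0 : ℝ) 1, ∀ ϑ : Ed d → EdC d, MemRL d p ν ϑ →
      (∀ᵐ η : Ed d, RenormDefinedC d γ β ϑ η) ∧ MemRL d p ν (renormC d γ β ϑ) :=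
  renorm_invariance_of_RL_general d hd γ hγ p r ν κ hp (one_pos.trans hr) h1 h3 h4 h7 h9
end

section
/- Let d ≥ 2 be an integer and let σ, γ be real numbers with σ ∈ (max{−d,−3}, 0), σ ∉ {−2, −d/2}, and γ − d − 1 ≥ σ. Then there exist k > 0 and b > 0 such that the set M = {ψ : ℝ^d → ℝ measurable : |ψ(η)| < k |η|^σ e^{−b|η|} for a.e. η ≠ 0} is invariant under the azimuthal renormalization operator R_β for every β ∈ (0,1): if ψ ∈ M then R_β[ψ](η) is defined for a.e. η and R_β[ψ] ∈ M. -/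
open MeasureTheory Set RealInnerProductSpace
open scoped ENNReal NNReal

/-!
In the nonlinear term the weight `w(η) = |η|^σ e^{−b|η|}` satisfies
`∫ w(x) w(y − x) dx ≤ A (1 + |y|^{σ+d}) w(y)`, because `|y| ≤ |x| + |y − x|` and the larger of the
two summands is at least `|y|/2`. Replacing `y` by `tη` and using `γ − d − 1 ≥ σ`, every other power
of `t` is absorbed and what is left of `w(tη)` is `w(η)` times
`E(t) = e^{|η|^γ(1 − t^γ) + b|η|(1 − t)}`. The factor `|η_a| (1 + |tη|^{σ+d})` is at most a constant
times the logarithmic decay rate of `E`, so the time integral is at most a constant times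
`k² w(η) (1 − E(β⁻¹))`. The linear term is below `k w(η) E(β⁻¹)`; when `k` is small the two bounds
add up to at most `k w(η)`.
-/

open Metric Module

section DecayWeight

variable {E : Type*} [NormedAddCommGroup E] {σ b : ℝ} {x y : E}

/-- The weight `|x|^σ e^{−b|x|}` whose multiples bound the members of `M`. -/
noncomputable def decayWeight (σ b : ℝ) (x : E) : ℝ := ‖x‖ ^ σ * Real.exp (-b * ‖x‖)

/-- The radial function `|x|^σ (1_{|x| ≤ r} + e^{−b|x|})`, which dominates the convolution
integrand of two decay weights on the half space where `x` is the shorter summand of a vector of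
length `r`. -/
noncomputable def convMajorant (σ b r : ℝ) (x : E) : ℝ :=
  (closedBall 0 r).indicator (fun z ↦ ‖z‖ ^ σ) x + decayWeight σ b x

lemma decayWeight_nonneg (σ b : ℝ) (x : E) : 0 ≤ decayWeight σ b x := by
  unfold decayWeight; positivity

lemma convMajorant_nonneg (σ b r : ℝ) (x : E) : 0 ≤ convMajorant σ b r x :=
  add_nonneg (indicator_nonneg (fun _ _ ↦ by positivity) x) (decayWeight_nonneg σ b x)

lemma rpow_le_two_rpow_neg_mul_rpow {s r : ℝ} (hσ : σ ≤ 0) (hr : 0 < r) (h : r ≤ 2 * s) :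
    s ^ σ ≤ 2 ^ (-σ) * r ^ σ :=
  calc s ^ σ ≤ (r / 2) ^ σ := Real.rpow_le_rpow_of_nonpos (by positivity) (by linarith) hσ
    _ = 2 ^ (-σ) * r ^ σ := by
      rw [Real.div_rpow hr.le zero_le_two, Real.rpow_neg zero_le_two, div_eq_inv_mul]

lemma decayWeight_mul_exp_le_exp_mul_convMajorant (hb : 0 ≤ b) (h : ‖x‖ ≤ ‖y - x‖) :
    decayWeight σ b x * Real.exp (-b * ‖y - x‖) ≤
      Real.exp (-b * ‖y‖) * convMajorant σ b ‖y‖ x := by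
  rcases le_or_gt ‖x‖ ‖y‖ with hxy | hxy
  · have htri : ‖y‖ ≤ ‖x‖ + ‖y - x‖ := by simpa using norm_add_le x (y - x)
    have hexp : Real.exp (-b * ‖x‖) * Real.exp (-b * ‖y - x‖) ≤ Real.exp (-b * ‖y‖) := by
      rw [← Real.exp_add, Real.exp_le_exp]
      nlinarith
    have hmaj : ‖x‖ ^ σ ≤ convMajorant σ b ‖y‖ x := by
      rw [convMajorant, indicator_of_mem (mem_closedBall_zero_iff.mpr hxy)]
      exact le_add_of_nonneg_right (decayWeight_nonneg σ b x)
    calc decayWeight σ b x * Real.exp (-b * ‖y - x‖)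
        = Real.exp (-b * ‖x‖) * Real.exp (-b * ‖y - x‖) * ‖x‖ ^ σ := by rw [decayWeight]; ring
      _ ≤ Real.exp (-b * ‖y‖) * convMajorant σ b ‖y‖ x := by gcongr
  · have hexp : Real.exp (-b * ‖y - x‖) ≤ Real.exp (-b * ‖y‖) := by
      rw [Real.exp_le_exp]
      nlinarith
    rw [convMajorant, indicator_of_notMem (by simpa using hxy), zero_add, mul_comm]
    exact mul_le_mul_of_nonneg_right hexp (decayWeight_nonneg σ b x)

lemma decayWeight_mul_sub_le_of_norm_le (hσ : σ ≤ 0) (hb : 0 ≤ b) (hy : y ≠ 0)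
    (h : ‖x‖ ≤ ‖y - x‖) :
    decayWeight σ b x * decayWeight σ b (y - x) ≤
      2 ^ (-σ) * decayWeight σ b y * convMajorant σ b ‖y‖ x := by
  have htri : ‖y‖ ≤ ‖x‖ + ‖y - x‖ := by simpa using norm_add_le x (y - x)
  have hpow : ‖y - x‖ ^ σ ≤ 2 ^ (-σ) * ‖y‖ ^ σ :=
    rpow_le_two_rpow_neg_mul_rpow hσ (norm_pos_iff.mpr hy) (by linarith)
  have hexp := decayWeight_mul_exp_le_exp_mul_convMajorant (σ := σ) hb h
  have hw := decayWeight_nonneg σ b x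
  calc decayWeight σ b x * decayWeight σ b (y - x)
      = ‖y - x‖ ^ σ * (decayWeight σ b x * Real.exp (-b * ‖y - x‖)) := by
        simp only [decayWeight]; ring
    _ ≤ (2 ^ (-σ) * ‖y‖ ^ σ) * (Real.exp (-b * ‖y‖) * convMajorant σ b ‖y‖ x) := by gcongr
    _ = 2 ^ (-σ) * decayWeight σ b y * convMajorant σ b ‖y‖ x := by rw [decayWeight]; ring

lemma decayWeight_mul_sub_le (hσ : σ ≤ 0) (hb : 0 ≤ b) (hy : y ≠ 0) (x : E) :
    decayWeight σ b x * decayWeight σ b (y - x) ≤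
      2 ^ (-σ) * decayWeight σ b y * (convMajorant σ b ‖y‖ x + convMajorant σ b ‖y‖ (y - x)) := by
  have hC : 0 ≤ 2 ^ (-σ) * decayWeight σ b y :=
    mul_nonneg (by positivity) (decayWeight_nonneg σ b y)
  rcases le_total ‖x‖ ‖y - x‖ with h | h
  · refine (decayWeight_mul_sub_le_of_norm_le hσ hb hy h).trans ?_
    exact mul_le_mul_of_nonneg_left (le_add_of_nonneg_right (convMajorant_nonneg ..)) hC
  · rw [mul_comm (decayWeight σ b x)]
    have hswap := decayWeight_mul_sub_le_of_norm_le hσ hb hy (x := y - x) (by simpa using h)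
    rw [sub_sub_cancel] at hswap
    exact hswap.trans <|
      mul_le_mul_of_nonneg_left (le_add_of_nonneg_left (convMajorant_nonneg ..)) hC

end DecayWeight

section Convolution

variable {E : Type*} [NormedAddCommGroup E] [MeasurableSpace E] (μ : Measure E)

/-- The constant in the bound for the convolution of two decay weights: up to `2^{1−σ}`, it is the
mass of the singularity of the weight near the origin plus the total mass of the weight. -/
noncomputable def decayConvConst (σ b : ℝ) : ℝ :=
  2 * 2 ^ (-σ) * (∫ x in closedBall 0 1, ‖x‖ ^ σ ∂μ + ∫ x, decayWeight σ b x ∂μ)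

lemma decayConvConst_nonneg (σ b : ℝ) : 0 ≤ decayConvConst μ σ b := by
  have hnear : 0 ≤ ∫ x in closedBall 0 1, ‖x‖ ^ σ ∂μ := integral_nonneg fun _ ↦ by positivity
  have hfar : 0 ≤ ∫ x, decayWeight σ b x ∂μ := integral_nonneg (decayWeight_nonneg σ b)
  exact mul_nonneg (by positivity) (add_nonneg hnear hfar)

@[fun_prop]
lemma measurable_decayWeight [OpensMeasurableSpace E] (σ b : ℝ) :
    Measurable (decayWeight σ b : E → ℝ) := by
  unfold decayWeight
  fun_prop

variable [NormedSpace ℝ E] [FiniteDimensional ℝ E] [BorelSpace E] [μ.IsAddHaarMeasure]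
  {σ b r : ℝ} {y : E}

lemma integrable_decayWeight [Nontrivial E] (hσ : -(finrank ℝ E : ℝ) < σ) (hb : 0 < b) :
    Integrable (decayWeight σ b) μ := by
  refine (integrable_fun_norm_addHaar μ (f := fun s ↦ s ^ σ * Real.exp (-b * s))).mpr ?_
  have hs : -1 < σ + finrank ℝ E - 1 := by linarith
  refine (integrableOn_rpow_mul_exp_neg_mul_rpow hs one_pos hb).congr_fun
    (fun s hs ↦ ?_) measurableSet_Ioi
  have hpow : s ^ (σ + finrank ℝ E - 1) = s ^ (finrank ℝ E - 1) * s ^ σ := by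
    rw [← Real.rpow_natCast, ← Real.rpow_add hs, Nat.cast_pred finrank_pos]
    congr 1
    ring
  simp only [Real.rpow_one, smul_eq_mul, hpow, mul_assoc]

lemma integrableOn_closedBall_norm_rpow [Nontrivial E] (hσ : -(finrank ℝ E : ℝ) < σ) (r : ℝ) :
    IntegrableOn (fun x ↦ ‖x‖ ^ σ) (closedBall (0 : E) r) μ := by
  refine ((integrable_decayWeight μ hσ one_pos).integrableOn.const_mul (Real.exp r)).mono'
    (measurable_norm.pow_const σ).aestronglyMeasurable
    (ae_restrict_of_forall_mem measurableSet_closedBall fun x hx ↦ ?_)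
  have hexp : 1 ≤ Real.exp r * Real.exp (-1 * ‖x‖) := by
    rw [← Real.exp_add, Real.one_le_exp_iff]
    linarith [mem_closedBall_zero_iff.mp hx]
  rw [Real.norm_of_nonneg (by positivity), decayWeight, mul_left_comm]
  exact le_mul_of_one_le_right (by positivity) hexp

lemma setIntegral_closedBall_norm_rpow (σ : ℝ) (hr : 0 < r) :
    ∫ x in closedBall (0 : E) r, ‖x‖ ^ σ ∂μ =
      r ^ (σ + finrank ℝ E) * ∫ x in closedBall (0 : E) 1, ‖x‖ ^ σ ∂μ := by
  have hscale := Measure.setIntegral_comp_smul_of_pos μ (fun x : E ↦ ‖x‖ ^ σ) (closedBall 0 1) hr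
  simp only [norm_smul, Real.norm_of_nonneg hr.le, Real.mul_rpow hr.le (norm_nonneg _),
    integral_const_mul, smul_unitClosedBall_of_nonneg hr.le, smul_eq_mul] at hscale
  rw [Real.rpow_add hr, Real.rpow_natCast, mul_right_comm, hscale]
  field_simp

lemma integrable_convMajorant [Nontrivial E] (hσ : -(finrank ℝ E : ℝ) < σ) (hb : 0 < b) (r : ℝ) :
    Integrable (convMajorant σ b r) μ :=
  ((integrable_indicator_iff measurableSet_closedBall).mpr
    (integrableOn_closedBall_norm_rpow μ hσ r)).add (integrable_decayWeight μ hσ hb)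

lemma two_rpow_mul_integral_convMajorant_le [Nontrivial E] (hσ : -(finrank ℝ E : ℝ) < σ)
    (hb : 0 < b) (hr : 0 < r) :
    2 * 2 ^ (-σ) * ∫ x, convMajorant σ b r x ∂μ ≤
      decayConvConst μ σ b * (1 + r ^ (σ + finrank ℝ E)) := by
  have hnear : 0 ≤ ∫ x in closedBall 0 1, ‖x‖ ^ σ ∂μ := integral_nonneg fun _ ↦ by positivity
  have hfar : 0 ≤ ∫ x, decayWeight σ b x ∂μ := integral_nonneg (decayWeight_nonneg σ b)
  have hpow : 0 ≤ r ^ (σ + finrank ℝ E) := by positivity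
  have hsplit : ∫ x, convMajorant σ b r x ∂μ =
      r ^ (σ + finrank ℝ E) * ∫ x in closedBall 0 1, ‖x‖ ^ σ ∂μ + ∫ x, decayWeight σ b x ∂μ := by
    rw [← setIntegral_closedBall_norm_rpow μ σ hr, ← integral_indicator measurableSet_closedBall]
    exact integral_add ((integrable_indicator_iff measurableSet_closedBall).mpr
      (integrableOn_closedBall_norm_rpow μ hσ r)) (integrable_decayWeight μ hσ hb)
  rw [hsplit, decayConvConst, mul_assoc (2 * 2 ^ (-σ))]
  refine mul_le_mul_of_nonneg_left ?_ (by positivity)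
  nlinarith only [hnear, mul_nonneg hpow hfar]

lemma integrable_decayWeight_mul_sub (hσ : -(finrank ℝ E : ℝ) < σ) (hσ0 : σ ≤ 0) (hb : 0 < b)
    (hy : y ≠ 0) : Integrable (fun x ↦ decayWeight σ b x * decayWeight σ b (y - x)) μ := by
  have : Nontrivial E := nontrivial_of_ne y 0 hy
  have hmaj := integrable_convMajorant μ hσ hb ‖y‖
  refine ((hmaj.add (hmaj.comp_sub_left y)).const_mul (2 ^ (-σ) * decayWeight σ b y)).mono'
    (by fun_prop) (.of_forall fun x ↦ ?_)
  rw [Real.norm_of_nonneg (mul_nonneg (decayWeight_nonneg ..) (decayWeight_nonneg ..))]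
  exact decayWeight_mul_sub_le hσ0 hb.le hy x

lemma integral_decayWeight_mul_sub_le (hσ : -(finrank ℝ E : ℝ) < σ) (hσ0 : σ ≤ 0) (hb : 0 < b)
    (hy : y ≠ 0) :
    ∫ x, decayWeight σ b x * decayWeight σ b (y - x) ∂μ ≤
      decayConvConst μ σ b * (1 + ‖y‖ ^ (σ + finrank ℝ E)) * decayWeight σ b y := by
  have : Nontrivial E := nontrivial_of_ne y 0 hy
  have hmaj := integrable_convMajorant μ hσ hb ‖y‖
  calc ∫ x, decayWeight σ b x * decayWeight σ b (y - x) ∂μ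
      ≤ ∫ x, 2 ^ (-σ) * decayWeight σ b y *
          (convMajorant σ b ‖y‖ x + convMajorant σ b ‖y‖ (y - x)) ∂μ :=
        integral_mono (integrable_decayWeight_mul_sub μ hσ hσ0 hb hy)
          ((hmaj.add (hmaj.comp_sub_left y)).const_mul _) (decayWeight_mul_sub_le hσ0 hb.le hy)
    _ = 2 * 2 ^ (-σ) * (∫ x, convMajorant σ b ‖y‖ x ∂μ) * decayWeight σ b y := by
        rw [integral_const_mul, integral_add hmaj (hmaj.comp_sub_left y),
          integral_sub_left_eq_self (convMajorant σ b ‖y‖) μ y]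
        ring
    _ ≤ decayConvConst μ σ b * (1 + ‖y‖ ^ (σ + finrank ℝ E)) * decayWeight σ b y :=
        mul_le_mul_of_nonneg_right
          (two_rpow_mul_integral_convMajorant_le μ hσ hb (norm_pos_iff.mpr hy))
          (decayWeight_nonneg ..)

end Convolution

section DilationDecay

variable {γ b a t p T : ℝ}

/-- The factor `e^{a^γ(1 − t^γ) + ba(1 − t)}` lost by the damped weight when a vector of length `a`
is dilated by `t`. -/
noncomputable def dilationDecay (γ b a t : ℝ) : ℝ :=
  Real.exp (a ^ γ * (1 - t ^ γ) + b * a * (1 - t))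

/-- The logarithmic decay rate `γ a^γ t^{γ−1} + ba` of `dilationDecay γ b a` in `t`. -/
noncomputable def dilationRate (γ b a t : ℝ) : ℝ := a ^ γ * (γ * t ^ (γ - 1)) + b * a

lemma dilationDecay_pos (γ b a t : ℝ) : 0 < dilationDecay γ b a t := Real.exp_pos _

lemma dilationDecay_le_one (hγ : 0 ≤ γ) (hb : 0 ≤ b) (ha : 0 ≤ a) (ht : 1 ≤ t) :
    dilationDecay γ b a t ≤ 1 := by
  refine Real.exp_le_one_iff.mpr (add_nonpos ?_ ?_)
  · exact mul_nonpos_of_nonneg_of_nonpos (by positivity)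
      (sub_nonpos.mpr (Real.one_le_rpow ht hγ))
  · exact mul_nonpos_of_nonneg_of_nonpos (by positivity) (sub_nonpos.mpr ht)

@[simp]
lemma dilationDecay_one (γ b a : ℝ) : dilationDecay γ b a 1 = 1 := by simp [dilationDecay]

lemma hasDerivAt_neg_dilationDecay (γ b a : ℝ) (ht : t ≠ 0) :
    HasDerivAt (fun s ↦ -dilationDecay γ b a s)
      (dilationRate γ b a t * dilationDecay γ b a t) t := by
  have hpow : HasDerivAt (fun s : ℝ ↦ s ^ γ) (γ * t ^ (γ - 1)) t :=
    Real.hasDerivAt_rpow_const (Or.inl ht)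
  have hexponent := ((hpow.const_sub 1).const_mul (a ^ γ)).add
    (((hasDerivAt_id t).const_sub 1).const_mul (b * a))
  refine hexponent.exp.neg.congr_deriv ?_
  simp only [dilationRate, dilationDecay, id, Pi.add_apply]
  ring

lemma continuousOn_dilationRate_mul_dilationDecay (γ b a : ℝ) :
    ContinuousOn (fun t ↦ dilationRate γ b a t * dilationDecay γ b a t) (Ioi 0) := by
  have hpow (q : ℝ) : ContinuousOn (fun t : ℝ ↦ t ^ q) (Ioi 0) :=
    continuousOn_id.rpow_const fun t ht ↦ Or.inl (ne_of_gt ht)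
  have hrate : ContinuousOn (dilationRate γ b a) (Ioi 0) :=
    (((hpow (γ - 1)).const_mul γ).const_mul (a ^ γ)).add_const (b * a)
  have hdecay : ContinuousOn (dilationDecay γ b a) (Ioi 0) :=
    (((continuousOn_const.sub (hpow γ)).const_mul (a ^ γ)).add (by fun_prop)).rexp
  exact hrate.mul hdecay

lemma integrableOn_dilationRate_mul_dilationDecay (γ b a T : ℝ) :
    IntegrableOn (fun t ↦ dilationRate γ b a t * dilationDecay γ b a t) (Ioc 1 T) :=
  ((continuousOn_dilationRate_mul_dilationDecay γ b a).mono
    fun _ ht ↦ one_pos.trans_le ht.1).integrableOn_Icc.mono_set Ioc_subset_Icc_self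

lemma integral_dilationRate_mul_dilationDecay (γ b a : ℝ) (hT : 1 ≤ T) :
    ∫ t in Ioc 1 T, dilationRate γ b a t * dilationDecay γ b a t = 1 - dilationDecay γ b a T := by
  rw [← intervalIntegral.integral_of_le hT,
    intervalIntegral.integral_eq_sub_of_hasDerivAt (f := fun t ↦ -dilationDecay γ b a t)]
  · rw [dilationDecay_one]; ring
  · intro t ht
    rw [uIcc_of_le hT] at ht
    exact hasDerivAt_neg_dilationDecay γ b a (one_pos.trans_le ht.1).ne'
  · exact (intervalIntegrable_iff_integrableOn_Ioc_of_le hT).mpr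
      (integrableOn_dilationRate_mul_dilationDecay γ b a T)

lemma mul_one_add_rpow_le_dilationRate (hb : 0 < b) (hp : 0 ≤ p) (hpγ : p ≤ γ - 1) (ha : 0 < a)
    (ht : 0 < t) : a * (1 + (t * a) ^ p) ≤ (2 / b + 1) * dilationRate γ b a t := by
  have hta : 0 < t * a := mul_pos ht ha
  have hpow : (t * a) ^ p ≤ 1 + (t * a) ^ (γ - 1) := by
    rcases le_total (t * a) 1 with h | h
    · exact (Real.rpow_le_one hta.le h hp).trans (le_add_of_nonneg_right (by positivity))
    · exact (Real.rpow_le_rpow_of_exponent_le h hpγ).trans (le_add_of_nonneg_left zero_le_one)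
  have hsplit : a * (t * a) ^ (γ - 1) = a ^ γ * t ^ (γ - 1) := by
    rw [Real.mul_rpow ht.le ha.le, mul_left_comm, ← Real.rpow_one_add' ha.le (by linarith),
      add_sub_cancel, mul_comm]
  have hlin : 2 / b * (b * a) = 2 * a := by field_simp
  have hX : 0 ≤ a ^ γ * t ^ (γ - 1) := by positivity
  have hγ : 1 ≤ γ := by linarith
  calc a * (1 + (t * a) ^ p) ≤ a * (1 + (1 + (t * a) ^ (γ - 1))) := by gcongr
    _ = 2 / b * (b * a) + 1 * (a ^ γ * t ^ (γ - 1)) := by rw [hlin, ← hsplit]; ring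
    _ ≤ (2 / b + 1) * (b * a) + (2 / b + 1) * (γ * (a ^ γ * t ^ (γ - 1))) := by
        have hM : 1 ≤ 2 / b + 1 := le_add_of_nonneg_left (by positivity)
        exact add_le_add (by gcongr; exact le_add_of_nonneg_right zero_le_one)
          (mul_le_mul hM (le_mul_of_one_le_left hX hγ) hX (by positivity))
    _ = (2 / b + 1) * dilationRate γ b a t := by rw [dilationRate]; ring

lemma rpow_mul_exp_mul_decayWeight_smul_le {E : Type*} [NormedAddCommGroup E] [NormedSpace ℝ E]
    {σ c : ℝ} (hσc : σ ≤ c) (ht : 1 ≤ t) (γ b : ℝ) (η : E) :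
    t ^ (-c) * Real.exp (‖η‖ ^ γ * (1 - t ^ γ)) * decayWeight σ b (t • η) ≤
      decayWeight σ b η * dilationDecay γ b ‖η‖ t := by
  have ht0 : 0 < t := one_pos.trans_le ht
  have hpow : t ^ (-c) * t ^ σ ≤ 1 := by
    rw [← Real.rpow_add ht0]
    exact Real.rpow_le_one_of_one_le_of_nonpos ht (by linarith)
  have hexp : Real.exp (‖η‖ ^ γ * (1 - t ^ γ)) * Real.exp (-b * (t * ‖η‖)) =
      Real.exp (-b * ‖η‖) * dilationDecay γ b ‖η‖ t := by
    rw [dilationDecay, ← Real.exp_add, ← Real.exp_add]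
    congr 1
    ring
  calc t ^ (-c) * Real.exp (‖η‖ ^ γ * (1 - t ^ γ)) * decayWeight σ b (t • η)
      = t ^ (-c) * t ^ σ *
          (‖η‖ ^ σ * (Real.exp (‖η‖ ^ γ * (1 - t ^ γ)) * Real.exp (-b * (t * ‖η‖)))) := by
        rw [decayWeight, norm_smul, Real.norm_of_nonneg ht0.le,
          Real.mul_rpow ht0.le (norm_nonneg η)]
        ring
    _ ≤ 1 * (‖η‖ ^ σ * (Real.exp (‖η‖ ^ γ * (1 - t ^ γ)) * Real.exp (-b * (t * ‖η‖)))) := by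
        gcongr
    _ = decayWeight σ b η * dilationDecay γ b ‖η‖ t := by rw [hexp, decayWeight]; ring

end DilationDecay

section Azimuthal

variable {d : ℕ}

lemma normA_nonneg (x : Ed d) : 0 ≤ normA x := Real.sqrt_nonneg _

lemma normA_sq (x : Ed d) : normA x ^ 2 = azim1 x ^ 2 + azim2 x ^ 2 := Real.sq_sqrt (by positivity)

lemma normA_le_norm (hd : 2 ≤ d) (x : Ed d) : normA x ≤ ‖x‖ := by
  have h1 : d - 2 < d := by omega
  have h2 : d - 1 < d := by omega
  have hne : (⟨d - 2, h1⟩ : Fin d) ≠ ⟨d - 1, h2⟩ := by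
    rw [ne_eq, Fin.mk.injEq]
    omega
  have hsum := Finset.sum_le_univ_sum_of_nonneg (f := fun i ↦ ‖x i‖ ^ 2) (fun _ ↦ by positivity)
    (s := {⟨d - 2, h1⟩, ⟨d - 1, h2⟩})
  rw [normA, EuclideanSpace.norm_eq]
  refine Real.sqrt_le_sqrt ?_
  simpa [azim1, azim2, h1, h2, Finset.sum_pair hne] using hsum

lemma abs_cosAng_le_one (η x : Ed d) : |cosAng η x| ≤ 1 := by
  have h0 : 0 ≤ normA x * normA η := mul_nonneg (normA_nonneg _) (normA_nonneg _)
  rw [cosAng, abs_div, abs_of_nonneg h0]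
  refine div_le_one_of_le₀ (abs_le_of_sq_le_sq ?_ h0) h0
  rw [mul_pow, normA_sq, normA_sq]
  nlinarith [sq_nonneg (azim1 x * azim2 η - azim2 x * azim1 η)]

lemma abs_sinAng_le_one (η x : Ed d) : |sinAng η x| ≤ 1 := by
  have h0 : 0 ≤ normA x * normA η := mul_nonneg (normA_nonneg _) (normA_nonneg _)
  rw [sinAng, abs_div, abs_of_nonneg h0]
  refine div_le_one_of_le₀ (abs_le_of_sq_le_sq ?_ h0) h0
  rw [mul_pow, normA_sq, normA_sq]
  nlinarith [sq_nonneg (azim1 x * azim1 η + azim2 x * azim2 η)]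

@[fun_prop]
lemma measurable_azim1 : Measurable (azim1 : Ed d → ℝ) := by
  unfold azim1
  split_ifs <;> fun_prop

@[fun_prop]
lemma measurable_azim2 : Measurable (azim2 : Ed d → ℝ) := by
  unfold azim2
  split_ifs <;> fun_prop

@[fun_prop]
lemma measurable_normA : Measurable (normA : Ed d → ℝ) := by
  unfold normA
  fun_prop

lemma measurable_aKernel (γ : ℝ) {ψ : Ed d → ℝ} (hψ : Measurable ψ) :
    Measurable fun p : (Ed d × ℝ) × Ed d ↦ aKernel d γ ψ p.1.1 p.1.2 p.2 := by
  unfold aKernel cosAng sinAng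
  fun_prop

lemma measurable_arenorm (γ β : ℝ) {ψ : Ed d → ℝ} (hψ : Measurable ψ) :
    Measurable (arenorm d γ β ψ) := by
  have hinner : StronglyMeasurable fun p : Ed d × ℝ ↦ ∫ x, aKernel d γ ψ p.1 p.2 x :=
    (measurable_aKernel γ hψ).stronglyMeasurable.integral_prod_right'
  have houter : Measurable fun η ↦ ∫ t in Ioc 1 β⁻¹, ∫ x, aKernel d γ ψ η t x :=
    hinner.integral_prod_right'.measurable
  unfold arenorm
  fun_prop

lemma abs_aKernel_le (γ : ℝ) (ψ : Ed d → ℝ) (η : Ed d) {t : ℝ} (ht : 0 ≤ t) (x : Ed d) :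
    |aKernel d γ ψ η t x| ≤
      t ^ (-(γ - d - 1)) * Real.exp (‖η‖ ^ γ * (1 - t ^ γ)) * (|ψ x| * |ψ (t • η - x)|) := by
  have hP : 0 ≤ t ^ (-(γ - d - 1)) * Real.exp (‖η‖ ^ γ * (1 - t ^ γ)) := by positivity
  rw [aKernel, abs_mul, abs_of_nonneg hP, abs_mul, abs_mul, abs_mul, mul_assoc (|ψ x| * _)]
  refine mul_le_mul_of_nonneg_left (mul_le_of_le_one_right (by positivity) ?_) hP
  exact mul_le_one₀ (abs_cosAng_le_one ..) (abs_nonneg _) (abs_sinAng_le_one ..)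

end Azimuthal

section Invariance

variable {d : ℕ} {γ σ k b β t : ℝ} {ψ : Ed d → ℝ} {η : Ed d}

lemma memM.ae_abs_le [Nontrivial (Ed d)] (hψ : memM k b σ ψ) :
    ∀ᵐ x, |ψ x| ≤ k * decayWeight σ b x := by
  filter_upwards [hψ.2, Measure.ae_ne volume 0] with x hx hx0
  rw [decayWeight, ← mul_assoc]
  exact (hx hx0).le

lemma memM.ae_norm_aKernel_le [Nontrivial (Ed d)] (hψ : memM k b σ ψ) (γ : ℝ) (η : Ed d)
    (ht : 0 ≤ t) :
    ∀ᵐ x, ‖aKernel d γ ψ η t x‖ ≤ k ^ 2 * (t ^ (-(γ - d - 1)) *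
      Real.exp (‖η‖ ^ γ * (1 - t ^ γ))) * (decayWeight σ b x * decayWeight σ b (t • η - x)) := by
  filter_upwards [hψ.ae_abs_le, (Measure.measurePreserving_sub_left volume
    (t • η)).quasiMeasurePreserving.ae hψ.ae_abs_le] with x hx hηx
  calc ‖aKernel d γ ψ η t x‖
      ≤ t ^ (-(γ - d - 1)) * Real.exp (‖η‖ ^ γ * (1 - t ^ γ)) * (|ψ x| * |ψ (t • η - x)|) :=
        abs_aKernel_le γ ψ η ht x
    _ ≤ t ^ (-(γ - d - 1)) * Real.exp (‖η‖ ^ γ * (1 - t ^ γ)) *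
          ((k * decayWeight σ b x) * (k * decayWeight σ b (t • η - x))) := by
        gcongr
        exact (abs_nonneg _).trans hx
    _ = _ := by ring

lemma memM.integrable_aKernel (hψ : memM k b σ ψ) (hσ : -(d : ℝ) < σ) (hσ0 : σ ≤ 0) (hb : 0 < b)
    (γ : ℝ) (hη : η ≠ 0) (ht : 0 < t) : Integrable (aKernel d γ ψ η t) := by
  have : Nontrivial (Ed d) := nontrivial_of_ne η 0 hη
  have hmeas : Measurable (aKernel d γ ψ η t) :=
    (measurable_aKernel γ hψ.1).comp (measurable_prodMk_left (x := (η, t)))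
  exact ((integrable_decayWeight_mul_sub volume (by simpa using hσ) hσ0 hb
    (smul_ne_zero ht.ne' hη)).const_mul _).mono' hmeas.aestronglyMeasurable
    (hψ.ae_norm_aKernel_le γ η ht.le)

lemma memM.integral_norm_aKernel_le (hψ : memM k b σ ψ) (hσ : -(d : ℝ) < σ) (hσ0 : σ ≤ 0)
    (hσγ : σ ≤ γ - d - 1) (hb : 0 < b) (hη : η ≠ 0) (ht : 1 ≤ t) :
    ∫ x, ‖aKernel d γ ψ η t x‖ ≤ k ^ 2 * decayConvConst (volume : Measure (Ed d)) σ b *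
      (1 + (t * ‖η‖) ^ (σ + d)) * (decayWeight σ b η * dilationDecay γ b ‖η‖ t) := by
  have : Nontrivial (Ed d) := nontrivial_of_ne η 0 hη
  have ht0 : 0 < t := one_pos.trans_le ht
  have htη : t • η ≠ 0 := smul_ne_zero ht0.ne' hη
  have hσ' : -(finrank ℝ (Ed d) : ℝ) < σ := by simpa using hσ
  have hconv := integral_decayWeight_mul_sub_le volume hσ' hσ0 hb htη
  rw [finrank_euclideanSpace_fin, norm_smul, Real.norm_of_nonneg ht0.le] at hconv
  have hA := decayConvConst_nonneg (volume : Measure (Ed d)) σ b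
  set A := decayConvConst (volume : Measure (Ed d)) σ b
  set P := t ^ (-(γ - d - 1)) * Real.exp (‖η‖ ^ γ * (1 - t ^ γ))
  calc ∫ x, ‖aKernel d γ ψ η t x‖
      ≤ ∫ x, k ^ 2 * P * (decayWeight σ b x * decayWeight σ b (t • η - x)) :=
        integral_mono_ae (hψ.integrable_aKernel hσ hσ0 hb γ hη ht0).norm
          ((integrable_decayWeight_mul_sub volume hσ' hσ0 hb htη).const_mul _)
          (hψ.ae_norm_aKernel_le γ η ht0.le)
    _ = k ^ 2 * P * ∫ x, decayWeight σ b x * decayWeight σ b (t • η - x) := integral_const_mul _ _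
    _ ≤ k ^ 2 * P * (A * (1 + (t * ‖η‖) ^ (σ + d)) * decayWeight σ b (t • η)) := by gcongr
    _ = k ^ 2 * A * (1 + (t * ‖η‖) ^ (σ + d)) * (P * decayWeight σ b (t • η)) := by ring
    _ ≤ _ := by
        exact mul_le_mul_of_nonneg_left
          (rpow_mul_exp_mul_decayWeight_smul_le hσγ ht γ b η) (by positivity)

/-- The constant `K` such that the nonlinear term of `R_β[ψ](η)` is at most
`γ k² K |η|^σ e^{−b|η|} (1 − e^{|η|^γ(1 − β^{−γ}) + b|η|(1 − β⁻¹)})` for `ψ ∈ M`. -/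
noncomputable def azimuthalConst (d : ℕ) (σ b : ℝ) : ℝ :=
  decayConvConst (volume : Measure (Ed d)) σ b * (2 / b + 1)

lemma azimuthalConst_nonneg (d : ℕ) (σ : ℝ) (hb : 0 ≤ b) : 0 ≤ azimuthalConst d σ b :=
  mul_nonneg (decayConvConst_nonneg volume σ b) (by positivity)

lemma memM.norm_mul_integral_norm_aKernel_le (hψ : memM k b σ ψ) (hσ : -(d : ℝ) < σ)
    (hσ0 : σ ≤ 0) (hσγ : σ ≤ γ - d - 1) (hb : 0 < b) (hη : η ≠ 0) (ht : 1 ≤ t) :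
    ‖η‖ * ∫ x, ‖aKernel d γ ψ η t x‖ ≤ k ^ 2 * azimuthalConst d σ b * decayWeight σ b η *
      (dilationRate γ b ‖η‖ t * dilationDecay γ b ‖η‖ t) := by
  have hslice := hψ.integral_norm_aKernel_le hσ hσ0 hσγ hb hη ht
  have hrate : ‖η‖ * (1 + (t * ‖η‖) ^ (σ + d)) ≤ (2 / b + 1) * dilationRate γ b ‖η‖ t :=
    mul_one_add_rpow_le_dilationRate hb (by linarith) (by linarith) (norm_pos_iff.mpr hη)
      (one_pos.trans_le ht)
  have hA := decayConvConst_nonneg (volume : Measure (Ed d)) σ b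
  have hw := decayWeight_nonneg σ b η
  have hE := (dilationDecay_pos γ b ‖η‖ t).le
  rw [azimuthalConst]
  set A := decayConvConst (volume : Measure (Ed d)) σ b
  calc ‖η‖ * ∫ x, ‖aKernel d γ ψ η t x‖
      ≤ ‖η‖ * (k ^ 2 * A * (1 + (t * ‖η‖) ^ (σ + d)) *
          (decayWeight σ b η * dilationDecay γ b ‖η‖ t)) := by gcongr
    _ = k ^ 2 * A * decayWeight σ b η *
          (‖η‖ * (1 + (t * ‖η‖) ^ (σ + d)) * dilationDecay γ b ‖η‖ t) := by ring
    _ ≤ k ^ 2 * A * decayWeight σ b η *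
          ((2 / b + 1) * dilationRate γ b ‖η‖ t * dilationDecay γ b ‖η‖ t) := by gcongr
    _ = _ := by ring

lemma memM.aRenormDefined (hψ : memM k b σ ψ) (hσ : -(d : ℝ) < σ) (hσ0 : σ ≤ 0)
    (hσγ : σ ≤ γ - d - 1) (hb : 0 < b) (β : ℝ) (hη : η ≠ 0) : ARenormDefined d γ β ψ η := by
  have hmeas : Measurable fun q : ℝ × Ed d ↦ aKernel d γ ψ η q.1 q.2 :=
    (measurable_aKernel γ hψ.1).comp (f := fun q : ℝ × Ed d ↦ ((η, q.1), q.2)) (by fun_prop)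
  rw [ARenormDefined, IntegrableOn, Measure.volume_eq_prod, ← Measure.prod_restrict,
    Measure.restrict_univ, integrable_prod_iff hmeas.aestronglyMeasurable]
  constructor
  · exact ae_restrict_of_forall_mem measurableSet_Ioc fun t ht ↦
      hψ.integrable_aKernel hσ hσ0 hb γ hη (one_pos.trans ht.1)
  · refine (((integrableOn_dilationRate_mul_dilationDecay γ b ‖η‖ β⁻¹).const_mul
      (k ^ 2 * azimuthalConst d σ b * decayWeight σ b η)).div_const ‖η‖).mono'
      hmeas.norm.stronglyMeasurable.integral_prod_right'.aestronglyMeasurable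
      (ae_restrict_of_forall_mem measurableSet_Ioc fun t ht ↦ ?_)
    rw [Real.norm_of_nonneg (integral_nonneg fun _ ↦ norm_nonneg _),
      le_div_iff₀' (norm_pos_iff.mpr hη)]
    exact hψ.norm_mul_integral_norm_aKernel_le hσ hσ0 hσγ hb hη ht.1.le

lemma memM.abs_nonlinear_term_le (hψ : memM k b σ ψ) (hd : 2 ≤ d) (hσ : -(d : ℝ) < σ)
    (hσ0 : σ ≤ 0) (hσγ : σ ≤ γ - d - 1) (hb : 0 < b) (hβ : 1 ≤ β⁻¹) (hη : η ≠ 0) :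
    |γ * normA η * ∫ t in Ioc 1 β⁻¹, ∫ x, aKernel d γ ψ η t x| ≤
      γ * azimuthalConst d σ b * k ^ 2 *
        (decayWeight σ b η * (1 - dilationDecay γ b ‖η‖ β⁻¹)) := by
  have hγ : 0 ≤ γ := by linarith
  have htime : ‖η‖ * |∫ t in Ioc 1 β⁻¹, ∫ x, aKernel d γ ψ η t x| ≤
      k ^ 2 * azimuthalConst d σ b * decayWeight σ b η * (1 - dilationDecay γ b ‖η‖ β⁻¹) := by
    rw [← integral_dilationRate_mul_dilationDecay γ b ‖η‖ hβ, ← integral_const_mul,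
      ← abs_norm η, ← abs_mul, ← integral_const_mul, ← Real.norm_eq_abs, abs_norm]
    refine norm_integral_le_of_norm_le
      ((integrableOn_dilationRate_mul_dilationDecay γ b ‖η‖ β⁻¹).const_mul _)
      (ae_restrict_of_forall_mem measurableSet_Ioc fun t ht ↦ ?_)
    rw [norm_mul, norm_norm]
    exact (mul_le_mul_of_nonneg_left (norm_integral_le_integral_norm _) (norm_nonneg η)).trans
      (hψ.norm_mul_integral_norm_aKernel_le hσ hσ0 hσγ hb hη ht.1.le)
  calc |γ * normA η * ∫ t in Ioc 1 β⁻¹, ∫ x, aKernel d γ ψ η t x|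
      = γ * (normA η * |∫ t in Ioc 1 β⁻¹, ∫ x, aKernel d γ ψ η t x|) := by
        rw [abs_mul, abs_of_nonneg (mul_nonneg hγ (normA_nonneg η)), mul_assoc]
    _ ≤ γ * (‖η‖ * |∫ t in Ioc 1 β⁻¹, ∫ x, aKernel d γ ψ η t x|) := by
        gcongr
        exact normA_le_norm hd η
    _ ≤ γ * (k ^ 2 * azimuthalConst d σ b * decayWeight σ b η *
          (1 - dilationDecay γ b ‖η‖ β⁻¹)) := by gcongr
    _ = _ := by ring

lemma abs_linear_term_lt (hk : 0 ≤ k) (hσγ : σ ≤ γ - d - 1) (hβ : β ∈ Ioc 0 1)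
    (hψη : |ψ (β⁻¹ • η)| < k * decayWeight σ b (β⁻¹ • η)) :
    |β ^ (γ - d - 1) * Real.exp (‖η‖ ^ γ * (1 - β ^ (-γ))) * ψ (β⁻¹ • η)| <
      k * (decayWeight σ b η * dilationDecay γ b ‖η‖ β⁻¹) := by
  have hβ0 := hβ.1
  have hinv (q : ℝ) : β⁻¹ ^ q = β ^ (-q) := by rw [Real.inv_rpow hβ0.le, Real.rpow_neg hβ0.le]
  have hdil := rpow_mul_exp_mul_decayWeight_smul_le hσγ ((one_le_inv₀ hβ0).mpr hβ.2) γ b η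
  rw [hinv, hinv, neg_neg] at hdil
  set P := β ^ (γ - d - 1) * Real.exp (‖η‖ ^ γ * (1 - β ^ (-γ)))
  have hP0 : 0 < P := by positivity
  calc |P * ψ (β⁻¹ • η)| = P * |ψ (β⁻¹ • η)| := by rw [abs_mul, abs_of_pos hP0]
    _ < P * (k * decayWeight σ b (β⁻¹ • η)) := by gcongr
    _ = k * (P * decayWeight σ b (β⁻¹ • η)) := by ring
    _ ≤ k * (decayWeight σ b η * dilationDecay γ b ‖η‖ β⁻¹) := by gcongr

lemma memM.arenorm_mem (hψ : memM k b σ ψ) (hd : 2 ≤ d) (hσ : -(d : ℝ) < σ) (hσ0 : σ ≤ 0)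
    (hσγ : σ ≤ γ - d - 1) (hb : 0 < b) (hk : 0 ≤ k) (hkγ : γ * azimuthalConst d σ b * k ≤ 1)
    (hβ : β ∈ Ioc 0 1) : memM k b σ (arenorm d γ β ψ) := by
  have hβinv : 1 ≤ β⁻¹ := (one_le_inv₀ hβ.1).mpr hβ.2
  refine ⟨measurable_arenorm γ β hψ.1, ?_⟩
  filter_upwards [(Measure.quasiMeasurePreserving_smul volume (inv_ne_zero hβ.1.ne')).ae hψ.2]
    with η hψη hη
  replace hψη : |ψ (β⁻¹ • η)| < k * decayWeight σ b (β⁻¹ • η) := by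
    simpa only [decayWeight, mul_assoc] using hψη (smul_ne_zero (inv_ne_zero hβ.1.ne') hη)
  have hlin := abs_linear_term_lt (γ := γ) hk hσγ hβ hψη
  have hnonlin := hψ.abs_nonlinear_term_le hd hσ hσ0 hσγ hb hβinv hη
  have hdecay : 0 ≤ 1 - dilationDecay γ b ‖η‖ β⁻¹ :=
    sub_nonneg.mpr (dilationDecay_le_one (by linarith) hb.le (norm_nonneg η) hβinv)
  have hw := decayWeight_nonneg σ b η
  rw [mul_assoc k, ← decayWeight, arenorm]
  set E := dilationDecay γ b ‖η‖ β⁻¹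
  calc _ ≤ _ := abs_add_le _ _
    _ < k * (decayWeight σ b η * E) +
          γ * azimuthalConst d σ b * k ^ 2 * (decayWeight σ b η * (1 - E)) :=
        add_lt_add_of_lt_of_le hlin hnonlin
    _ = k * (decayWeight σ b η * E) +
          (γ * azimuthalConst d σ b * k) * (k * (decayWeight σ b η * (1 - E))) := by ring
    _ ≤ k * (decayWeight σ b η * E) + 1 * (k * (decayWeight σ b η * (1 - E))) := by gcongr
    _ = k * decayWeight σ b η := by ring

end Invariance

theorem azimuthal_M_invariant_general (d : ℕ) (hd : 2 ≤ d) (γ σ b : ℝ) (hσ : -(d : ℝ) < σ)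
    (hσ0 : σ ≤ 0) (hσγ : σ ≤ γ - d - 1) (hb : 0 < b) :
    ∃ k₀ : ℝ, 0 < k₀ ∧ ∀ k ∈ Ioc 0 k₀, ∀ β ∈ Ioo (0 : ℝ) 1, ∀ ψ : Ed d → ℝ, memM k b σ ψ →
      (∀ᵐ η : Ed d, ARenormDefined d γ β ψ η) ∧ memM k b σ (arenorm d γ β ψ) := by
  obtain ⟨k₀, hk₀, hsmall⟩ := exists_pos_mul_lt one_pos (γ * azimuthalConst d σ b)
  refine ⟨k₀, hk₀, fun k hk β hβ ψ hψ ↦ ⟨?_, ?_⟩⟩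
  · have : Nonempty (Fin d) := ⟨⟨0, by omega⟩⟩
    filter_upwards [Measure.ae_ne volume 0] with η hη
    exact hψ.aRenormDefined hσ hσ0 hσγ hb β hη
  · have hconst : 0 ≤ γ * azimuthalConst d σ b :=
      mul_nonneg (by linarith) (azimuthalConst_nonneg d σ hb.le)
    exact hψ.arenorm_mem hd hσ hσ0 hσγ hb hk.1.le
      ((mul_le_mul_of_nonneg_left hk.2 hconst).trans hsmall.le) ⟨hβ.1, hβ.2.le⟩

/-- invariance of the set `M` of azimuthal components bounded by
`k |η|^σ e^{−b|η|}` under the azimuthal renormalization operator. -/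
theorem azimuthal_M_invariant
    (d : ℕ) (hd : 2 ≤ d) (γ σ : ℝ) (hγ : 1 < γ)
    (hσ1 : max (-(d : ℝ)) (-3) < σ) (hσ2 : σ < 0)
    (hσ3 : σ ≠ -2) (hσ4 : σ ≠ -(d : ℝ) / 2)
    (hσ5 : σ ≤ γ - d - 1) :
    ∃ k : ℝ, 0 < k ∧ ∃ b : ℝ, 0 < b ∧
      ∀ β ∈ Set.Ioo (0 : ℝ) 1, ∀ ψ : Ed d → ℝ, memM k b σ ψ →
        (∀ᵐ η : Ed d, ARenormDefined d γ β ψ η) ∧ memM k b σ (arenorm d γ β ψ) := by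
  obtain ⟨k, hk, h⟩ :=
    azimuthal_M_invariant_general d hd γ σ 1 ((le_max_left ..).trans_lt hσ1) hσ2.le hσ5 one_pos
  exact ⟨k, hk, 1, one_pos, h k ⟨hk, le_rfl⟩⟩
end
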